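/- arXiv:1011.4762 — 2 statements merged into one kernel-verified Lean document; each statement's English description precedes it below -/
import Mathlib

section
/- Let C ⊆ ℝ² be a convex body, let μ be a probability measure on C absolutely continuous with respect to Lebesgue measure, and let σ be a probability measure on ∂C absolutely continuous with respect to the one-dimensional Hausdorff (arc-length) measure on ∂C. Then for every integer q ≥ 1 the body C can be partitioned into q closed convex parts V₁, …, V_q (their union is C and their pairwise intersections have Lebesgue measure zero) such that μ(V₁) = ⋯ = μ(V_q) = 1/q and σ(V₁ ∩ ∂C) = ⋯ = σ(V_q ∩ ∂C) = 1/q. -/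
/-!
The proof is by induction on `q`, for compact convex `C` with `μ`-mass `q * a` and `σ`-mass `q * b`
where `σ` does not charge the interior (`Good`).

Parametrize the boundary counterclockwise by `γ` (`exists_param`). For `1 ≤ k < q` consider the
chords that cut off an arc of `σ`-mass `k * b`. The `μ`-mass of the cap cut off by such a chord
depends continuously on the chord, and the space of these chords is connected. If some chord
cuts off `μ`-mass exactly `k * a`, cut along it (`cut`) and use the induction hypothesis for both
pieces. Otherwise the excess of the cap mass over `k * a` has a constant sign for each `k`
(`chords_sign`), and complementary caps show that the signs for `k` and `q - k` are opposite. A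
combinatorial argument (`exists_triple`) then finds a `k` such that the signs at `1`, `k` and
`q - 1 - k` agree. Inscribe a triangle whose vertices cut the boundary into arcs with these masses.

* If all three signs are positive, the three caps beyond the sides of the triangle weigh more than
  `C` together; but they are disjoint (`triangle_caps`), which is impossible.
* If all three are negative, let `d₁, d₂, d₃` be affine functions vanishing on the sides and positive
  inside the triangle. For positive weights `α, β`, divide `C` into three convex cells according to
  which of `α * d₁, β * d₂, d₃` is smallest. On each of the three arcs only the functional of its own
  side is nonpositive (up to the vertices), so each cell contains its own arc whatever the weights,
  and the `σ`-masses are right. The weights can be chosen so that the `μ`-masses are right, too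
  (`exists_weights`, by minimizing `α + β` subject to two inequalities), and the induction
  hypothesis applies to all three cells (`triangle_cells`).
-/

open MeasureTheory

namespace PerfectPartition

open Set Filter Topology

local notation "E2" => EuclideanSpace ℝ (Fin 2)

/-! ### Signed areas, supporting lines and caps -/

/-- Twice the signed area of the triangle `p z q`. -/
noncomputable def area (p z q : EuclideanSpace ℝ (Fin 2)) : ℝ :=
  (z 0 - p 0) * (q 1 - p 1) - (z 1 - p 1) * (q 0 - p 0)

lemma ext2 {p q : E2} (h0 : p 0 = q 0) (h1 : p 1 = q 1) : p = q := by
  ext i; fin_cases i <;> assumption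

lemma line_null (A B K : ℝ) (h : A ≠ 0 ∨ B ≠ 0) :
    (volume : Measure E2) {w | A * w 0 + B * w 1 + K = 0} = 0 := by
  let f : E2 →ᵃ[ℝ] ℝ :=
    (A • (EuclideanSpace.proj 0 : E2 →L[ℝ] ℝ).toLinearMap +
      B • (EuclideanSpace.proj 1 : E2 →L[ℝ] ℝ).toLinearMap).toAffineMap + AffineMap.const ℝ E2 K
  have hf : ∀ w, f w = A * w 0 + B * w 1 + K := by
    intro w; simp [f]
  let s : AffineSubspace ℝ E2 := (AffineSubspace.mk' (0 : ℝ) ⊥).comap f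
  have hs : (s : Set E2) = {w | A * w 0 + B * w 1 + K = 0} := by
    ext w
    simp [s, AffineSubspace.mem_mk', hf]
  rw [← hs]
  apply Measure.addHaar_affineSubspace
  intro htop
  have hall : ∀ w : E2, A * w 0 + B * w 1 + K = 0 := by
    intro w
    have : w ∈ (s : Set E2) := by rw [htop]; trivial
    rw [hs] at this; exact this
  have h0 := hall 0
  have h1 := hall !₂[1, 0]
  have h2 := hall !₂[0, 1]
  simp at h0 h1 h2
  rcases h with h | h
  · exact h (by linarith)
  · exact h (by linarith)

lemma affine_null {μ : Measure E2} (hμ : μ ≪ volume) {g : E2 → ℝ} (A B K : ℝ)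
    (hg : ∀ w, g w = A * w 0 + B * w 1 + K) (h : A ≠ 0 ∨ B ≠ 0) : μ {w | g w = 0} = 0 := by
  simp_rw [hg]
  exact hμ (line_null A B K h)

lemma area_null {μ : Measure E2} (hμ : μ ≪ volume) {p q : E2} (hpq : p ≠ q) :
    μ {w | area p w q = 0} = 0 := by
  refine affine_null hμ (q 1 - p 1) (-(q 0 - p 0)) (p 1 * (q 0 - p 0) - p 0 * (q 1 - p 1))
    (fun w => by unfold area; ring) ?_
  by_contra! h
  exact hpq (ext2 (by linarith [h.2]) (by linarith [h.1]))

lemma area_continuous : Continuous fun x : E2 × E2 × E2 => area x.1 x.2.1 x.2.2 := by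
  unfold area; fun_prop

lemma area_continuous_mid (p q : E2) : Continuous fun w => area p w q := by
  unfold area; fun_prop

lemma area_antisymm (p z q : E2) : area q z p = -area p z q := by unfold area; ring

lemma area_cycle (p z q : E2) : area z q p = area p z q := by unfold area; ring

/-- The three edge functionals of a triangle sum to minus twice its signed area. -/
lemma area_sum (p r s w : E2) : area p w r + area r w s + area s w p = - area p r s := by
  unfold area; ring

/-- Supporting line at a boundary point, in coordinates: `(A, B)` is an outer normal. -/
lemma exists_support {C : Set E2} (hconv : Convex ℝ C)
    (hInt : (interior C).Nonempty) {r : E2} (hr : r ∈ frontier C) :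
    ∃ A B : ℝ, (∀ w ∈ C, 0 ≤ A * (r 0 - w 0) + B * (r 1 - w 1)) ∧
      ∀ w ∈ interior C, 0 < A * (r 0 - w 0) + B * (r 1 - w 1) := by
  obtain ⟨f, hf⟩ := geometric_hahn_banach_open_point hconv.interior isOpen_interior hr.2
  have hfc : ∀ w : E2, f w = f (EuclideanSpace.single 0 1) * w 0
      + f (EuclideanSpace.single 1 1) * w 1 := by
    intro w
    have : w = w 0 • EuclideanSpace.single (0 : Fin 2) (1 : ℝ)
        + w 1 • EuclideanSpace.single (1 : Fin 2) (1 : ℝ) := by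
      apply ext2 <;> simp
    conv_lhs => rw [this]
    simp [mul_comm]
  refine ⟨f (EuclideanSpace.single 0 1), f (EuclideanSpace.single 1 1), ?_, ?_⟩
  · intro w hw
    have hw' : w ∈ closure (interior C) := by
      rw [hconv.closure_interior_eq_closure_of_nonempty_interior hInt]; exact subset_closure hw
    have : closure (interior C) ⊆ {w | f w ≤ f r} :=
      closure_minimal (fun a ha => (hf a ha).le) (isClosed_le f.continuous continuous_const)
    have h := this hw'
    rw [mem_ofPred_eq, hfc w, hfc r] at h
    linarith
  · intro w hw
    have h := hf w hw
    rw [hfc w, hfc r] at h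
    linarith

/-- Two open caps cut off by consecutive chords `p r` and `r s` of `C` are disjoint: a common
point would force the supporting line at `r` to contain `p` and `s`, so that the interior
point `c` would lie in both caps, too. -/
lemma caps_disjoint {C : Set E2} (hconv : Convex ℝ C)
    {p r s c : E2} (hp : p ∈ C) (hr : r ∈ frontier C) (hs : s ∈ C) (hc : c ∈ interior C)
    (hor : 0 ≤ area p r s) (hpc : ¬(0 < area p c r ∧ 0 < area r c s))
    {w : E2} (hw : w ∈ C) : ¬(0 < area p w r ∧ 0 < area r w s) := by
  rintro ⟨h1, h2⟩
  obtain ⟨A, B, hAB, hAB'⟩ := exists_support hconv ⟨c, hc⟩ hr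
  have ep := hAB p hp
  have es := hAB s hs
  have ew := hAB w hw
  have ec := hAB' c hc
  have key : area p r s * (A * (r 0 - w 0) + B * (r 1 - w 1)) =
      -(area r w s * (A * (r 0 - p 0) + B * (r 1 - p 1)))
      - area p w r * (A * (r 0 - s 0) + B * (r 1 - s 1)) := by
    unfold area; ring
  have k0 := mul_nonneg hor ew
  have k1 := mul_nonneg h2.le ep
  have k2 := mul_nonneg h1.le es
  have ep0 : A * (r 0 - p 0) + B * (r 1 - p 1) = 0 := by
    have : area r w s * (A * (r 0 - p 0) + B * (r 1 - p 1)) = 0 := by linarith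
    exact (mul_eq_zero.1 this).resolve_left h2.ne'
  have es0 : A * (r 0 - s 0) + B * (r 1 - s 1) = 0 := by
    have : area p w r * (A * (r 0 - s 0) + B * (r 1 - s 1)) = 0 := by linarith
    exact (mul_eq_zero.1 this).resolve_left h1.ne'
  have i1 : area p c r * (A * (r 0 - w 0) + B * (r 1 - w 1))
      = area p w r * (A * (r 0 - c 0) + B * (r 1 - c 1)) := by
    unfold area
    linear_combination ((c 0 - w 0) * (r 1 - p 1) - (c 1 - w 1) * (r 0 - p 0) +
      (c 1 - p 1) * (w 0 - p 0) - (c 0 - p 0) * (w 1 - p 1)) * ep0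
  have i2 : area r c s * (A * (r 0 - w 0) + B * (r 1 - w 1))
      = area r w s * (A * (r 0 - c 0) + B * (r 1 - c 1)) := by
    unfold area
    linear_combination ((c 0 - r 0) * (w 1 - r 1) - (c 1 - r 1) * (w 0 - r 0)) * es0
  have p1 := mul_pos h1 ec
  have p2 := mul_pos h2 ec
  refine hpc ⟨?_, ?_⟩
  · exact pos_of_mul_pos_left (i1 ▸ p1) ew
  · exact pos_of_mul_pos_left (i2 ▸ p2) ew

/-- If a boundary point lies strictly between two points of `C`, their line supports `C`, so
that `C` cannot have points strictly on both of its sides. -/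
lemma not_both_sides_of_between {C : Set E2} (hconv : Convex ℝ C)
    {u v m c : E2} (hu : u ∈ C) (hv : v ∈ C) (hm : m ∈ frontier C) (hc : c ∈ interior C)
    {t : ℝ} (ht : 0 < t) (ht1 : t < 1) (hm0 : m 0 = (1 - t) * u 0 + t * v 0)
    (hm1 : m 1 = (1 - t) * u 1 + t * v 1)
    {w w' : E2} (hw : w ∈ C) (hw' : w' ∈ C) (h1 : 0 < area u w v) (h2 : area u w' v < 0) :
    False := by
  obtain ⟨A, B, hAB, hAB'⟩ := exists_support hconv ⟨c, hc⟩ hm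
  have eu := hAB u hu
  have ev := hAB v hv
  have ew := hAB w hw
  have ew' := hAB w' hw'
  have ec := hAB' c hc
  rw [hm0, hm1] at eu ev ew ew' ec
  have e0 : A * (v 0 - u 0) + B * (v 1 - u 1) = 0 := by nlinarith
  have i1 : area u w v * (A * ((1 - t) * u 0 + t * v 0 - w' 0)
        + B * ((1 - t) * u 1 + t * v 1 - w' 1))
      = area u w' v * (A * ((1 - t) * u 0 + t * v 0 - w 0)
        + B * ((1 - t) * u 1 + t * v 1 - w 1)) := by
    unfold area
    linear_combination (t * ((w 0 - w' 0) * (v 1 - u 1) - (w 1 - w' 1) * (v 0 - u 0))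
      + (w 1 - u 1) * (w' 0 - u 0) - (w 0 - u 0) * (w' 1 - u 1)) * e0
  have i2 : area u w v * (A * ((1 - t) * u 0 + t * v 0 - c 0)
        + B * ((1 - t) * u 1 + t * v 1 - c 1))
      = area u c v * (A * ((1 - t) * u 0 + t * v 0 - w 0)
        + B * ((1 - t) * u 1 + t * v 1 - w 1)) := by
    unfold area
    linear_combination (t * ((w 0 - c 0) * (v 1 - u 1) - (w 1 - c 1) * (v 0 - u 0))
      + (w 1 - u 1) * (c 0 - u 0) - (w 0 - u 0) * (c 1 - u 1)) * e0
  have k1 := mul_nonneg h1.le ew'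
  have k2 := mul_nonneg (neg_nonneg.2 h2.le) ew
  have z : area u w' v * (A * ((1 - t) * u 0 + t * v 0 - w 0)
        + B * ((1 - t) * u 1 + t * v 1 - w 1)) = 0 := by nlinarith
  have z' := (mul_eq_zero.1 z).resolve_left h2.ne
  rw [z', mul_zero] at i2
  exact (mul_pos h1 ec).ne' i2

/-- A chord with points of `C` strictly on both sides meets `frontier C` only at its ends. -/
lemma chord_frontier {C : Set E2} (hconv : Convex ℝ C) (hcl : IsClosed C)
    {p q z c w w' : E2} (hp : p ∈ frontier C) (hq : q ∈ frontier C) (hz : z ∈ frontier C)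
    (hc : c ∈ interior C) (hw : w ∈ C) (hw' : w' ∈ C)
    (h1 : 0 < area p w q) (h2 : area p w' q < 0) (h0 : area p z q = 0) :
    z = p ∨ z = q := by
  have hpC : p ∈ C := hcl.frontier_subset hp
  have hqC : q ∈ C := hcl.frontier_subset hq
  have hzC : z ∈ C := hcl.frontier_subset hz
  have hpq : q 0 - p 0 ≠ 0 ∨ q 1 - p 1 ≠ 0 := by
    by_contra! h
    unfold area at h1
    rw [h.1, h.2] at h1
    simp at h1
  obtain ⟨t, ht0, ht1⟩ : ∃ t : ℝ, z 0 = (1 - t) * p 0 + t * q 0 ∧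
      z 1 = (1 - t) * p 1 + t * q 1 := by
    unfold area at h0
    rcases hpq with h | h
    · refine ⟨(z 0 - p 0) / (q 0 - p 0), ?_, ?_⟩ <;> field_simp <;> linarith
    · refine ⟨(z 1 - p 1) / (q 1 - p 1), ?_, ?_⟩ <;> field_simp <;> linarith
  rcases lt_trichotomy t 0 with h | h | h
  · exfalso
    have hz' : ∀ v, area z v q = (1 - t) * area p v q := by
      intro v; unfold area; rw [ht0, ht1]; ring
    refine not_both_sides_of_between hconv hzC hqC hp hc (t := -t / (1 - t))
      (div_pos (by linarith) (by linarith)) ((div_lt_one (by linarith)).2 (by linarith))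
      ?_ ?_ hw hw' (hz' w ▸ mul_pos (by linarith) h1)
      (hz' w' ▸ mul_neg_of_pos_of_neg (by linarith) h2)
    · rw [ht0]; have : 1 - t ≠ 0 := by linarith
      field_simp; ring
    · rw [ht1]; have : 1 - t ≠ 0 := by linarith
      field_simp; ring
  · left; apply ext2 <;> simp [ht0, ht1, h]
  rcases lt_trichotomy t 1 with h' | h' | h'
  · exact (not_both_sides_of_between hconv hpC hqC hz hc h h' ht0 ht1 hw hw' h1 h2).elim
  · right; apply ext2 <;> simp [ht0, ht1, h']
  · exfalso
    have hz' : ∀ v, area p v z = t * area p v q := by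
      intro v; unfold area; rw [ht0, ht1]; ring
    refine not_both_sides_of_between hconv hpC hzC hq hc (t := 1 / t)
      (by positivity) ((div_lt_one (by linarith)).2 (by linarith))
      ?_ ?_ hw hw' (hz' w ▸ mul_pos h h1) (hz' w' ▸ mul_neg_of_pos_of_neg h h2)
    · rw [ht0]; field_simp; ring
    · rw [ht1]; field_simp; ring

/-! ### Polar parametrization of the boundary -/

/-- If `z` is a boundary point in the cone spanned by `p` and `q` with apex an interior point `c`,
then `z` lies beyond the chord `p q`. The brackets are determinants relative to `c`. -/
lemma ccw_of_cone {C : Set E2} (hconv : Convex ℝ C) {p z q c : E2} (hp : p ∈ C)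
    (hz : z ∈ frontier C) (hq : q ∈ C) (hc : c ∈ interior C)
    (h1 : 0 ≤ (p 0 - c 0) * (z 1 - c 1) - (p 1 - c 1) * (z 0 - c 0))
    (h2 : 0 ≤ (z 0 - c 0) * (q 1 - c 1) - (z 1 - c 1) * (q 0 - c 0)) :
    (p 0 - c 0) * (q 1 - c 1) - (p 1 - c 1) * (q 0 - c 0) ≤
      ((p 0 - c 0) * (z 1 - c 1) - (p 1 - c 1) * (z 0 - c 0)) +
      ((z 0 - c 0) * (q 1 - c 1) - (z 1 - c 1) * (q 0 - c 0)) := by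
  obtain ⟨A, B, hAB, hAB'⟩ := exists_support hconv ⟨c, hc⟩ hz
  have ep := hAB p hp
  have eq := hAB q hq
  have ec := hAB' c hc
  have k1 := mul_nonneg h2 ep
  have k2 := mul_nonneg h1 eq
  have key : (((p 0 - c 0) * (z 1 - c 1) - (p 1 - c 1) * (z 0 - c 0)) +
      ((z 0 - c 0) * (q 1 - c 1) - (z 1 - c 1) * (q 0 - c 0)) -
      ((p 0 - c 0) * (q 1 - c 1) - (p 1 - c 1) * (q 0 - c 0))) *
      (A * (z 0 - c 0) + B * (z 1 - c 1)) =
      ((z 0 - c 0) * (q 1 - c 1) - (z 1 - c 1) * (q 0 - c 0)) *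
        (A * (z 0 - p 0) + B * (z 1 - p 1)) +
      ((p 0 - c 0) * (z 1 - c 1) - (p 1 - c 1) * (z 0 - c 0)) *
        (A * (z 0 - q 0) + B * (z 1 - q 1)) := by ring
  have := nonneg_of_mul_nonneg_left (key ▸ add_nonneg k1 k2) ec
  linarith

lemma sin_nonneg_turn {a : ℝ} (h0 : 0 ≤ a) (h1 : a ≤ 1 / 2) : 0 ≤ Real.sin (2 * Real.pi * a) := by
  apply Real.sin_nonneg_of_nonneg_of_le_pi
  · positivity
  · nlinarith [Real.pi_pos]

lemma sin_nonpos_turn {a : ℝ} (h0 : 1 / 2 ≤ a) (h1 : a ≤ 1) : Real.sin (2 * Real.pi * a) ≤ 0 := by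
  have := sin_nonneg_turn (a := 1 - a) (by linarith) (by linarith)
  rw [show 2 * Real.pi * (1 - a) = 2 * Real.pi - 2 * Real.pi * a by ring,
    Real.sin_two_pi_sub] at this
  linarith

lemma sin_neg_turn {a : ℝ} (h0 : 0 ≤ a) (h : Real.sin (2 * Real.pi * a) < 0) : 1 / 2 < a := by
  by_contra! h1
  exact absurd (sin_nonneg_turn h0 h1) (not_le.2 h)

/-- Counterclockwise parametrization, by the polar angle around an interior point `c`, of the
boundary of a planar convex body. -/
lemma exists_param {C : Set E2} (hcomp : IsCompact C) (hconv : Convex ℝ C) {c : E2}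
    (hc : c ∈ interior C) :
    ∃ γ : ℝ → E2, Continuous γ ∧ γ 0 = γ 1 ∧ γ '' Icc 0 1 = frontier C ∧ InjOn γ (Ico 0 1) ∧
      (∀ x t y, 0 ≤ x → x ≤ t → t ≤ y → y ≤ 1 → 0 ≤ area (γ x) (γ t) (γ y)) ∧
      (∀ x t y, 0 ≤ x → x < t → t < y → y < 1 →
        ¬(0 < area (γ x) c (γ t) ∧ 0 < area (γ t) c (γ y)) ∧
        ¬(0 < area (γ t) c (γ y) ∧ 0 < area (γ y) c (γ x)) ∧
        ¬(0 < area (γ y) c (γ x) ∧ 0 < area (γ x) c (γ t))) := by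
  have hcl := hcomp.isClosed
  -- translate `c` to the origin: the boundary has polar radius `1 / gauge`
  set K : Set E2 := (Homeomorph.addLeft c) ⁻¹' C with hK
  have hKconv : Convex ℝ K := by
    have := hconv.affine_preimage (AffineEquiv.constVAdd ℝ E2 c).toAffineMap
    exact this
  have hK0 : K ∈ 𝓝 (0 : E2) := by
    apply (Homeomorph.addLeft c).continuous.continuousAt.preimage_mem_nhds
    simpa [mem_interior_iff_mem_nhds] using hc
  have hKb : Bornology.IsVonNBounded ℝ K := by
    rw [NormedSpace.isVonNBounded_iff]
    have : IsCompact K := (Homeomorph.addLeft c).isCompact_preimage.2 hcomp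
    exact this.isBounded
  have hfr : ∀ w, w ∈ frontier K ↔ c + w ∈ frontier C := by
    intro w
    rw [hK, ← Homeomorph.preimage_frontier]; rfl
  have hgpos : ∀ w : E2, w ≠ 0 → 0 < gauge K w := fun w hw =>
    (gauge_pos (absorbent_nhds_zero hK0) hKb).2 hw
  let u : ℝ → E2 := fun t => !₂[Real.cos (2 * Real.pi * t), Real.sin (2 * Real.pi * t)]
  have hu0 : ∀ t, u t 0 = Real.cos (2 * Real.pi * t) := fun t => by simp [u]
  have hu1 : ∀ t, u t 1 = Real.sin (2 * Real.pi * t) := fun t => by simp [u]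
  have hucont : Continuous u := by
    apply (PiLp.continuous_toLp 2 _).comp
    refine continuous_pi fun i => ?_
    fin_cases i <;> simp <;> fun_prop
  have hune : ∀ t, u t ≠ 0 := by
    intro t h
    have h0 := hu0 t
    have h1 := hu1 t
    rw [h] at h0 h1
    have := Real.sin_sq_add_cos_sq (2 * Real.pi * t)
    rw [← h0, ← h1] at this
    simp at this
  let ρ : ℝ → ℝ := fun t => (gauge K (u t))⁻¹
  have hρ : ∀ t, 0 < ρ t := fun t => inv_pos.2 (hgpos _ (hune t))
  have hρc : Continuous ρ :=
    ((continuous_gauge hKconv hK0).comp hucont).inv₀ fun t => (hgpos _ (hune t)).ne'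
  let γ : ℝ → E2 := fun t => c + ρ t • u t
  have hγ0 : ∀ t, γ t 0 - c 0 = ρ t * Real.cos (2 * Real.pi * t) := fun t => by simp [γ, hu0]
  have hγ1 : ∀ t, γ t 1 - c 1 = ρ t * Real.sin (2 * Real.pi * t) := fun t => by simp [γ, hu1]
  have hγc : Continuous γ := continuous_const.add (hρc.smul hucont)
  have hγf : ∀ t, γ t ∈ frontier C := by
    intro t
    rw [← hfr, ← gauge_eq_one_iff_mem_frontier hKconv hK0, gauge_smul_of_nonneg (hρ t).le]
    exact inv_mul_cancel₀ (hgpos _ (hune t)).ne'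
  have hγC : ∀ t, γ t ∈ C := fun t => hcl.frontier_subset (hγf t)
  have hdet : ∀ x y, (γ x 0 - c 0) * (γ y 1 - c 1) - (γ x 1 - c 1) * (γ y 0 - c 0)
      = ρ x * ρ y * Real.sin (2 * Real.pi * (y - x)) := by
    intro x y
    rw [hγ0, hγ1, hγ0, hγ1, mul_sub, Real.sin_sub]; ring
  -- the same determinant in terms of the angle from `x` forward to `y` past a full turn
  have hdet' : ∀ x y, (γ x 0 - c 0) * (γ y 1 - c 1) - (γ x 1 - c 1) * (γ y 0 - c 0)
      = ρ x * ρ y * Real.sin (2 * Real.pi * (1 - (x - y))) := by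
    intro x y
    rw [hdet, show 2 * Real.pi * (1 - (x - y)) = 2 * Real.pi * (y - x) + 2 * Real.pi by ring,
      Real.sin_add_two_pi]
  have harea : ∀ x y, area (γ x) c (γ y) =
      -((γ x 0 - c 0) * (γ y 1 - c 1) - (γ x 1 - c 1) * (γ y 0 - c 0)) := by
    intro x y; unfold area; ring
  refine ⟨γ, hγc, ?_, ?_, ?_, ?_, ?_⟩
  · have : u 0 = u 1 := by apply ext2 <;> simp [hu0, hu1]
    simp only [γ, ρ, this]
  · apply Subset.antisymm
    · rintro _ ⟨t, -, rfl⟩; exact hγf t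
    · intro z hz
      have hz1 : gauge K (z - c) = 1 := by
        rw [gauge_eq_one_iff_mem_frontier hKconv hK0, hfr]; simpa using hz
      have hzc : z - c ≠ 0 := by
        intro h; rw [h, gauge_zero] at hz1; exact zero_ne_one hz1
      obtain ⟨t, ht, s, hs, hzs⟩ : ∃ t ∈ Icc (0 : ℝ) 1, ∃ s : ℝ, 0 < s ∧ z - c = s • u t := by
        let ζ : ℂ := ⟨(z - c) 0, (z - c) 1⟩
        have hζ : ζ ≠ 0 := by
          intro h
          apply hzc
          apply ext2
          · exact congrArg Complex.re h
          · exact congrArg Complex.im h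
        have hre : (z - c) 0 = ‖ζ‖ * Real.cos ζ.arg := by
          rw [Complex.norm_mul_cos_arg]
        have him : (z - c) 1 = ‖ζ‖ * Real.sin ζ.arg := by
          rw [Complex.norm_mul_sin_arg]
        have hpi := Real.pi_pos
        have a1 := Complex.neg_pi_lt_arg ζ
        have a2 := Complex.arg_le_pi ζ
        rcases le_total 0 ζ.arg with h | h
        · refine ⟨ζ.arg / (2 * Real.pi), ⟨by positivity, ?_⟩, ‖ζ‖, norm_pos_iff.2 hζ, ?_⟩
          · rw [div_le_one (by positivity)]; linarith
          · have e : 2 * Real.pi * (ζ.arg / (2 * Real.pi)) = ζ.arg := by field_simp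
            apply ext2
            · rw [hre, PiLp.smul_apply, hu0, e]; rfl
            · rw [him, PiLp.smul_apply, hu1, e]; rfl
        · refine ⟨ζ.arg / (2 * Real.pi) + 1, ⟨?_, ?_⟩, ‖ζ‖, norm_pos_iff.2 hζ, ?_⟩
          · rw [← neg_le_iff_add_nonneg, neg_le, ← neg_div, div_le_one (by positivity)]; linarith
          · have : ζ.arg / (2 * Real.pi) ≤ 0 := div_nonpos_of_nonpos_of_nonneg h (by positivity)
            linarith
          · have e : 2 * Real.pi * (ζ.arg / (2 * Real.pi) + 1) = ζ.arg + 2 * Real.pi := by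
              field_simp
            apply ext2
            · rw [hre, PiLp.smul_apply, hu0, e, Real.cos_add_two_pi]; rfl
            · rw [him, PiLp.smul_apply, hu1, e, Real.sin_add_two_pi]; rfl
      refine ⟨t, ht, ?_⟩
      have : s = ρ t := by
        rw [hzs, gauge_smul_of_nonneg hs.le, smul_eq_mul] at hz1
        exact eq_inv_of_mul_eq_one_left hz1
      simp only [γ]
      rw [← this, ← hzs]; abel
  · intro x hx y hy hxy
    have e0 := hγ0 x
    have e1 := hγ1 x
    rw [hxy, hγ0] at e0
    rw [hxy, hγ1] at e1
    have sx := Real.sin_sq_add_cos_sq (2 * Real.pi * x)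
    have sy := Real.sin_sq_add_cos_sq (2 * Real.pi * y)
    have hρe : ρ x = ρ y := by
      have : ρ x ^ 2 = ρ y ^ 2 := by
        calc ρ x ^ 2 = (ρ x * Real.cos (2 * Real.pi * x)) ^ 2
              + (ρ x * Real.sin (2 * Real.pi * x)) ^ 2 := by linear_combination -(ρ x ^ 2 * sx)
          _ = ρ y ^ 2 := by rw [← e0, ← e1]; linear_combination ρ y ^ 2 * sy
      exact (pow_left_inj₀ (hρ x).le (hρ y).le two_ne_zero).1 this
    rw [hρe] at e0 e1
    have c0 := mul_left_cancel₀ (hρ y).ne' e0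
    have c1 := mul_left_cancel₀ (hρ y).ne' e1
    have hcos : Real.cos (2 * Real.pi * x - 2 * Real.pi * y) = 1 := by
      rw [Real.cos_sub, ← c0, ← c1]; linarith
    have hpi := Real.pi_pos
    have := (Real.cos_eq_one_iff_of_lt_of_lt (by nlinarith [hx.1, hy.2]) (by nlinarith [hx.2, hy.1])).1
      hcos
    nlinarith
  · -- A determinant relative to `c` is negative only if its angle exceeds a half turn, and at most
    -- one of three angles that make up a full turn does.
    intro x t y hx hxt hty hy
    have hsum : area (γ x) (γ t) (γ y) =
        ((γ x 0 - c 0) * (γ t 1 - c 1) - (γ x 1 - c 1) * (γ t 0 - c 0)) +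
        ((γ t 0 - c 0) * (γ y 1 - c 1) - (γ t 1 - c 1) * (γ y 0 - c 0)) +
        ((γ y 0 - c 0) * (γ x 1 - c 1) - (γ y 1 - c 1) * (γ x 0 - c 0)) := by
      unfold area; ring
    have n1 : (γ x 0 - c 0) * (γ t 1 - c 1) - (γ x 1 - c 1) * (γ t 0 - c 0) < 0 →
        1 / 2 < t - x := by
      intro h; rw [hdet] at h
      exact sin_neg_turn (by linarith) (neg_of_mul_neg_right h (mul_pos (hρ _) (hρ _)).le)
    have n2 : (γ t 0 - c 0) * (γ y 1 - c 1) - (γ t 1 - c 1) * (γ y 0 - c 0) < 0 →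
        1 / 2 < y - t := by
      intro h; rw [hdet] at h
      exact sin_neg_turn (by linarith) (neg_of_mul_neg_right h (mul_pos (hρ _) (hρ _)).le)
    have n3 : (γ y 0 - c 0) * (γ x 1 - c 1) - (γ y 1 - c 1) * (γ x 0 - c 0) < 0 →
        1 / 2 < 1 - (y - x) := by
      intro h; rw [hdet'] at h
      exact sin_neg_turn (by linarith) (neg_of_mul_neg_right h (mul_pos (hρ _) (hρ _)).le)
    have k1 := ccw_of_cone hconv (hγC x) (hγf t) (hγC y) hc
    have k2 := ccw_of_cone hconv (hγC t) (hγf y) (hγC x) hc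
    have k3 := ccw_of_cone hconv (hγC y) (hγf x) (hγC t) hc
    rw [hsum]
    rcases lt_or_ge ((γ x 0 - c 0) * (γ t 1 - c 1) - (γ x 1 - c 1) * (γ t 0 - c 0)) 0 with h1 | h1
    · have := k2 (by by_contra! h; linarith [n1 h1, n2 h]) (by by_contra! h; linarith [n1 h1, n3 h])
      linarith
    rcases lt_or_ge ((γ t 0 - c 0) * (γ y 1 - c 1) - (γ t 1 - c 1) * (γ y 0 - c 0)) 0 with h2 | h2
    · have := k3 (by by_contra! h; linarith [n2 h2, n3 h]) h1
      linarith
    · have := k1 h1 h2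
      linarith
  · intro x t y hx hxt hty hy
    have n1 : 0 < area (γ x) c (γ t) → 1 / 2 < t - x := by
      intro h; rw [harea, hdet] at h
      exact sin_neg_turn (by linarith)
        (neg_of_mul_neg_right (neg_pos.1 h) (mul_pos (hρ _) (hρ _)).le)
    have n2 : 0 < area (γ t) c (γ y) → 1 / 2 < y - t := by
      intro h; rw [harea, hdet] at h
      exact sin_neg_turn (by linarith)
        (neg_of_mul_neg_right (neg_pos.1 h) (mul_pos (hρ _) (hρ _)).le)
    have n3 : 0 < area (γ y) c (γ x) → 1 / 2 < 1 - (y - x) := by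
      intro h; rw [harea, hdet'] at h
      exact sin_neg_turn (by linarith)
        (neg_of_mul_neg_right (neg_pos.1 h) (mul_pos (hρ _) (hρ _)).le)
    refine ⟨fun h => ?_, fun h => ?_, fun h => ?_⟩
    · linarith [n1 h.1, n2 h.2]
    · linarith [n2 h.1, n3 h.2]
    · linarith [n3 h.1, n1 h.2]

/-! ### Cells of three weighted functionals -/

/-- The mass of a superlevel set `{0 < g x}` depends continuously on the parameter `x` as long as
the zero set of `g x` is null. -/
lemma continuousAt_measure {X : Type*} [TopologicalSpace X] [FirstCountableTopology X]
    {μ : Measure E2} [IsFiniteMeasure μ] {C : Set E2} (hC : MeasurableSet C) {g : X → E2 → ℝ}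
    (hg : ∀ x, Continuous (g x)) {x0 : X} (hx : ∀ w, ContinuousAt (fun x => g x w) x0)
    (h0 : μ {w | g x0 w = 0} = 0) :
    ContinuousAt (fun x => μ.real (C ∩ {w | 0 < g x w})) x0 := by
  have hm : ∀ x, MeasurableSet (C ∩ {w | 0 < g x w}) := fun x =>
    hC.inter (isOpen_lt continuous_const (hg x)).measurableSet
  refine (ENNReal.tendsto_toReal (measure_ne_top μ _)).comp
    (tendsto_measure_of_ae_tendsto_indicator_of_isFiniteMeasure (𝓝 x0) (hm x0) hm ?_)
  have : ∀ᵐ w ∂μ, g x0 w ≠ 0 := by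
    rw [ae_iff]; simpa using h0
  filter_upwards [this] with w hw
  rcases lt_or_gt_of_ne hw with h | h
  · filter_upwards [(hx w).eventually (gt_mem_nhds h)] with x hx'
    exact ⟨fun ⟨_, h'⟩ => absurd hx' (not_lt.2 h'.le), fun ⟨_, h'⟩ => absurd h (not_lt.2 h'.le)⟩
  · filter_upwards [(hx w).eventually (lt_mem_nhds h)] with x hx'
    exact ⟨fun ⟨a, _⟩ => ⟨a, h⟩, fun ⟨a, _⟩ => ⟨a, hx'⟩⟩

/-- If the cap `{d < 0}` has mass less than `W`, so has a slightly larger cap. -/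
lemma exists_small_slab {μ : Measure E2} [IsFiniteMeasure μ] {C : Set E2} (hC : MeasurableSet C)
    {d : E2 → ℝ} (hd : Continuous d) (h0 : μ {w | d w = 0} = 0) {W : ℝ}
    (hW : μ.real (C ∩ {w | d w < 0}) < W) :
    ∃ δ > 0, ∀ ε ≤ δ, μ.real (C ∩ {w | d w < ε}) < W := by
  have hcont : ContinuousAt (fun ε : ℝ => μ.real (C ∩ {w | 0 < ε - d w})) 0 :=
    continuousAt_measure hC (fun x => by fun_prop) (fun w => by fun_prop) (by simpa using h0)
  have hW' : (fun ε : ℝ => μ.real (C ∩ {w | 0 < ε - d w})) 0 < W := by simpa using hW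
  obtain ⟨η, hη, h⟩ := Metric.eventually_nhds_iff.1 (hcont.eventually (gt_mem_nhds hW'))
  refine ⟨η / 2, by positivity, fun ε hε => ?_⟩
  have h2 := h (y := η / 2) (by rw [Real.dist_eq, sub_zero, abs_of_pos] <;> linarith)
  refine lt_of_le_of_lt (measureReal_mono ?_) h2
  rintro w ⟨hw, hw'⟩
  exact ⟨hw, by simp only [mem_ofPred_eq] at hw' ⊢; linarith⟩

/-- The cell of the first of three functions `f, g, h`: the part of `C` on which `f` is smallest.
The cells of `g` and `h` are obtained by rotating the arguments. -/
def cell (C : Set E2) (f g h : E2 → ℝ) : Set E2 := {w | w ∈ C ∧ f w ≤ g w ∧ f w ≤ h w}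

/-- The version of `cell` with strict inequalities. -/
def ocell (C : Set E2) (f g h : E2 → ℝ) : Set E2 := {w | w ∈ C ∧ f w < g w ∧ f w < h w}

lemma ocell_subset_cell {C : Set E2} {f g h : E2 → ℝ} : ocell C f g h ⊆ cell C f g h :=
  fun _ hw => ⟨hw.1, hw.2.1.le, hw.2.2.le⟩

lemma measureReal_cell {μ : Measure E2} [IsFiniteMeasure μ] {C : Set E2} {f g h : E2 → ℝ}
    (h1 : μ {w | f w = g w} = 0) (h2 : μ {w | f w = h w} = 0) :
    μ.real (ocell C f g h) = μ.real (cell C f g h) := by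
  apply le_antisymm (measureReal_mono ocell_subset_cell)
  have hsub : cell C f g h ⊆ ocell C f g h ∪ ({w | f w = g w} ∪ {w | f w = h w}) := by
    rintro w ⟨hw, hg, hh⟩
    rcases hg.eq_or_lt with e | e
    · exact Or.inr (Or.inl e)
    rcases hh.eq_or_lt with e' | e'
    · exact Or.inr (Or.inr e')
    · exact Or.inl ⟨hw, e, e'⟩
  have h3 : μ.real ({w | f w = g w} ∪ {w | f w = h w}) = 0 := by
    rw [measureReal_def, measure_union_null h1 h2]; rfl
  calc μ.real (cell C f g h) ≤ μ.real (ocell C f g h ∪ ({w | f w = g w} ∪ {w | f w = h w})) :=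
        measureReal_mono hsub
    _ ≤ _ := measureReal_union_le _ _
    _ = _ := by rw [h3, add_zero]

/-- The three closed cells cover, and the open cells are disjoint, so the masses add up. -/
lemma cell_sum {μ : Measure E2} [IsFiniteMeasure μ] {C : Set E2} (hC : MeasurableSet C)
    {f g h : E2 → ℝ} (hf : Continuous f) (hg : Continuous g) (hh : Continuous h)
    (h1 : μ {w | f w = g w} = 0) (h2 : μ {w | f w = h w} = 0) (h3 : μ {w | g w = h w} = 0) :
    μ.real (ocell C f g h) + μ.real (ocell C g h f) + μ.real (ocell C h f g) = μ.real C := by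
  have m : ∀ f g h : E2 → ℝ, Continuous f → Continuous g → Continuous h →
      MeasurableSet (ocell C f g h) := fun f g h hf hg hh =>
    hC.inter ((isOpen_lt hf hg).inter (isOpen_lt hf hh)).measurableSet
  have d1 : Disjoint (ocell C f g h) (ocell C g h f) :=
    Set.disjoint_left.2 fun w a b => lt_asymm a.2.1 b.2.2
  have d2 : Disjoint (ocell C f g h ∪ ocell C g h f) (ocell C h f g) :=
    Set.disjoint_left.2 fun w a b => a.elim (fun a => lt_asymm a.2.2 b.2.1)
      (fun a => lt_asymm a.2.1 b.2.2)
  rw [← measureReal_union d1 (m _ _ _ hg hh hf), ← measureReal_union d2 (m _ _ _ hh hf hg)]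
  apply le_antisymm
  · refine measureReal_mono ?_
    rintro w ((a | a) | a) <;> exact a.1
  · have h3 : μ.real ({w | f w = g w} ∪ ({w | f w = h w} ∪ {w | g w = h w})) = 0 := by
      rw [measureReal_def, measure_union_null h1 (measure_union_null h2 h3)]; rfl
    calc μ.real C ≤ μ.real ((ocell C f g h ∪ ocell C g h f ∪ ocell C h f g) ∪
          ({w | f w = g w} ∪ ({w | f w = h w} ∪ {w | g w = h w}))) := by
          refine measureReal_mono ?_
          intro w hw
          simp only [ocell, mem_union, mem_ofPred_eq, hw, true_and]
          grind
      _ ≤ _ := measureReal_union_le _ _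
      _ = _ := by rw [h3, add_zero]

/-- Three edge functionals of a triangle can be weighted so that their cells have prescribed
masses, provided each cap `{dᵢ < 0}` has less than the prescribed mass. The weights
are obtained by minimizing `a + c` under the constraint that the first two cells are not too big:
lowering a weight enlarges its own cell continuously and shrinks the other one. -/
lemma exists_weights {μ : Measure E2} [IsFiniteMeasure μ] {C : Set E2} (hC : IsCompact C)
    {d1 d2 d3 : E2 → ℝ} (hd1 : Continuous d1) (hd2 : Continuous d2) (hd3 : Continuous d3)
    (hnull : ∀ α β γ : ℝ, (α ≠ β ∨ β ≠ γ) → μ {w | α * d1 w + β * d2 w + γ * d3 w = 0} = 0)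
    (hneg : ∀ w ∈ C, ¬(d1 w < 0 ∧ d2 w < 0)) {W1 W2 W3 : ℝ}
    (hW : μ.real C = W1 + W2 + W3)
    (h1 : μ.real (C ∩ {w | d1 w < 0}) < W1) (h2 : μ.real (C ∩ {w | d2 w < 0}) < W2)
    (h3 : μ.real (C ∩ {w | d3 w < 0}) < W3) :
    ∃ a c : ℝ, 0 < a ∧ 0 < c ∧
      μ.real (cell C (fun w => a * d1 w) (fun w => c * d2 w) d3) = W1 ∧
      μ.real (cell C (fun w => c * d2 w) d3 (fun w => a * d1 w)) = W2 ∧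
      μ.real (cell C d3 (fun w => a * d1 w) (fun w => c * d2 w)) = W3 := by
  have hCm := hC.isClosed.measurableSet
  -- nullity of the walls between cells
  have n1 : μ {w | d1 w = 0} = 0 := by simpa using hnull 1 0 0 (by norm_num)
  have n2 : μ {w | d2 w = 0} = 0 := by simpa using hnull 0 1 0 (by norm_num)
  have n3 : μ {w | d3 w = 0} = 0 := by simpa using hnull 0 0 1 (by norm_num)
  have n13 : ∀ a : ℝ, μ {w | a * d1 w = d3 w} = 0 := by
    intro a
    have := hnull a 0 (-1) (Or.inr (by norm_num))
    refine measure_mono_null (fun w hw => ?_) this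
    simp only [mem_ofPred_eq] at hw ⊢
    linarith
  have n23 : ∀ c : ℝ, μ {w | c * d2 w = d3 w} = 0 := by
    intro c
    have := hnull 0 c (-1) (by by_contra! h; linarith [h.1, h.2])
    refine measure_mono_null (fun w hw => ?_) this
    simp only [mem_ofPred_eq] at hw ⊢
    linarith
  have n12 : ∀ a c : ℝ, 0 ≤ a → 0 ≤ c → 0 < a + c → μ {w | a * d1 w = c * d2 w} = 0 := by
    intro a c ha hc hac
    have := hnull a (-c) 0 (by by_contra! h; linarith [h.1, h.2])
    refine measure_mono_null (fun w hw => ?_) this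
    simp only [mem_ofPred_eq] at hw ⊢
    linarith
  have sw : ∀ f g : E2 → ℝ, {w | f w = g w} = {w | g w = f w} := fun f g => by
    ext w; exact eq_comm
  -- masses of the three cells as functions of the weights `(a, c)`
  let G1 : ℝ × ℝ → ℝ := fun x => μ.real (ocell C (fun w => x.1 * d1 w) (fun w => x.2 * d2 w) d3)
  let G2 : ℝ × ℝ → ℝ := fun x => μ.real (ocell C (fun w => x.2 * d2 w) d3 (fun w => x.1 * d1 w))
  let G3 : ℝ × ℝ → ℝ := fun x => μ.real (ocell C d3 (fun w => x.1 * d1 w) (fun w => x.2 * d2 w))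
  have hsum : ∀ a c : ℝ, 0 ≤ a → 0 ≤ c → 0 < a + c →
      G1 (a, c) + G2 (a, c) + G3 (a, c) = μ.real C := by
    intro a c ha hc hac
    exact cell_sum hCm (by fun_prop) (by fun_prop) hd3 (n12 a c ha hc hac) (n13 a) (n23 c)
  have G1c : ∀ x : ℝ × ℝ, 0 ≤ x.1 → 0 ≤ x.2 → 0 < x.1 + x.2 → ContinuousAt G1 x := by
    intro x ha hc hac
    have : G1 = fun x : ℝ × ℝ =>
        μ.real (C ∩ {w | 0 < min (x.2 * d2 w - x.1 * d1 w) (d3 w - x.1 * d1 w)}) := by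
      funext x
      simp only [G1]
      congr 1
      ext w
      simp [ocell]
      try tauto
    rw [this]
    refine continuousAt_measure hCm (fun x => by fun_prop) (fun w => by fun_prop) ?_
    refine measure_mono_null ?_ (measure_union_null (n12 x.1 x.2 ha hc hac) (n13 x.1))
    intro w hw
    rcases min_choice (x.2 * d2 w - x.1 * d1 w) (d3 w - x.1 * d1 w) with h | h <;>
      rw [mem_ofPred_eq, h] at hw
    · left; rw [mem_ofPred_eq]; linarith
    · right; rw [mem_ofPred_eq]; linarith
  have G2c : ∀ x : ℝ × ℝ, 0 ≤ x.1 → 0 ≤ x.2 → 0 < x.1 + x.2 → ContinuousAt G2 x := by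
    intro x ha hc hac
    have : G2 = fun x : ℝ × ℝ =>
        μ.real (C ∩ {w | 0 < min (d3 w - x.2 * d2 w) (x.1 * d1 w - x.2 * d2 w)}) := by
      funext x
      simp only [G2]
      congr 1
      ext w
      simp [ocell]
      try tauto
    rw [this]
    refine continuousAt_measure hCm (fun x => by fun_prop) (fun w => by fun_prop) ?_
    refine measure_mono_null ?_ (measure_union_null (n12 x.1 x.2 ha hc hac) (n23 x.2))
    intro w hw
    rcases min_choice (d3 w - x.2 * d2 w) (x.1 * d1 w - x.2 * d2 w) with h | h <;>
      rw [mem_ofPred_eq, h] at hw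
    · right; rw [mem_ofPred_eq]; linarith
    · left; rw [mem_ofPred_eq]; linarith
  obtain ⟨δ1, hδ1, k1⟩ := exists_small_slab hCm hd1 n1 h1
  obtain ⟨δ2, hδ2, k2⟩ := exists_small_slab hCm hd2 n2 h2
  obtain ⟨δ3, hδ3, k3⟩ := exists_small_slab hCm hd3 n3 h3
  obtain ⟨K, hK, b1, b2, b3⟩ : ∃ K : ℝ, 0 < K ∧ (∀ w ∈ C, d1 w ≤ K) ∧ (∀ w ∈ C, d2 w ≤ K) ∧
      (∀ w ∈ C, d3 w ≤ K) := by
    obtain ⟨K1, hK1⟩ := (hC.image hd1).bddAbove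
    obtain ⟨K2, hK2⟩ := (hC.image hd2).bddAbove
    obtain ⟨K3, hK3⟩ := (hC.image hd3).bddAbove
    refine ⟨max 1 (max K1 (max K2 K3)), by positivity, ?_, ?_, ?_⟩ <;> intro w hw
    · have := hK1 (mem_image_of_mem _ hw); simp [this]
    · have := hK2 (mem_image_of_mem _ hw); simp [this]
    · have := hK3 (mem_image_of_mem _ hw); simp [this]
  -- `M` is large enough for a feasible point, `ε` a lower bound for feasible points
  set M := max (K / min δ1 δ2) (δ3 / K) with hM
  have hmin : 0 < min δ1 δ2 := lt_min hδ1 hδ2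
  have hM0 : 0 < M := lt_max_of_lt_right (by positivity)
  set ε := δ3 / K with hε
  have hε0 : 0 < ε := by positivity
  let S : Set (ℝ × ℝ) := (Icc 0 M ×ˢ Icc 0 M) ∩ {x | ε ≤ x.1 + x.2}
  have hS : IsCompact S := (isCompact_Icc.prod isCompact_Icc).inter_right
    (isClosed_le continuous_const (by fun_prop))
  have hS1 : ContinuousOn G1 S := fun x hx =>
    (G1c x hx.1.1.1 hx.1.2.1 (lt_of_lt_of_le hε0 hx.2)).continuousWithinAt
  have hS2 : ContinuousOn G2 S := fun x hx =>
    (G2c x hx.1.1.1 hx.1.2.1 (lt_of_lt_of_le hε0 hx.2)).continuousWithinAt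
  let T : Set (ℝ × ℝ) := (S ∩ G1 ⁻¹' Iic W1) ∩ (S ∩ G2 ⁻¹' Iic W2)
  have hT : IsCompact T :=
    (hS.of_isClosed_subset (hS1.preimage_isClosed_of_isClosed hS.isClosed isClosed_Iic)
      inter_subset_left).inter_right (hS2.preimage_isClosed_of_isClosed hS.isClosed isClosed_Iic)
  have hTne : T.Nonempty := by
    have hMK : K ≤ M * min δ1 δ2 := by
      have : K / min δ1 δ2 ≤ M := le_max_left _ _
      rwa [div_le_iff₀ hmin] at this
    have hMS : (M, M) ∈ S := ⟨⟨⟨hM0.le, le_rfl⟩, ⟨hM0.le, le_rfl⟩⟩, by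
      have : ε ≤ M := le_max_right _ _
      simp only [mem_ofPred_eq]; linarith⟩
    refine ⟨(M, M), ⟨hMS, ?_⟩, ⟨hMS, ?_⟩⟩
    · refine (lt_of_le_of_lt (measureReal_mono ?_) (k1 δ1 le_rfl)).le
      rintro w ⟨hw, -, hw'⟩
      refine ⟨hw, ?_⟩
      have h := b3 w hw
      have : M * d1 w < M * δ1 := by nlinarith [min_le_left δ1 δ2]
      exact lt_of_mul_lt_mul_left this hM0.le
    · refine (lt_of_le_of_lt (measureReal_mono ?_) (k2 δ2 le_rfl)).le
      rintro w ⟨hw, hw', -⟩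
      refine ⟨hw, ?_⟩
      have h := b3 w hw
      have : M * d2 w < M * δ2 := by nlinarith [min_le_right δ1 δ2]
      exact lt_of_mul_lt_mul_left this hM0.le
  obtain ⟨⟨a, c⟩, hx, hmin'⟩ := hT.exists_isMinOn hTne
    (f := fun x : ℝ × ℝ => x.1 + x.2) (by fun_prop)
  have hminT : ∀ y ∈ T, a + c ≤ y.1 + y.2 := fun y hy => hmin' hy
  obtain ⟨⟨hxS, hG1⟩, -, hG2⟩ := hx
  obtain ⟨⟨⟨ha0, haM⟩, hc0, hcM⟩, hac⟩ := hxS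
  simp only [mem_preimage, mem_Iic, mem_ofPred_eq] at hG1 hG2 hac ha0 hc0 haM hcM
  have hac0 : 0 < a + c := lt_of_lt_of_le hε0 hac
  have hs := hsum a c ha0 hc0 hac0
  have hG3 : W3 ≤ G3 (a, c) := by linarith
  -- If `a + c = ε`, then `a * d1 ≤ δ3` on `C`, so the third cell lies in the slab `{d3 < δ3}`,
  -- which is too light.
  have hacε : ε < a + c := by
    by_contra! hle
    refine absurd hG3 (not_le.2 (lt_of_le_of_lt (measureReal_mono ?_) (k3 δ3 le_rfl)))
    rintro w ⟨hw, hw', -⟩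
    refine ⟨hw, ?_⟩
    have h := b1 w hw
    have : ε * K = δ3 := by rw [hε]; field_simp
    have e1 : a * d1 w ≤ a * K := mul_le_mul_of_nonneg_left h ha0
    have e2 : a * K ≤ ε * K := mul_le_mul_of_nonneg_right (by linarith) hK.le
    simp only [mem_ofPred_eq]
    linarith
  have cap : ∀ d d' : E2 → ℝ, Continuous d → Continuous d' → μ {w | d w = 0} = 0 →
      μ {w | d' w = 0} = 0 →
      μ.real C ≤ μ.real (C ∩ {w | 0 < d w ∧ 0 < d' w}) + μ.real (C ∩ {w | d w < 0})
        + μ.real (C ∩ {w | d' w < 0}) := by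
    intro d d' hd hd' z z'
    have z0 : μ.real ({w | d w = 0} ∪ {w | d' w = 0}) = 0 := by
      rw [measureReal_def, measure_union_null z z']; rfl
    have u0 : μ.real C ≤ μ.real (((C ∩ {w | 0 < d w ∧ 0 < d' w}) ∪ (C ∩ {w | d w < 0})
          ∪ (C ∩ {w | d' w < 0})) ∪ ({w | d w = 0} ∪ {w | d' w = 0})) := by
      refine measureReal_mono ?_
      intro w hw
      simp only [mem_union, mem_inter_iff, mem_ofPred_eq, hw, true_and]
      grind
    have u1 := measureReal_union_le (μ := μ) ((C ∩ {w | 0 < d w ∧ 0 < d' w}) ∪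
      (C ∩ {w | d w < 0}) ∪ (C ∩ {w | d' w < 0})) ({w | d w = 0} ∪ {w | d' w = 0})
    have u2 := measureReal_union_le (μ := μ) ((C ∩ {w | 0 < d w ∧ 0 < d' w}) ∪
      (C ∩ {w | d w < 0})) (C ∩ {w | d' w < 0})
    have u3 := measureReal_union_le (μ := μ) (C ∩ {w | 0 < d w ∧ 0 < d' w}) (C ∩ {w | d w < 0})
    linarith
  -- with `a = 0`, the first cell would contain all of `C` outside the caps of `d2` and `d3`
  have ha : 0 < a := by
    rcases ha0.eq_or_lt with h | h
    · exfalso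
      have hc : 0 < c := by linarith
      have := cap d2 d3 hd2 hd3 n2 n3
      have hle : μ.real (C ∩ {w | 0 < d2 w ∧ 0 < d3 w}) ≤ G1 (a, c) := by
        refine measureReal_mono ?_
        rintro w ⟨hw, hw2, hw3⟩
        refine ⟨hw, ?_, ?_⟩
        · simp only [← h, zero_mul]; positivity
        · simpa [← h] using hw3
      linarith
    · exact h
  have hc : 0 < c := by
    rcases hc0.eq_or_lt with h | h
    · exfalso
      have := cap d1 d3 hd1 hd3 n1 n3
      have hle : μ.real (C ∩ {w | 0 < d1 w ∧ 0 < d3 w}) ≤ G2 (a, c) := by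
        refine measureReal_mono ?_
        rintro w ⟨hw, hw1, hw3⟩
        refine ⟨hw, ?_, ?_⟩
        · simpa [← h] using hw3
        · simp only [← h, zero_mul]; positivity
      linarith
    · exact h
  -- otherwise `a` could be lowered: this shrinks the second cell, as `d1` and `d2` are never
  -- negative at the same time
  have e1 : G1 (a, c) = W1 := by
    by_contra hne
    have hlt : G1 (a, c) < W1 := lt_of_le_of_ne hG1 hne
    have hcont : ContinuousAt (fun t : ℝ => G1 (t, c)) a :=
      ContinuousAt.comp (f := fun t : ℝ => (t, c)) (g := G1) (G1c (a, c) ha0 hc0 hac0) (by fun_prop)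
    have hev : ∀ᶠ t in 𝓝[<] a, G1 (t, c) < W1 ∧ 0 < t ∧ ε < t + c ∧ t < a :=
      (((hcont.eventually (gt_mem_nhds hlt)).and ((lt_mem_nhds ha).and
        ((lt_mem_nhds (show ε - c < a by linarith)).mono fun t ht => by linarith))).filter_mono
          nhdsWithin_le_nhds).and self_mem_nhdsWithin |>.mono fun t ht =>
          ⟨ht.1.1, ht.1.2.1, ht.1.2.2, ht.2⟩
    obtain ⟨t, t1, t2, t3, t4⟩ := hev.exists
    have tS : (t, c) ∈ S := ⟨⟨⟨t2.le, by simp only; linarith⟩, ⟨hc0, hcM⟩⟩, t3.le⟩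
    have := hminT (t, c) ⟨⟨tS, t1.le⟩, ⟨tS, by
      refine le_trans (measureReal_mono ?_) hG2
      rintro w ⟨hw, hw1, hw2⟩
      refine ⟨hw, hw1, ?_⟩
      simp only at hw2 ⊢
      rcases le_or_gt 0 (d1 w) with h | h
      · nlinarith
      · exfalso
        refine hneg w hw ⟨h, ?_⟩
        have : c * d2 w < 0 := by nlinarith
        exact neg_of_mul_neg_right this hc0⟩⟩
    simp only at this
    linarith
  have e2 : G2 (a, c) = W2 := by
    by_contra hne
    have hlt : G2 (a, c) < W2 := lt_of_le_of_ne hG2 hne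
    have hcont : ContinuousAt (fun t : ℝ => G2 (a, t)) c :=
      ContinuousAt.comp (f := fun t : ℝ => (a, t)) (g := G2) (G2c (a, c) ha0 hc0 hac0) (by fun_prop)
    have hev : ∀ᶠ t in 𝓝[<] c, G2 (a, t) < W2 ∧ 0 < t ∧ ε < a + t ∧ t < c :=
      (((hcont.eventually (gt_mem_nhds hlt)).and ((lt_mem_nhds hc).and
        ((lt_mem_nhds (show ε - a < c by linarith)).mono fun t ht => by linarith))).filter_mono
          nhdsWithin_le_nhds).and self_mem_nhdsWithin |>.mono fun t ht =>
          ⟨ht.1.1, ht.1.2.1, ht.1.2.2, ht.2⟩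
    obtain ⟨t, t1, t2, t3, t4⟩ := hev.exists
    have tS : (a, t) ∈ S := ⟨⟨⟨ha0, haM⟩, ⟨t2.le, by simp only; linarith⟩⟩, t3.le⟩
    have := hminT (a, t) ⟨⟨tS, by
      refine le_trans (measureReal_mono ?_) hG1
      rintro w ⟨hw, hw1, hw2⟩
      refine ⟨hw, ?_, hw2⟩
      simp only at hw1 ⊢
      rcases le_or_gt 0 (d2 w) with h | h
      · nlinarith
      · exfalso
        refine hneg w hw ⟨?_, h⟩
        have : a * d1 w < 0 := by nlinarith
        exact neg_of_mul_neg_right this ha0⟩, ⟨tS, t1.le⟩⟩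
    simp only at this
    linarith
  refine ⟨a, c, ha, hc, ?_, ?_, ?_⟩
  · rw [← e1]; exact (measureReal_cell (n12 a c ha0 hc0 hac0) (n13 a)).symm
  · rw [← e2]
    exact (measureReal_cell (n23 c) (by rw [sw]; exact n12 a c ha0 hc0 hac0)).symm
  · have : G3 (a, c) = W3 := by linarith
    rw [← this]
    exact (measureReal_cell (by rw [sw]; exact n13 a) (by rw [sw]; exact n23 c)).symm

/-! ### Boundary mass of arcs and the sign of the excess -/

/-- `γ`, restricted to `[0, 1]`, is a counterclockwise closed parametrization of the boundary of
`C`. The last field says that the point `c` lies strictly outside at most one side of any inscribed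
triangle. -/
structure IsBoundaryParam (C : Set E2) (c : E2) (γ : ℝ → E2) : Prop where
  cont : Continuous γ
  closed : γ 0 = γ 1
  image : γ '' Icc 0 1 = frontier C
  inj : InjOn γ (Ico 0 1)
  ccw : ∀ x t y, 0 ≤ x → x ≤ t → t ≤ y → y ≤ 1 → 0 ≤ area (γ x) (γ t) (γ y)
  ang : ∀ x t y, 0 ≤ x → x < t → t < y → y < 1 →
    ¬(0 < area (γ x) c (γ t) ∧ 0 < area (γ t) c (γ y)) ∧
    ¬(0 < area (γ t) c (γ y) ∧ 0 < area (γ y) c (γ x)) ∧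
    ¬(0 < area (γ y) c (γ x) ∧ 0 < area (γ x) c (γ t))

/-- Boundary mass of the arc from `γ 0` to `γ t`. -/
noncomputable def arcMass (σ : Measure E2) (γ : ℝ → E2) (t : ℝ) : ℝ := σ.real (γ '' Icc 0 t)

lemma arcMass_zero {γ : ℝ → E2} {σ : Measure E2} [NullSingletonClass σ] : arcMass σ γ 0 = 0 := by
  simp [arcMass, measureReal_def]

section Arc

variable {C : Set E2} {c : E2} {γ : ℝ → E2} {σ : Measure E2} [IsFiniteMeasure σ] [NullSingletonClass σ]

lemma IsBoundaryParam.measurable_arc (h : IsBoundaryParam C c γ) (x y : ℝ) :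
    MeasurableSet (γ '' Icc x y) :=
  (isCompact_Icc.image h.cont).isClosed.measurableSet

lemma IsBoundaryParam.mem_frontier (h : IsBoundaryParam C c γ) {x : ℝ} (h0 : 0 ≤ x) (h1 : x ≤ 1) :
    γ x ∈ frontier C := h.image ▸ mem_image_of_mem γ ⟨h0, h1⟩

lemma arcMass_sub (h : IsBoundaryParam C c γ) {x y : ℝ} (h0 : 0 ≤ x) (hxy : x ≤ y) (h1 : y ≤ 1) :
    σ.real (γ '' Icc x y) = arcMass σ γ y - arcMass σ γ x := by
  have hu : γ '' Icc 0 y = γ '' Icc 0 x ∪ γ '' Icc x y := by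
    rw [← image_union, Icc_union_Icc_eq_Icc h0 hxy]
  have hd : AEDisjoint σ (γ '' Icc 0 x) (γ '' Icc x y) := by
    refine measure_mono_null (t := {γ 0, γ x}) ?_ (Set.Countable.measure_zero (by simp) _)
    rintro _ ⟨⟨u, hu, rfl⟩, v, hv, huv⟩
    rcases eq_or_lt_of_le (hv.2.trans h1) with e | e
    · left; rw [← huv, e, h.closed]
    · right
      have := h.inj ⟨h0.trans hv.1, e⟩ ⟨hu.1, (hu.2.trans hv.1).trans_lt e⟩ huv
      have : u = x := le_antisymm hu.2 (this ▸ hv.1)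
      rw [this]; rfl
  have := measureReal_union₀ (μ := σ) (h.measurable_arc x y).nullMeasurableSet hd
  rw [arcMass, arcMass, hu, this]
  ring

lemma arcMass_mono (h : IsBoundaryParam C c γ) {x y : ℝ} (h0 : 0 ≤ x) (hxy : x ≤ y) (h1 : y ≤ 1) :
    arcMass σ γ x ≤ arcMass σ γ y := by
  have := arcMass_sub (σ := σ) h h0 hxy h1
  have := measureReal_nonneg (μ := σ) (s := γ '' Icc x y)
  linarith

lemma arcMass_continuousOn (h : IsBoundaryParam C c γ) : ContinuousOn (arcMass σ γ) (Icc 0 1) := by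
  intro t0 ht0
  refine (ENNReal.tendsto_toReal (measure_ne_top σ _)).comp
    (tendsto_measure_of_ae_tendsto_indicator_of_isFiniteMeasure (𝓝[Icc 0 1] t0)
      (h.measurable_arc 0 t0) (fun t => h.measurable_arc 0 t) ?_)
  have hN : σ {γ 0, γ t0} = 0 := Set.Countable.measure_zero (by simp) _
  have hN' : ∀ᵐ w ∂σ, w ∉ ({γ 0, γ t0} : Set E2) := measure_eq_zero_iff_ae_notMem.1 hN
  filter_upwards [hN'] with w hw
  simp only [mem_insert_iff, mem_singleton_iff, not_or] at hw
  by_cases hw1 : w ∈ γ '' Icc 0 1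
  · obtain ⟨u, hu, rfl⟩ := hw1
    have hu1 : u < 1 := lt_of_le_of_ne hu.2 (fun e => hw.1 (by rw [e, h.closed]))
    have hut : u ≠ t0 := fun e => hw.2 (by rw [e])
    have key : ∀ t ∈ Icc (0 : ℝ) 1, (γ u ∈ γ '' Icc 0 t ↔ u ≤ t) := by
      intro t ht
      refine ⟨?_, fun h' => ⟨u, ⟨hu.1, h'⟩, rfl⟩⟩
      rintro ⟨v, hv, hvu⟩
      have hv1 : v < 1 := lt_of_le_of_ne (hv.2.trans ht.2)
        (fun e => hw.1 (by rw [← hvu, e, h.closed]))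
      rw [← h.inj ⟨hv.1, hv1⟩ ⟨hu.1, hu1⟩ hvu]
      exact hv.2
    rcases lt_or_gt_of_ne hut with hlt | hgt
    · filter_upwards [self_mem_nhdsWithin, nhdsWithin_le_nhds (lt_mem_nhds hlt)] with t ht htu
      rw [key t ht, key t0 ht0]
      exact ⟨fun _ => hlt.le, fun _ => htu.le⟩
    · filter_upwards [self_mem_nhdsWithin, nhdsWithin_le_nhds (gt_mem_nhds hgt)] with t ht htu
      rw [key t ht, key t0 ht0]
      exact ⟨fun h' => absurd h' (not_le.2 htu), fun h' => absurd h' (not_le.2 hgt)⟩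
  · filter_upwards [self_mem_nhdsWithin] with t ht
    have : ∀ s ∈ Icc (0 : ℝ) 1, w ∉ γ '' Icc 0 s := fun s hs h' =>
      hw1 (image_mono (Icc_subset_Icc_right hs.2) h')
    exact ⟨fun h' => absurd h' (this t ht), fun h' => absurd h' (this t0 ht0)⟩

end Arc

/-- The parameter pairs that cut off an arc of boundary mass `m`. -/
def chords (F : ℝ → ℝ) (m : ℝ) : Set (ℝ × ℝ) :=
  {z | 0 ≤ z.1 ∧ z.1 ≤ z.2 ∧ z.2 ≤ 1 ∧ F z.2 - F z.1 = m}

/-- A continuous function without zeros on `chords F m` has constant sign: the chords are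
fibred over the interval of values `F x`, with convex fibres, so they form a connected set. -/
lemma chords_sign {F : ℝ → ℝ} (hF : ContinuousOn F (Icc 0 1)) (hm : MonotoneOn F (Icc 0 1))
    {m : ℝ} (hm0 : 0 ≤ m) {G : ℝ × ℝ → ℝ} (hG : ContinuousOn G (chords F m))
    (h0 : ∀ z ∈ chords F m, G z ≠ 0) :
    (∀ z ∈ chords F m, G z < 0) ∨ (∀ z ∈ chords F m, 0 < G z) := by
  by_contra! hcon
  obtain ⟨⟨zp, hzp, hzp0⟩, ⟨zn, hzn, hzn0⟩⟩ := hcon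
  have f1 : ∀ z ∈ chords F m, z.1 ∈ Icc (0 : ℝ) 1 := fun z hz => ⟨hz.1, hz.2.1.trans hz.2.2.1⟩
  have f2 : ∀ z ∈ chords F m, z.2 ∈ Icc (0 : ℝ) 1 := fun z hz => ⟨hz.1.trans hz.2.1, hz.2.2.1⟩
  have hK : IsCompact (chords F m) := by
    let S : Set (ℝ × ℝ) := (Icc 0 1 ×ˢ Icc 0 1) ∩ {z | z.1 ≤ z.2}
    have hS : IsCompact S := (isCompact_Icc.prod isCompact_Icc).inter_right
      (isClosed_le continuous_fst continuous_snd)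
    have hc : ContinuousOn (fun z : ℝ × ℝ => F z.2 - F z.1) S :=
      (hF.comp continuousOn_snd fun z hz => hz.1.2).sub
        (hF.comp continuousOn_fst fun z hz => hz.1.1)
    have : chords F m = S ∩ (fun z : ℝ × ℝ => F z.2 - F z.1) ⁻¹' {m} := by
      ext z
      constructor
      · intro hz; exact ⟨⟨⟨f1 z hz, f2 z hz⟩, hz.2.1⟩, hz.2.2.2⟩
      · rintro ⟨⟨⟨a, b⟩, c⟩, d⟩; exact ⟨a.1, c, b.2, d⟩
    rw [this]
    exact hS.of_isClosed_subset (hc.preimage_isClosed_of_isClosed hS.isClosed isClosed_singleton)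
      inter_subset_left
  have hφ : ContinuousOn (fun z : ℝ × ℝ => F z.1) (chords F m) :=
    hF.comp continuousOn_fst f1
  have hA : IsCompact (chords F m ∩ G ⁻¹' Iic 0) := hK.of_isClosed_subset
    (hG.preimage_isClosed_of_isClosed hK.isClosed isClosed_Iic) inter_subset_left
  have hB : IsCompact (chords F m ∩ G ⁻¹' Ici 0) := hK.of_isClosed_subset
    (hG.preimage_isClosed_of_isClosed hK.isClosed isClosed_Ici) inter_subset_left
  have hA' := (hA.image_of_continuousOn (hφ.mono inter_subset_left)).isClosed
  have hB' := (hB.image_of_continuousOn (hφ.mono inter_subset_left)).isClosed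
  have himg : ∀ z ∈ chords F m, F z.1 ∈ Icc (F 0) (F 1 - m) := by
    intro z hz
    refine ⟨hm ⟨le_rfl, zero_le_one⟩ (f1 z hz) hz.1, ?_⟩
    have := hm (f2 z hz) ⟨zero_le_one, le_rfl⟩ hz.2.2.1
    have := hz.2.2.2
    linarith
  have hcov : Icc (F 0) (F 1 - m) ⊆
      (fun z : ℝ × ℝ => F z.1) '' (chords F m ∩ G ⁻¹' Iic 0) ∪
      (fun z : ℝ × ℝ => F z.1) '' (chords F m ∩ G ⁻¹' Ici 0) := by
    intro s hs
    obtain ⟨x, hx, hxs⟩ := intermediate_value_Icc zero_le_one hF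
      (show s ∈ Icc (F 0) (F 1) from ⟨hs.1, by linarith [hs.2]⟩)
    obtain ⟨y, hy, hys⟩ := intermediate_value_Icc hx.2 (hF.mono (Icc_subset_Icc_left hx.1))
      (show s + m ∈ Icc (F x) (F 1) from ⟨by linarith, by linarith [hs.2]⟩)
    have hz : (x, y) ∈ chords F m := ⟨hx.1, hy.1, hy.2, by simp only; linarith⟩
    rcases le_total (G (x, y)) 0 with h | h
    · exact Or.inl ⟨(x, y), ⟨hz, h⟩, hxs⟩
    · exact Or.inr ⟨(x, y), ⟨hz, h⟩, hxs⟩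
  obtain ⟨s, -, ⟨z1, ⟨hz1, hn⟩, e1⟩, ⟨z2, ⟨hz2, hp⟩, e2⟩⟩ :=
    isPreconnected_closed_iff.1 isPreconnected_Icc _ _ hA' hB' hcov
      ⟨F zn.1, himg zn hzn, ⟨zn, ⟨hzn, hzn0⟩, rfl⟩⟩ ⟨F zp.1, himg zp hzp, ⟨zp, ⟨hzp, hzp0⟩, rfl⟩⟩
  simp only at e1 e2
  -- the segment between `z1` and `z2` stays in the same fibre
  have hflat : ∀ u v w : ℝ, u ∈ Icc (0 : ℝ) 1 → v ∈ Icc (0 : ℝ) 1 → F u = F v →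
      w ∈ uIcc u v → w ∈ Icc (0 : ℝ) 1 ∧ F w = F u := by
    intro u v w hu hv huv hw
    rcases le_total u v with h | h
    · rw [uIcc_of_le h] at hw
      have hw' : w ∈ Icc (0 : ℝ) 1 := ⟨hu.1.trans hw.1, hw.2.trans hv.2⟩
      exact ⟨hw', le_antisymm (huv ▸ hm hw' hv hw.2) (hm hu hw' hw.1)⟩
    · rw [uIcc_of_ge h] at hw
      have hw' : w ∈ Icc (0 : ℝ) 1 := ⟨hv.1.trans hw.1, hw.2.trans hu.2⟩
      exact ⟨hw', le_antisymm (hm hw' hu hw.2) (huv ▸ hm hv hw' hw.1)⟩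
  have hseg : segment ℝ z1 z2 ⊆ chords F m := by
    intro z hz
    have hs1 : z.1 ∈ uIcc z1.1 z2.1 := by
      obtain ⟨u, v, hu, hv, huv, rfl⟩ := hz
      rw [← segment_eq_uIcc]
      exact ⟨u, v, hu, hv, huv, rfl⟩
    have hs2 : z.2 ∈ uIcc z1.2 z2.2 := by
      obtain ⟨u, v, hu, hv, huv, rfl⟩ := hz
      rw [← segment_eq_uIcc]
      exact ⟨u, v, hu, hv, huv, rfl⟩
    obtain ⟨a1, a2⟩ := hflat _ _ _ (f1 z1 hz1) (f1 z2 hz2) (e1.trans e2.symm) hs1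
    obtain ⟨b1, b2⟩ := hflat _ _ _ (f2 z1 hz1) (f2 z2 hz2)
      (by have := hz1.2.2.2; have := hz2.2.2.2; linarith) hs2
    have := hz1.2.2.2
    refine ⟨a1.1, ?_, b1.2, by linarith⟩
    obtain ⟨u, v, hu, hv, huv, rfl⟩ := hz
    simp only [Prod.fst_add, Prod.smul_fst, smul_eq_mul, Prod.snd_add, Prod.smul_snd]
    have := hz1.2.1
    have := hz2.2.1
    gcongr
  have hconn := ((convex_segment (𝕜 := ℝ) z1 z2).isPreconnected.image G (hG.mono hseg))
  have := hconn.Icc_subset (mem_image_of_mem G (left_mem_segment ℝ z1 z2))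
    (mem_image_of_mem G (right_mem_segment ℝ z1 z2)) (show (0 : ℝ) ∈ Icc (G z1) (G z2) from ⟨hn, hp⟩)
  obtain ⟨z, hz, hz0⟩ := this
  exact h0 z (hseg hz) hz0

/-- Purely combinatorial: signs on `1, …, q - 1` that are antisymmetric under `k ↦ q - k` take
three equal values at indices adding up to `q`, one of the indices being `1`. -/
lemma exists_triple {q : ℕ} (hq : 2 ≤ q) (P : ℕ → Prop)
    (hP : ∀ k, 1 ≤ k → k + 1 ≤ q → (P (q - k) ↔ ¬P k)) :
    ∃ k, 1 ≤ k ∧ k + 2 ≤ q ∧ (P 1 ↔ P k) ∧ (P 1 ↔ P (q - 1 - k)) := by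
  by_contra! hcon
  have key : ∀ k, 1 ≤ k → k + 1 ≤ q → (P 1 ↔ P k) := by
    intro k hk
    induction k, hk using Nat.le_induction with
    | base => intro _; rfl
    | succ k hk ih =>
      intro hkq
      have h1 := ih (by omega)
      have h2 := hcon k hk (by omega) h1
      have h3 := hP (k + 1) (by omega) hkq
      rw [show q - 1 - k = q - (k + 1) by omega] at h2
      tauto
  have h1 := key (q - 1) (by omega) (by omega)
  have h2 := hP 1 le_rfl hq
  tauto

/-! ### Good sets and cuts along a chord -/

/-- A compact convex set that is to be divided into `k` parts of `μ`-mass `a` and `σ`-mass `b`.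
The measure `σ` is supported on the boundary of the original body, hence gives no mass to the
interior of any smaller set. -/
structure Good (μ σ : Measure E2) (a b : ℝ) (C : Set E2) (k : ℕ) : Prop where
  compact : IsCompact C
  convex : Convex ℝ C
  interior_null : σ (interior C) = 0
  mass : μ.real C = k * a
  boundary_mass : σ.real C = k * b

lemma convex_nonneg {g : E2 → ℝ}
    (hg : ∀ x y : E2, ∀ s t : ℝ, s + t = 1 → g (s • x + t • y) = s * g x + t * g y) :
    Convex ℝ {w | 0 ≤ g w} := by
  intro x hx y hy s t hs ht hst
  simp only [mem_ofPred_eq] at hx hy ⊢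
  rw [hg x y s t hst]
  positivity

lemma area_combo (p q x y : E2) (s t : ℝ) (h : s + t = 1) :
    area p (s • x + t • y) q = s * area p x q + t * area p y q := by
  have : t = 1 - s := by linarith
  subst this
  simp only [area, PiLp.add_apply, PiLp.smul_apply, smul_eq_mul]
  ring

section Measures

variable {μ σ : Measure E2}

lemma half_eq (hμ : μ ≪ volume) {p q : E2} (hpq : p ≠ q) (C : Set E2) :
    μ.real (C ∩ {w | 0 ≤ area p w q}) = μ.real (C ∩ {w | 0 < area p w q}) := by
  refine measureReal_congr (Filter.eventuallyEq_set.2 ?_)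
  have : ∀ᵐ w ∂μ, area p w q ≠ 0 := by
    rw [ae_iff]; simpa using area_null hμ hpq
  filter_upwards [this] with w hw
  exact ⟨fun h => ⟨h.1, lt_of_le_of_ne h.2 (Ne.symm hw)⟩, fun h => ⟨h.1, (show 0 < area p w q from h.2).le⟩⟩

/-- Complementary caps have complementary masses. -/
lemma cap_add [IsFiniteMeasure μ] (hμ : μ ≪ volume) {p q : E2} (hpq : p ≠ q) (C : Set E2) :
    μ.real (C ∩ {w | 0 < area p w q}) + μ.real (C ∩ {w | 0 < area q w p}) = μ.real C := by
  rw [← half_eq hμ hpq]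
  have hm : MeasurableSet {w | 0 ≤ area p w q} :=
    (isClosed_le continuous_const (area_continuous_mid p q)).measurableSet
  have : C ∩ {w | 0 < area q w p} = C \ {w | 0 ≤ area p w q} := by
    ext w
    simp only [mem_inter_iff, mem_ofPred_eq, Set.mem_sdiff, not_le, area_antisymm p w q]
    constructor <;> rintro ⟨h1, h2⟩ <;> exact ⟨h1, by linarith⟩
  rw [this]
  exact measureReal_inter_add_sdiff hm

lemma exists_mem_of_pos {s : Set E2} (h : 0 < μ.real s) : s.Nonempty := by
  by_contra! h'
  simp [h'] at h

variable {C : Set E2} {c : E2} {γ : ℝ → E2} {a b : ℝ} {q : ℕ}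

lemma Good.frontier_mass [IsFiniteMeasure σ] (hG : Good μ σ a b C q) : σ.real (frontier C) = q * b := by
  rw [← hG.boundary_mass]
  refine le_antisymm (measureReal_mono hG.compact.isClosed.frontier_subset) ?_
  have h1 : C ⊆ interior C ∪ frontier C := by
    rw [← closure_eq_interior_union_frontier]; exact subset_closure
  have h2 := measureReal_mono (μ := σ) h1
  have h3 := measureReal_union_le (μ := σ) (interior C) (frontier C)
  have h4 : σ.real (interior C) = 0 := by rw [measureReal_def, hG.interior_null]; rfl
  linarith

lemma Good.arcMass_one [IsFiniteMeasure σ] (hG : Good μ σ a b C q) (hpar : IsBoundaryParam C c γ) :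
    arcMass σ γ 1 = q * b := by
  rw [arcMass, hpar.image, hG.frontier_mass]

/-- A part of a good set with the right masses is good. -/
lemma Good.sub (hG : Good μ σ a b C q) {D : Set E2} {k : ℕ} (hD : IsClosed D) (hDC : D ⊆ C)
    (hconv : Convex ℝ D) (h1 : μ.real D = k * a) (h2 : σ.real D = k * b) : Good μ σ a b D k :=
  ⟨hG.compact.of_isClosed_subset hD hDC, hconv,
    measure_mono_null (interior_mono hDC) hG.interior_null, h1, h2⟩

/-- Chords cutting off a proper positive fraction of the boundary mass are nondegenerate. -/
lemma chord_ne [IsFiniteMeasure σ] [NullSingletonClass σ] (hG : Good μ σ a b C q) (hpar : IsBoundaryParam C c γ)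
    (hb : 0 < b) {k : ℕ} (hk : 1 ≤ k) (hkq : k < q) {z : ℝ × ℝ}
    (hz : z ∈ chords (arcMass σ γ) (k * b)) : z.1 < z.2 ∧ γ z.1 ≠ γ z.2 := by
  obtain ⟨x, y⟩ := z
  obtain ⟨h0, hxy, h1, hF⟩ := hz
  simp only at h0 hxy h1 hF ⊢
  have hk' : (1 : ℝ) ≤ k := by exact_mod_cast hk
  have hlt : x < y := by
    rcases hxy.eq_or_lt with e | e
    · rw [e, sub_self] at hF
      have : 0 < (k : ℝ) * b := by positivity
      linarith
    · exact e
  refine ⟨hlt, fun he => ?_⟩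
  rcases h1.eq_or_lt with e | e
  · rw [e, ← hpar.closed] at he
    have hx0 := hpar.inj ⟨h0, by linarith⟩ ⟨le_rfl, zero_lt_one⟩ he
    rw [e, hx0, hG.arcMass_one hpar, arcMass_zero, sub_zero] at hF
    have : (q : ℝ) = k := mul_right_cancel₀ hb.ne' hF
    have : q = k := by exact_mod_cast this
    omega
  · exact hlt.ne (hpar.inj ⟨h0, by linarith⟩ ⟨by linarith, e⟩ he)

/-- A chord that cuts off `k` parts of the boundary mass and `k` parts of the interior mass
divides `C` into two good pieces. -/
lemma cut [IsFiniteMeasure μ] [IsFiniteMeasure σ] [NullSingletonClass σ] (hμ : μ ≪ volume) (hG : Good μ σ a b C q)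
    (hc : c ∈ interior C) (hpar : IsBoundaryParam C c γ) (ha : 0 < a) (hb : 0 < b) {k : ℕ}
    (hk : 1 ≤ k) (hkq : k < q) {x y : ℝ} (hz : (x, y) ∈ chords (arcMass σ γ) (k * b))
    (hcap : μ.real (C ∩ {w | 0 < area (γ x) w (γ y)}) = k * a) :
    ∃ C1 C2, Good μ σ a b C1 k ∧ Good μ σ a b C2 (q - k) ∧ C1 ∪ C2 = C ∧
      volume (C1 ∩ C2) = 0 := by
  obtain ⟨hlt, hne⟩ := chord_ne hG hpar hb hk hkq hz
  obtain ⟨h0, hxy, h1, hF⟩ := hz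
  simp only at h0 hxy h1 hF hlt hne
  have hCc := hG.compact.isClosed
  have hk0 : (0 : ℝ) < k := by exact_mod_cast hk
  have hqk : (0 : ℝ) < (q : ℝ) - k := by
    have : (k : ℝ) < q := by exact_mod_cast hkq
    linarith
  have hcast : ((q - k : ℕ) : ℝ) = (q : ℝ) - k := by rw [Nat.cast_sub hkq.le]
  set p := γ x with hp
  set r := γ y with hr
  have hpF : p ∈ frontier C := hpar.mem_frontier h0 (hxy.trans h1)
  have hrF : r ∈ frontier C := hpar.mem_frontier (h0.trans hxy) h1
  have hadd := cap_add hμ hne C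
  rw [hG.mass, hcap] at hadd
  have hcap' : μ.real (C ∩ {w | 0 < area r w p}) = (q - k : ℕ) * a := by rw [hcast]; linarith
  obtain ⟨w1, hw1, hw1'⟩ := exists_mem_of_pos (μ := μ) (by rw [hcap]; positivity)
  obtain ⟨w2, hw2, hw2'⟩ := exists_mem_of_pos (μ := μ) (by rw [hcap', hcast]; positivity)
  simp only [mem_ofPred_eq] at hw1' hw2'
  rw [area_antisymm p w2 r] at hw2'
  have hcl : ∀ p r : E2, IsClosed (C ∩ {w | 0 ≤ area p w r}) := fun p r =>
    hCc.inter (isClosed_le continuous_const (area_continuous_mid p r))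
  have hconv : ∀ p r : E2, Convex ℝ (C ∩ {w | 0 ≤ area p w r}) := fun p r =>
    hG.convex.inter (convex_nonneg (area_combo p r))
  have hun : (C ∩ {w | 0 ≤ area p w r}) ∪ (C ∩ {w | 0 ≤ area r w p}) = C := by
    rw [← inter_union_distrib_left, inter_eq_left]
    intro w _
    rcases le_total 0 (area p w r) with h | h
    · exact Or.inl h
    · right; rw [mem_ofPred_eq, area_antisymm p w r]; linarith
  have hInt : (C ∩ {w | 0 ≤ area p w r}) ∩ (C ∩ {w | 0 ≤ area r w p}) ⊆
      C ∩ {w | area p w r = 0} := by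
    rintro w ⟨⟨hw, h1⟩, -, h2⟩
    simp only [mem_ofPred_eq, area_antisymm p w r] at h1 h2
    exact ⟨hw, le_antisymm (by linarith) h1⟩
  have hσ0 : σ ((C ∩ {w | 0 ≤ area p w r}) ∩ (C ∩ {w | 0 ≤ area r w p})) = 0 := by
    have hnull : σ (interior C ∪ {p, r}) = 0 :=
      measure_union_null hG.interior_null (Set.Countable.measure_zero (by simp) _)
    refine measure_mono_null (fun w hw => ?_) hnull
    obtain ⟨hwC, hw0⟩ := hInt hw
    by_cases hwi : w ∈ interior C
    · exact Or.inl hwi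
    · exact Or.inr (chord_frontier hG.convex hCc hpF hrF ⟨subset_closure hwC, hwi⟩ hc hw1 hw2
        hw1' (by linarith) hw0)
  have hσsum := measureReal_union₀ (μ := σ) (hcl r p).measurableSet.nullMeasurableSet hσ0
  rw [hun, hG.boundary_mass] at hσsum
  -- each piece contains the arc on its side of the chord
  have harc := arcMass_sub (σ := σ) hpar h0 hxy h1
  have hge1 : k * b ≤ σ.real (C ∩ {w | 0 ≤ area p w r}) := by
    rw [← hF, ← harc]
    refine measureReal_mono ?_
    rintro _ ⟨t, ht, rfl⟩
    exact ⟨hCc.frontier_subset (hpar.mem_frontier (h0.trans ht.1) (ht.2.trans h1)),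
      hpar.ccw x t y h0 ht.1 ht.2 h1⟩
  have hge2 : q * b - k * b ≤ σ.real (C ∩ {w | 0 ≤ area r w p}) := by
    have hsub : frontier C ⊆ γ '' Icc x y ∪ (C ∩ {w | 0 ≤ area r w p}) := by
      intro w hw
      have hwC := hCc.frontier_subset hw
      rw [← hpar.image] at hw
      obtain ⟨t, ht, rfl⟩ := hw
      rcases le_total t x with h | h
      · right
        refine ⟨hwC, ?_⟩
        have := hpar.ccw t x y ht.1 h hxy h1
        simp only [mem_ofPred_eq, hp, hr]
        unfold area at this ⊢
        linarith
      · rcases le_total t y with h' | h'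
        · exact Or.inl ⟨t, ⟨h, h'⟩, rfl⟩
        · right
          refine ⟨hwC, ?_⟩
          have := hpar.ccw x y t h0 hxy h' ht.2
          simp only [mem_ofPred_eq, hp, hr]
          unfold area at this ⊢
          linarith
    have u1 := measureReal_mono (μ := σ) hsub
    have u2 := measureReal_union_le (μ := σ) (γ '' Icc x y) (C ∩ {w | 0 ≤ area r w p})
    rw [hG.frontier_mass] at u1
    linarith
  refine ⟨C ∩ {w | 0 ≤ area p w r}, C ∩ {w | 0 ≤ area r w p},
    hG.sub (hcl p r) inter_subset_left (hconv p r) ?_ ?_,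
    hG.sub (hcl r p) inter_subset_left (hconv r p) ?_ ?_, hun, ?_⟩
  · rw [half_eq hμ hne, hcap]
  · linarith
  · rw [half_eq hμ (Ne.symm hne), hcap']
  · rw [hcast]; linarith
  · exact measure_mono_null (hInt.trans inter_subset_right)
      (area_null Measure.AbsolutelyContinuous.rfl hne)

end Measures

/-! ### Division along an inscribed triangle -/

/-- A combination with unequal weights of the edge functionals of a nondegenerate triangle is a
nonconstant affine function. -/
lemma edges_null {ν : Measure E2} (hν : ν ≪ volume) {p r s : E2} (hΔ : area p r s ≠ 0)
    (α β δ : ℝ) (h : α ≠ β ∨ β ≠ δ) :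
    ν {w | α * -area p w r + β * -area r w s + δ * -area s w p = 0} = 0 := by
  refine affine_null hν
    (-(α * (r 1 - p 1) + β * (s 1 - r 1) + δ * (p 1 - s 1)))
    (α * (r 0 - p 0) + β * (s 0 - r 0) + δ * (p 0 - s 0))
    (α * (p 0 * (r 1 - p 1) - p 1 * (r 0 - p 0)) + β * (r 0 * (s 1 - r 1) - r 1 * (s 0 - r 0))
      + δ * (s 0 * (p 1 - s 1) - s 1 * (p 0 - s 0)))
    (fun w => by unfold area; ring) ?_
  by_contra! hcon
  obtain ⟨hA, hB⟩ := hcon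
  have h1 : (α - δ) * area p r s = 0 := by
    unfold area
    linear_combination (s 1 - r 1) * hB + (s 0 - r 0) * hA
  have h2 : (β - δ) * area p r s = 0 := by
    unfold area
    linear_combination -(r 1 - p 1) * hB - (r 0 - p 0) * hA
  have h1' := (mul_eq_zero.1 h1).resolve_right hΔ
  have h2' := (mul_eq_zero.1 h2).resolve_right hΔ
  rcases h with h | h
  · exact h (by linarith)
  · exact h (by linarith)

/-- Two edges of a nondegenerate triangle meet only in their common vertex. -/
lemma eq_vertex {p r s w : E2} (hΔ : area p r s ≠ 0) (h1 : area p w r = 0)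
    (h2 : area r w s = 0) : w = r := by
  have e0 : (w 0 - r 0) * area p r s = 0 := by
    unfold area at *
    linear_combination (r 0 - p 0) * h2 - (s 0 - r 0) * h1
  have e1 : (w 1 - r 1) * area p r s = 0 := by
    unfold area at *
    linear_combination (r 1 - p 1) * h2 - (s 1 - r 1) * h1
  have e0' := (mul_eq_zero.1 e0).resolve_right hΔ
  have e1' := (mul_eq_zero.1 e1).resolve_right hΔ
  exact ext2 (by linarith) (by linarith)

lemma cell_convex {C : Set E2} (hC : Convex ℝ C) {f g h : E2 → ℝ}
    (hf : ∀ x y : E2, ∀ s t : ℝ, s + t = 1 → f (s • x + t • y) = s * f x + t * f y)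
    (hg : ∀ x y : E2, ∀ s t : ℝ, s + t = 1 → g (s • x + t • y) = s * g x + t * g y)
    (hh : ∀ x y : E2, ∀ s t : ℝ, s + t = 1 → h (s • x + t • y) = s * h x + t * h y) :
    Convex ℝ (cell C f g h) := by
  have e : cell C f g h = C ∩ ({w | 0 ≤ g w - f w} ∩ {w | 0 ≤ h w - f w}) := by
    ext w
    simp only [cell, mem_inter_iff, mem_ofPred_eq, sub_nonneg]
  rw [e]
  refine hC.inter ((convex_nonneg fun x y s t hst => ?_).inter
    (convex_nonneg fun x y s t hst => ?_))
  · rw [hf x y s t hst, hg x y s t hst]; ring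
  · rw [hf x y s t hst, hh x y s t hst]; ring

lemma cell_closed {C : Set E2} (hC : IsClosed C) {f g h : E2 → ℝ} (hf : Continuous f)
    (hg : Continuous g) (hh : Continuous h) : IsClosed (cell C f g h) :=
  hC.inter ((isClosed_le hf hg).inter (isClosed_le hf hh))

/-- The cells of three functions cover `C`. -/
lemma cell_cover (C : Set E2) (f g h : E2 → ℝ) :
    cell C f g h ∪ cell C g h f ∪ cell C h f g = C := by
  ext w
  simp only [cell, mem_union, mem_ofPred_eq]
  constructor
  · rintro ((h | h) | h) <;> exact h.1
  · intro hw
    simp only [hw, true_and]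
    grind

section Triangle

variable {μ σ : Measure E2} {C : Set E2} {c : E2} {γ : ℝ → E2}

/-- The open caps cut off by the three sides of an inscribed triangle are pairwise disjoint. -/
lemma triangle_caps (hC : IsCompact C) (hconv : Convex ℝ C) (hc : c ∈ interior C)
    (hpar : IsBoundaryParam C c γ) {x y : ℝ} (h0 : 0 < x) (hxy : x < y) (h1 : y < 1)
    {w : E2} (hw : w ∈ C) :
    ¬(0 < area (γ 0) w (γ x) ∧ 0 < area (γ x) w (γ y)) ∧
    ¬(0 < area (γ x) w (γ y) ∧ 0 < area (γ y) w (γ 0)) ∧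
    ¬(0 < area (γ y) w (γ 0) ∧ 0 < area (γ 0) w (γ x)) := by
  obtain ⟨a1, a2, a3⟩ := hpar.ang 0 x y le_rfl h0 hxy h1
  have hor := hpar.ccw 0 x y le_rfl h0.le hxy.le h1.le
  have fp := hpar.mem_frontier le_rfl zero_le_one
  have fr := hpar.mem_frontier h0.le (hxy.trans h1).le
  have fs := hpar.mem_frontier (h0.trans hxy).le h1.le
  have hf := hC.isClosed.frontier_subset
  refine ⟨caps_disjoint hconv (hf fp) fr (hf fs) hc hor a1 hw,
    caps_disjoint hconv (hf fr) fs (hf fp) hc ?_ a2 hw,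
    caps_disjoint hconv (hf fs) fp (hf fr) hc ?_ a3 hw⟩
  · unfold area at hor ⊢; linarith
  · unfold area at hor ⊢; linarith

/-- The boundary arcs of an inscribed triangle see one side from outside, the others from
inside. -/
lemma triangle_arcs (hpar : IsBoundaryParam C c γ) {x y : ℝ} (h0 : 0 ≤ x) (hxy : x ≤ y)
    (h1 : y ≤ 1) {t : ℝ} (ht0 : 0 ≤ t) (ht1 : t ≤ 1) :
    (t ≤ x → 0 ≤ area (γ 0) (γ t) (γ x)) ∧
    (x ≤ t → area (γ 0) (γ t) (γ x) ≤ 0) ∧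
    (x ≤ t → t ≤ y → 0 ≤ area (γ x) (γ t) (γ y)) ∧
    (t ≤ x → area (γ x) (γ t) (γ y) ≤ 0) ∧
    (y ≤ t → area (γ x) (γ t) (γ y) ≤ 0) ∧
    (t ≤ y → area (γ y) (γ t) (γ 0) ≤ 0) ∧
    (y ≤ t → 0 ≤ area (γ y) (γ t) (γ 0)) := by
  refine ⟨fun h => hpar.ccw 0 t x le_rfl ht0 h (hxy.trans h1), fun h => ?_,
    fun h h' => hpar.ccw x t y h0 h h' h1, fun h => ?_, fun h => ?_, fun h => ?_, fun h => ?_⟩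
  · have := hpar.ccw 0 x t le_rfl h0 h ht1
    unfold area at this ⊢; linarith
  · have := hpar.ccw t x y ht0 h hxy h1
    unfold area at this ⊢; linarith
  · have := hpar.ccw x y t h0 hxy h ht1
    unfold area at this ⊢; linarith
  · have := hpar.ccw 0 t y le_rfl ht0 h h1
    unfold area at this ⊢; linarith
  · rw [hpar.closed]
    exact hpar.ccw y t 1 (h0.trans hxy) h ht1 le_rfl

lemma measurableSet_cap (hC : IsCompact C) (p q : E2) :
    MeasurableSet (C ∩ {w | 0 < area p w q}) :=
  hC.isClosed.measurableSet.inter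
    (isOpen_lt continuous_const (area_continuous_mid p q)).measurableSet

lemma caps_sum_le [IsFiniteMeasure μ] (hC : IsCompact C) (hconv : Convex ℝ C)
    (hc : c ∈ interior C) (hpar : IsBoundaryParam C c γ) {x y : ℝ} (h0 : 0 < x) (hxy : x < y)
    (h1 : y < 1) :
    μ.real (C ∩ {w | 0 < area (γ 0) w (γ x)}) + μ.real (C ∩ {w | 0 < area (γ x) w (γ y)}) +
      μ.real (C ∩ {w | 0 < area (γ y) w (γ 0)}) ≤ μ.real C := by
  have hd := fun w (hw : w ∈ C) => triangle_caps hC hconv hc hpar h0 hxy h1 hw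
  rw [← measureReal_union (Set.disjoint_left.2 fun w h h' => (hd w h.1).1 ⟨h.2, h'.2⟩)
    (measurableSet_cap hC _ _), ← measureReal_union (Set.disjoint_left.2 fun w h h' => h.elim
      (fun h => (hd w h.1).2.2 ⟨h'.2, h.2⟩) (fun h => (hd w h.1).2.1 ⟨h.2, h'.2⟩))
    (measurableSet_cap hC _ _)]
  refine measureReal_mono ?_
  rintro w ((h | h) | h) <;> exact h.1

variable {a b : ℝ} {q : ℕ}

/-- An inscribed triangle that cuts the boundary in the ratios `k1 : k2 : k3` and whose caps are
too small in interior mass: dividing `C` according to which of three suitably weighted signed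
distances to the sides is smallest gives three good cells. The cell of a side contains the arc
beyond it, because on that arc only the functional of this side is nonpositive, up to the
vertices. -/
lemma triangle_cells [IsFiniteMeasure μ] [IsFiniteMeasure σ] [NullSingletonClass σ]
    (hμ : μ ≪ volume) (hG : Good μ σ a b C q) (hc : c ∈ interior C)
    (hpar : IsBoundaryParam C c γ) {x y : ℝ} (h0 : 0 < x) (hxy : x < y) (h1 : y < 1)
    {k1 k2 k3 : ℕ} (hk : k1 + k2 + k3 = q)
    (hpr : γ 0 ≠ γ x) (hrs : γ x ≠ γ y) (hsp : γ y ≠ γ 0)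
    (hx : arcMass σ γ x = k1 * b) (hy : arcMass σ γ y - arcMass σ γ x = k2 * b)
    (hm1 : μ.real (C ∩ {w | 0 < area (γ 0) w (γ x)}) < k1 * a)
    (hm2 : μ.real (C ∩ {w | 0 < area (γ x) w (γ y)}) < k2 * a)
    (hm3 : μ.real (C ∩ {w | 0 < area (γ y) w (γ 0)}) < k3 * a) :
    ∃ V1 V2 V3, Good μ σ a b V1 k1 ∧ Good μ σ a b V2 k2 ∧ Good μ σ a b V3 k3 ∧
      V1 ∪ V2 ∪ V3 = C ∧ volume (V1 ∩ V2) = 0 ∧ volume (V1 ∩ V3) = 0 ∧ volume (V2 ∩ V3) = 0 := by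
  have hCc := hG.compact.isClosed
  have hkq : (q : ℝ) = k1 + k2 + k3 := by rw [← hk]; push_cast; ring
  have harcs := fun t h h' => triangle_arcs hpar h0.le hxy.le h1.le (t := t) h h'
  have hcaps := fun w (hw : w ∈ C) => triangle_caps hG.compact hG.convex hc hpar h0 hxy h1 hw
  have arc1 := arcMass_sub (σ := σ) hpar le_rfl h0.le (hxy.trans h1).le
  have arc2 := arcMass_sub (σ := σ) hpar h0.le hxy.le h1.le
  have arc3 := arcMass_sub (σ := σ) hpar (h0.trans hxy).le h1.le le_rfl
  rw [arcMass_zero, hx] at arc1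
  rw [hy] at arc2
  rw [hG.arcMass_one hpar] at arc3
  have hF : frontier C ⊆ γ '' Icc 0 1 := hpar.image.ge
  have hF' : ∀ t, 0 ≤ t → t ≤ 1 → γ t ∈ C := fun t h h' =>
    hCc.frontier_subset (hpar.mem_frontier h h')
  set p := γ 0
  set r := γ x
  set s := γ y
  -- some point of `C` lies strictly inside the triangle
  have hΔ : 0 < area p r s := by
    have hpos : 0 < μ.real (C ∩ {w | area p w r < 0 ∧ area r w s < 0 ∧ area s w p < 0}) := by
      set Z := {w | area p w r = 0} ∪ ({w | area r w s = 0} ∪ {w | area s w p = 0})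
      have hZ : μ.real Z = 0 := by
        rw [measureReal_def, measure_union_null (area_null hμ hpr)
          (measure_union_null (area_null hμ hrs) (area_null hμ hsp))]
        rfl
      have u0 : μ.real C ≤ μ.real (((((C ∩ {w | area p w r < 0 ∧ area r w s < 0 ∧ area s w p < 0})
          ∪ (C ∩ {w | 0 < area p w r})) ∪ (C ∩ {w | 0 < area r w s})) ∪
          (C ∩ {w | 0 < area s w p})) ∪ Z) := by
        refine measureReal_mono fun w hw => ?_
        simp only [Z, mem_union, mem_inter_iff, mem_ofPred_eq, hw, true_and]
        grind
      refine lt_of_not_ge fun hle => ?_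
      have u1 := u0.trans (measureReal_union_le _ _)
      have u2 := u1.trans (add_le_add_left (measureReal_union_le _ _) _)
      have u3 := u2.trans (add_le_add_left (add_le_add_left (measureReal_union_le _ _) _) _)
      have u4 := u3.trans (add_le_add_left (add_le_add_left (add_le_add_left
        (measureReal_union_le _ _) _) _) _)
      rw [hG.mass, hkq, hZ] at u4
      linarith
    obtain ⟨w, -, w1, w2, w3⟩ := exists_mem_of_pos hpos
    have := area_sum p r s w
    linarith
  have e1 : ∀ p r : E2, {w | -area p w r < 0} = {w | 0 < area p w r} := fun p r => by
    ext w; simp only [mem_ofPred_eq, neg_lt_zero]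
  obtain ⟨α, β, hα, hβ, m1, m2, m3⟩ := exists_weights (μ := μ) hG.compact
    (d1 := fun w => -area p w r) (d2 := fun w => -area r w s) (d3 := fun w => -area s w p)
    (area_continuous_mid p r).neg (area_continuous_mid r s).neg (area_continuous_mid s p).neg
    (edges_null hμ hΔ.ne') (fun w hw h => (hcaps w hw).1 ⟨by linarith [h.1], by linarith [h.2]⟩)
    (W1 := k1 * a) (W2 := k2 * a) (W3 := k3 * a) (by rw [hG.mass, hkq]; ring)
    (by rwa [e1]) (by rwa [e1]) (by rwa [e1])
  set f1 : E2 → ℝ := fun w => α * -area p w r with hf1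
  set f2 : E2 → ℝ := fun w => β * -area r w s with hf2
  set f3 : E2 → ℝ := fun w => -area s w p with hf3
  have c1 : Continuous f1 := continuous_const.mul (area_continuous_mid p r).neg
  have c2 : Continuous f2 := continuous_const.mul (area_continuous_mid r s).neg
  have c3 : Continuous f3 := (area_continuous_mid s p).neg
  have l1 : ∀ x y : E2, ∀ s t : ℝ, s + t = 1 → f1 (s • x + t • y) = s * f1 x + t * f1 y :=
    fun x y s t h => by simp only [hf1, area_combo _ _ x y s t h]; ring
  have l2 : ∀ x y : E2, ∀ s t : ℝ, s + t = 1 → f2 (s • x + t • y) = s * f2 x + t * f2 y :=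
    fun x y s t h => by simp only [hf2, area_combo _ _ x y s t h]; ring
  have l3 : ∀ x y : E2, ∀ s t : ℝ, s + t = 1 → f3 (s • x + t • y) = s * f3 x + t * f3 y :=
    fun x y s t h => by simp only [hf3, area_combo _ _ x y s t h]; ring
  have v12 : volume {w | f1 w = f2 w} = 0 := by
    refine measure_mono_null (fun w hw => ?_) (edges_null Measure.AbsolutelyContinuous.rfl hΔ.ne'
      α (-β) 0 (Or.inl (by linarith)))
    simp only [hf1, hf2, mem_ofPred_eq] at hw ⊢
    linarith
  have v13 : volume {w | f1 w = f3 w} = 0 := by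
    refine measure_mono_null (fun w hw => ?_) (edges_null Measure.AbsolutelyContinuous.rfl hΔ.ne'
      α 0 (-1) (Or.inl (by linarith)))
    simp only [hf1, hf3, mem_ofPred_eq] at hw ⊢
    linarith
  have v23 : volume {w | f2 w = f3 w} = 0 := by
    refine measure_mono_null (fun w hw => ?_) (edges_null Measure.AbsolutelyContinuous.rfl hΔ.ne'
      0 β (-1) (Or.inl (by linarith)))
    simp only [hf2, hf3, mem_ofPred_eq] at hw ⊢
    linarith
  have i12 : ∀ w, w ∈ cell C f1 f2 f3 → w ∈ cell C f2 f3 f1 → f1 w = f2 w := fun w h h' =>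
    le_antisymm h.2.1 h'.2.2
  have i13 : ∀ w, w ∈ cell C f1 f2 f3 → w ∈ cell C f3 f1 f2 → f1 w = f3 w := fun w h h' =>
    le_antisymm h.2.2 h'.2.1
  have i23 : ∀ w, w ∈ cell C f2 f3 f1 → w ∈ cell C f3 f1 f2 → f2 w = f3 w := fun w hw hv =>
    le_antisymm hw.2.1 hv.2.2
  -- signs on the three boundary arcs
  have s1 : ∀ t ∈ Icc 0 x, f1 (γ t) ≤ 0 ∧ 0 ≤ f2 (γ t) ∧ 0 ≤ f3 (γ t) := by
    rintro t ⟨t0, t1⟩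
    obtain ⟨g1, -, -, g2, -, g3, -⟩ := harcs t t0 (by linarith)
    refine ⟨mul_nonpos_of_nonneg_of_nonpos hα.le (by linarith [g1 t1]),
      mul_nonneg hβ.le (by linarith [g2 t1]), ?_⟩
    have := g3 (by linarith)
    simp only [hf3]; linarith
  have s2 : ∀ t ∈ Icc x y, f2 (γ t) ≤ 0 ∧ 0 ≤ f3 (γ t) ∧ 0 ≤ f1 (γ t) := by
    rintro t ⟨t0, t1⟩
    obtain ⟨-, g1, g2, -, -, g3, -⟩ := harcs t (by linarith) (by linarith)
    refine ⟨mul_nonpos_of_nonneg_of_nonpos hβ.le (by linarith [g2 t0 t1]), ?_,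
      mul_nonneg hα.le (by linarith [g1 t0])⟩
    have := g3 t1
    simp only [hf3]; linarith
  have s3 : ∀ t ∈ Icc y 1, f3 (γ t) ≤ 0 ∧ 0 ≤ f1 (γ t) ∧ 0 ≤ f2 (γ t) := by
    rintro t ⟨t0, t1⟩
    obtain ⟨-, g1, -, -, g2, -, g3⟩ := harcs t (by linarith) (by linarith)
    refine ⟨?_, mul_nonneg hα.le (by linarith [g1 (by linarith)]),
      mul_nonneg hβ.le (by linarith [g2 t0])⟩
    have := g3 t0
    simp only [hf3]; linarith
  have smin : ∀ w ∈ frontier C, (f1 w ≤ 0 ∧ 0 ≤ f2 w ∧ 0 ≤ f3 w) ∨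
      (f2 w ≤ 0 ∧ 0 ≤ f3 w ∧ 0 ≤ f1 w) ∨ (f3 w ≤ 0 ∧ 0 ≤ f1 w ∧ 0 ≤ f2 w) := by
    intro w hw
    obtain ⟨t, ht, rfl⟩ := hF hw
    rcases le_total t x with h | h
    · exact Or.inl (s1 t ⟨ht.1, h⟩)
    rcases le_total t y with h' | h'
    · exact Or.inr (Or.inl (s2 t ⟨h, h'⟩))
    · exact Or.inr (Or.inr (s3 t ⟨h', ht.2⟩))
  have z1 : ∀ w, f1 w = 0 → area p w r = 0 := fun w h => by
    have := (mul_eq_zero.1 h).resolve_left hα.ne'; linarith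
  have z2 : ∀ w, f2 w = 0 → area r w s = 0 := fun w h => by
    have := (mul_eq_zero.1 h).resolve_left hβ.ne'; linarith
  have z3 : ∀ w, f3 w = 0 → area s w p = 0 := fun w h => by
    simp only [hf3] at h; linarith
  have hΔ' : area r s p ≠ 0 := by
    have := hΔ.ne'; unfold area at this ⊢; intro h; apply this; linarith
  have hΔ'' : area s p r ≠ 0 := by
    have := hΔ.ne'; unfold area at this ⊢; intro h; apply this; linarith
  -- two cells share at most one vertex of the triangle on the boundary of `C`
  have hnull : ∀ v : E2, σ (interior C ∪ {v}) = 0 := fun v =>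
    measure_union_null hG.interior_null (measure_singleton v)
  have hsplit : ∀ D : Set E2, ∀ v : E2, D ⊆ C → (∀ w ∈ frontier C, w ∈ D → w = v) →
      σ D = 0 := by
    intro D v hD h
    refine measure_mono_null (fun w hw => ?_) (hnull v)
    by_cases hwi : w ∈ interior C
    · exact Or.inl hwi
    · exact Or.inr (h w ⟨subset_closure (hD hw), hwi⟩ hw)
  have σ12 : σ (cell C f1 f2 f3 ∩ cell C f2 f3 f1) = 0 := by
    refine hsplit _ r (fun w hw => hw.1.1) fun w hw hw' => ?_
    have e := i12 w hw'.1 hw'.2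
    have e' := hw'.1.2.2
    have : f1 w = 0 := by rcases smin w hw with h | h | h <;> linarith
    exact eq_vertex hΔ.ne' (z1 w this) (z2 w (e ▸ this))
  have σ13 : σ (cell C f1 f2 f3 ∩ cell C f3 f1 f2) = 0 := by
    refine hsplit _ p (fun w hw => hw.1.1) fun w hw hw' => ?_
    have e := i13 w hw'.1 hw'.2
    have e' := hw'.1.2.1
    have : f1 w = 0 := by rcases smin w hw with h | h | h <;> linarith
    exact eq_vertex hΔ'' (z3 w (e ▸ this)) (z1 w this)
  have σ23 : σ (cell C f2 f3 f1 ∩ cell C f3 f1 f2) = 0 := by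
    refine hsplit _ s (fun w hw => hw.1.1) fun w hw hw' => ?_
    have e := i23 w hw'.1 hw'.2
    have e' := hw'.1.2.2
    have : f2 w = 0 := by rcases smin w hw with h | h | h <;> linarith
    exact eq_vertex hΔ' (z2 w this) (z3 w (e ▸ this))
  have cl1 := cell_closed hCc c1 c2 c3
  have cl2 := cell_closed hCc c2 c3 c1
  have cl3 := cell_closed hCc c3 c1 c2
  have b1 : k1 * b ≤ σ.real (cell C f1 f2 f3) := by
    rw [← sub_zero ((k1 : ℝ) * b), ← arc1]
    refine measureReal_mono ?_
    rintro _ ⟨t, ht, rfl⟩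
    have := s1 t ht
    exact ⟨hF' t ht.1 (by linarith [ht.2]), by linarith, by linarith⟩
  have b2 : k2 * b ≤ σ.real (cell C f2 f3 f1) := by
    rw [← arc2]
    refine measureReal_mono ?_
    rintro _ ⟨t, ht, rfl⟩
    have := s2 t ht
    exact ⟨hF' t (by linarith [ht.1]) (by linarith [ht.2]), by linarith, by linarith⟩
  have b3 : k3 * b ≤ σ.real (cell C f3 f1 f2) := by
    have : (k3 : ℝ) * b = q * b - arcMass σ γ y := by rw [hkq]; linarith
    rw [this, ← arc3]
    refine measureReal_mono ?_
    rintro _ ⟨t, ht, rfl⟩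
    have := s3 t ht
    exact ⟨hF' t (by linarith [ht.1]) ht.2, by linarith, by linarith⟩
  have hsum : σ.real (cell C f1 f2 f3) + σ.real (cell C f2 f3 f1) + σ.real (cell C f3 f1 f2)
      = q * b := by
    rw [← hG.boundary_mass, ← measureReal_union₀ cl2.measurableSet.nullMeasurableSet σ12,
      ← measureReal_union₀ cl3.measurableSet.nullMeasurableSet, cell_cover]
    rw [AEDisjoint, union_inter_distrib_right]
    exact measure_union_null σ13 σ23
  rw [hkq] at hsum
  refine ⟨cell C f1 f2 f3, cell C f2 f3 f1, cell C f3 f1 f2,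
    hG.sub cl1 (fun w h => h.1) (cell_convex hG.convex l1 l2 l3) m1 (by linarith),
    hG.sub cl2 (fun w h => h.1) (cell_convex hG.convex l2 l3 l1) m2 (by linarith),
    hG.sub cl3 (fun w h => h.1) (cell_convex hG.convex l3 l1 l2) m3 (by linarith),
    cell_cover C f1 f2 f3,
    measure_mono_null (fun w h => i12 w h.1 h.2) v12,
    measure_mono_null (fun w h => i13 w h.1 h.2) v13,
    measure_mono_null (fun w h => i23 w h.1 h.2) v23⟩

end Triangle

/-! ### The induction -/

/-- `C` can be divided into `k` closed convex parts of `μ`-mass `a` and `σ`-mass `b`. -/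
def Divisible (μ σ : Measure E2) (a b : ℝ) (C : Set E2) (k : ℕ) : Prop :=
  ∃ V : Fin k → Set E2, (∀ j, IsClosed (V j)) ∧ (∀ j, Convex ℝ (V j)) ∧ (⋃ j, V j) = C ∧
    (∀ j l, j ≠ l → volume (V j ∩ V l) = 0) ∧ (∀ j, μ.real (V j) = a) ∧ ∀ j, σ.real (V j) = b

variable {μ σ : Measure E2} {a b : ℝ}

lemma Divisible.union {C1 C2 : Set E2} {k1 k2 : ℕ} (h1 : Divisible μ σ a b C1 k1)
    (h2 : Divisible μ σ a b C2 k2) (h : volume (C1 ∩ C2) = 0) :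
    Divisible μ σ a b (C1 ∪ C2) (k1 + k2) := by
  obtain ⟨V, c1, v1, u1, n1, m1, b1⟩ := h1
  obtain ⟨W, c2, v2, u2, n2, m2, b2⟩ := h2
  have hV : ∀ j, V j ⊆ C1 := fun j => u1 ▸ subset_iUnion V j
  have hW : ∀ j, W j ⊆ C2 := fun j => u2 ▸ subset_iUnion W j
  refine ⟨Fin.append V W, fun j => ?_, fun j => ?_, ?_, fun j l => ?_, fun j => ?_, fun j => ?_⟩
  · refine Fin.addCases (fun i => ?_) (fun i => ?_) j
    · rw [Fin.append_left]; exact c1 i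
    · rw [Fin.append_right]; exact c2 i
  · refine Fin.addCases (fun i => ?_) (fun i => ?_) j
    · rw [Fin.append_left]; exact v1 i
    · rw [Fin.append_right]; exact v2 i
  · ext w
    rw [← u1, ← u2]
    simp only [mem_iUnion, mem_union]
    constructor
    · rintro ⟨j, hj⟩
      revert hj
      refine Fin.addCases (fun i => ?_) (fun i => ?_) j
      · rw [Fin.append_left]; exact fun hj => Or.inl ⟨i, hj⟩
      · rw [Fin.append_right]; exact fun hj => Or.inr ⟨i, hj⟩
    · rintro (⟨i, hi⟩ | ⟨i, hi⟩)
      · exact ⟨Fin.castAdd k2 i, by rwa [Fin.append_left]⟩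
      · exact ⟨Fin.natAdd k1 i, by rwa [Fin.append_right]⟩
  · refine Fin.addCases (fun i => ?_) (fun i => ?_) j <;>
      refine Fin.addCases (fun i' => ?_) (fun i' => ?_) l <;>
      simp only [Fin.append_left, Fin.append_right] <;> intro hne
    · exact n1 i i' fun e => hne (e ▸ rfl)
    · exact measure_mono_null (inter_subset_inter (hV i) (hW i')) h
    · rw [inter_comm]
      exact measure_mono_null (inter_subset_inter (hV i') (hW i)) h
    · exact n2 i i' fun e => hne (e ▸ rfl)
  · refine Fin.addCases (fun i => ?_) (fun i => ?_) j
    · rw [Fin.append_left]; exact m1 i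
    · rw [Fin.append_right]; exact m2 i
  · refine Fin.addCases (fun i => ?_) (fun i => ?_) j
    · rw [Fin.append_left]; exact b1 i
    · rw [Fin.append_right]; exact b2 i

lemma Good.interior_nonempty (hμ : μ ≪ volume) {C : Set E2} {q : ℕ} (hG : Good μ σ a b C q)
    (ha : 0 < a) (hq : 1 ≤ q) : (interior C).Nonempty := by
  by_contra! h
  have hsub : C ⊆ frontier C := by
    rw [frontier, h, Set.sdiff_empty]; exact subset_closure
  have h0 : μ C = 0 := hμ (measure_mono_null hsub (hG.convex.addHaar_frontier volume))
  have h1 := hG.mass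
  rw [measureReal_def, h0, ENNReal.toReal_zero] at h1
  have : (0 : ℝ) < q := by exact_mod_cast hq
  have : 0 < q * a := by positivity
  linarith

variable [IsFiniteMeasure μ] [IsFiniteMeasure σ] [NullSingletonClass σ]

/-- A good set of size at least two splits into two or three good sets of smaller sizes. -/
lemma Good.split (hμ : μ ≪ volume) {C : Set E2} {q : ℕ} (hG : Good μ σ a b C q)
    (ha : 0 < a) (hb : 0 < b) (hq : 2 ≤ q) :
    (∃ k C1 C2, 1 ≤ k ∧ k < q ∧ Good μ σ a b C1 k ∧ Good μ σ a b C2 (q - k) ∧ C1 ∪ C2 = C ∧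
      volume (C1 ∩ C2) = 0) ∨
    ∃ k V1 V2 V3, 1 ≤ k ∧ k + 2 ≤ q ∧ Good μ σ a b V1 1 ∧ Good μ σ a b V2 k ∧
      Good μ σ a b V3 (q - 1 - k) ∧ V1 ∪ V2 ∪ V3 = C ∧
      volume (V1 ∩ V2) = 0 ∧ volume (V1 ∩ V3) = 0 ∧ volume (V2 ∩ V3) = 0 := by
  obtain ⟨c, hc⟩ := hG.interior_nonempty hμ ha (by omega)
  obtain ⟨γ, g1, g2, g3, g4, g5, g6⟩ := exists_param hG.compact hG.convex hc
  have hpar : IsBoundaryParam C c γ := ⟨g1, g2, g3, g4, g5, g6⟩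
  set F := arcMass σ γ with hF
  have hFc : ContinuousOn F (Icc 0 1) := arcMass_continuousOn hpar
  have hF0 : F 0 = 0 := arcMass_zero
  have hF1 : F 1 = q * b := hG.arcMass_one hpar
  have hFm : MonotoneOn F (Icc 0 1) := fun x hx y hy hxy => arcMass_mono hpar hx.1 hxy hy.2
  let f : ℝ × ℝ → ℝ := fun z => μ.real (C ∩ {w | 0 < area (γ z.1) w (γ z.2)})
  by_cases hcut : ∃ k, 1 ≤ k ∧ k < q ∧ ∃ z ∈ chords F (k * b), f z = k * a
  · obtain ⟨k, hk, hkq, ⟨x, y⟩, hz, hfz⟩ := hcut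
    obtain ⟨C1, C2, h⟩ := cut hμ hG hc hpar ha hb hk hkq hz hfz
    exact Or.inl ⟨k, C1, C2, hk, hkq, h⟩
  right
  -- without an exact cut, the sign of the mass excess depends on the boundary mass only
  have hdich : ∀ k : ℕ, 1 ≤ k → k < q → (∀ z ∈ chords F (k * b), f z < k * a) ∨
      (∀ z ∈ chords F (k * b), k * a < f z) := by
    intro k hk hkq
    have hcont : ContinuousOn (fun z => f z - k * a) (chords F (k * b)) := by
      refine ContinuousOn.sub (fun z hz => ContinuousAt.continuousWithinAt ?_) continuousOn_const
      refine continuousAt_measure hG.compact.isClosed.measurableSet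
        (fun z => area_continuous_mid _ _) (fun w => ?_)
        (area_null hμ (chord_ne hG hpar hb hk hkq hz).2)
      exact (area_continuous.comp (f := fun z : ℝ × ℝ => (γ z.1, w, γ z.2)) (by fun_prop)).continuousAt
    rcases chords_sign hFc hFm (by positivity) hcont
      (fun z hz h => hcut ⟨k, hk, hkq, z, hz, by linarith⟩) with h | h
    · exact Or.inl fun z hz => by linarith [h z hz]
    · exact Or.inr fun z hz => by linarith [h z hz]
  obtain ⟨k, hk, hkq, hs1, hs2⟩ := exists_triple hq
    (fun k => ∀ z ∈ chords F (k * b), k * a < f z) (fun k hk hkq => by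
      have hcast : ((q - k : ℕ) : ℝ) = (q : ℝ) - k := by rw [Nat.cast_sub (by omega)]
      have hkR : (k : ℝ) < q := by exact_mod_cast hkq
      obtain ⟨y, hy, hFy⟩ := intermediate_value_Icc zero_le_one hFc
        (show ((q : ℝ) - k) * b ∈ Icc (F 0) (F 1) by
          rw [hF0, hF1]
          exact ⟨mul_nonneg (by linarith) hb.le,
            mul_le_mul_of_nonneg_right (by linarith [Nat.cast_nonneg (α := ℝ) k]) hb.le⟩)
      have z1 : (0, y) ∈ chords F ((q - k : ℕ) * b) :=
        ⟨le_rfl, hy.1, hy.2, by simp only; rw [hcast, hFy, hF0, sub_zero]⟩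
      have z2 : (y, 1) ∈ chords F (k * b) :=
        ⟨hy.1, hy.2, le_rfl, by simp only; rw [hFy, hF1]; ring⟩
      have hadd : f (0, y) + f (y, 1) = q * a := by
        have := cap_add hμ (chord_ne hG hpar hb (k := q - k) (by omega) (by omega) z1).2 C
        rw [hG.mass] at this
        simp only [f, ← hpar.closed]
        exact this
      constructor
      · intro h1 h2
        have := h1 _ z1
        have := h2 _ z2
        rw [hcast] at *
        linarith
      · intro h1
        have h2 := (hdich k hk hkq).resolve_right h1 _ z2
        refine (hdich (q - k) (by omega) (by omega)).resolve_left fun h3 => ?_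
        have := h3 _ z1
        rw [hcast] at this
        linarith)
  -- corners `γ 0, γ x, γ y` cutting the boundary in the ratios `1 : k : q - 1 - k`
  have hkR : (k : ℝ) + 2 ≤ q := by exact_mod_cast hkq
  have hk0 : (0 : ℝ) ≤ k := Nat.cast_nonneg k
  have hcast : ((q - 1 - k : ℕ) : ℝ) = (q : ℝ) - 1 - k := by
    rw [Nat.cast_sub (by omega), Nat.cast_sub (by omega), Nat.cast_one]
  obtain ⟨x, hx, hFx⟩ := intermediate_value_Icc zero_le_one hFc
    (show b ∈ Icc (F 0) (F 1) by rw [hF0, hF1]; exact ⟨hb.le, by nlinarith⟩)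
  obtain ⟨y, hy, hFy⟩ := intermediate_value_Icc hx.2 (hFc.mono (Icc_subset_Icc_left hx.1))
    (show b + k * b ∈ Icc (F x) (F 1) by
      rw [hFx, hF1]; exact ⟨by nlinarith, by nlinarith⟩)
  have z1 : (0, x) ∈ chords F ((1 : ℕ) * b) :=
    ⟨le_rfl, hx.1, hx.2, by simp only; rw [hFx, hF0, Nat.cast_one]; ring⟩
  have z2 : (x, y) ∈ chords F (k * b) := ⟨hx.1, hy.1, hy.2, by simp only; rw [hFx, hFy]; ring⟩
  have z3 : (y, 1) ∈ chords F ((q - 1 - k : ℕ) * b) :=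
    ⟨hx.1.trans hy.1, hy.2, le_rfl, by simp only; rw [hcast, hFy, hF1]; ring⟩
  obtain ⟨l1, ne1⟩ := chord_ne hG hpar hb le_rfl (by omega) z1
  obtain ⟨l2, ne2⟩ := chord_ne hG hpar hb hk (by omega) z2
  obtain ⟨l3, ne3⟩ := chord_ne hG hpar hb (k := q - 1 - k) (by omega) (by omega) z3
  simp only [← hpar.closed] at l1 l2 l3 ne1 ne2 ne3
  have f3 : f (y, 1) = μ.real (C ∩ {w | 0 < area (γ y) w (γ 0)}) := by
    simp only [f, ← hpar.closed]
  have hf' : ∀ z, f z = μ.real (C ∩ {w | 0 < area (γ z.1) w (γ z.2)}) := fun _ => rfl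
  clear_value f F
  rcases hdich 1 le_rfl (by omega) with hn | hp
  · have np1 : ¬ ∀ z ∈ chords F ((1 : ℕ) * b), (1 : ℕ) * a < f z := fun h =>
      lt_asymm (h _ z1) (hn _ z1)
    have n2 := (hdich k hk (by omega)).resolve_right (fun h => np1 (hs1.2 h)) _ z2
    have n3 := (hdich (q - 1 - k) (by omega) (by omega)).resolve_right
      (fun h => np1 (hs2.2 h)) _ z3
    have n1 := hn _ z1
    rw [f3] at n3
    rw [hf'] at n1 n2
    obtain ⟨V1, V2, V3, h⟩ := triangle_cells (k1 := 1) (k2 := k) (k3 := q - 1 - k) hμ hG hc hpar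
      l1 l2 l3 (by omega) ne1 ne2 ne3 (by rw [Nat.cast_one, one_mul]; rw [← hF]; exact hFx)
      (by rw [← hF]; exact z2.2.2.2) n1 n2 n3
    exact ⟨k, V1, V2, V3, hk, hkq, h⟩
  · -- three disjoint caps would together be heavier than `C`
    exfalso
    have p1 := hp _ z1
    have p2 := hs1.1 hp _ z2
    have p3 := hs2.1 hp _ z3
    rw [f3] at p3
    have := caps_sum_le (μ := μ) hG.compact hG.convex hc hpar l1 l2 l3
    rw [hG.mass] at this
    rw [hcast] at p3
    rw [Nat.cast_one] at p1
    rw [hf'] at p1 p2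
    linarith

lemma Good.divisible (hμ : μ ≪ volume) (ha : 0 < a) (hb : 0 < b) (q : ℕ) :
    ∀ C : Set E2, 1 ≤ q → Good μ σ a b C q → Divisible μ σ a b C q := by
  induction q using Nat.strong_induction_on with
  | _ q ih =>
    intro C hq hG
    rcases hq.eq_or_lt with e | e
    · subst e
      refine ⟨fun _ => C, fun _ => hG.compact.isClosed, fun _ => hG.convex, iUnion_const C,
        fun j l h => absurd (Subsingleton.elim j l) h, fun _ => ?_, fun _ => ?_⟩
      · rw [hG.mass, Nat.cast_one, one_mul]
      · rw [hG.boundary_mass, Nat.cast_one, one_mul]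
    rcases hG.split hμ ha hb e with ⟨k, C1, C2, hk, hkq, G1, G2, rfl, h⟩ |
      ⟨k, V1, V2, V3, hk, hkq, G1, G2, G3, rfl, h12, h13, h23⟩
    · have := (ih k hkq C1 hk G1).union (ih (q - k) (by omega) C2 (by omega) G2) h
      rwa [Nat.add_sub_cancel' hkq.le] at this
    · have h3 : volume ((V1 ∪ V2) ∩ V3) = 0 := by
        rw [union_inter_distrib_right]; exact measure_union_null h13 h23
      have := ((ih 1 (by omega) V1 le_rfl G1).union (ih k (by omega) V2 hk G2) h12).union
        (ih (q - 1 - k) (by omega) V3 (by omega) G3) h3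
      rwa [show 1 + k + (q - 1 - k) = q by omega] at this

end PerfectPartition

/-- A convex body `C ⊆ ℝ²` can be partitioned into `q` convex parts, each carrying `1/q` of
a given absolutely continuous measure on `C` and `1/q` of a given absolutely continuous
measure on the boundary `∂C`, for any `q ≥ 1`. -/
theorem stmt_8 (C : Set (EuclideanSpace ℝ (Fin 2)))
    (hC : IsCompact C) (hCconv : Convex ℝ C) (hCint : (interior C).Nonempty)
    (μ : Measure (EuclideanSpace ℝ (Fin 2))) [IsProbabilityMeasure μ]
    (hμC : μ Cᶜ = 0) (hμac : μ ≪ volume)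
    (σ : Measure (EuclideanSpace ℝ (Fin 2))) [IsProbabilityMeasure σ]
    (hσC : σ (frontier C)ᶜ = 0) (hσac : σ ≪ (μH[1]).restrict (frontier C))
    (q : ℕ) (hq : 1 ≤ q) :
    ∃ V : Fin q → Set (EuclideanSpace ℝ (Fin 2)),
      (∀ j, IsClosed (V j)) ∧ (∀ j, Convex ℝ (V j)) ∧
      (⋃ j, V j) = C ∧
      (∀ j l, j ≠ l → volume (V j ∩ V l) = 0) ∧
      (∀ j, μ (V j) = 1 / q) ∧
      (∀ j, σ (V j ∩ frontier C) = 1 / q) := by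
  have hatom : NullSingletonClass σ := ⟨fun x => hσac (by
    refine le_antisymm (le_trans (Measure.restrict_apply_le _ _) ?_) bot_le
    have := Measure.nullSingletonClass_hausdorff (EuclideanSpace ℝ (Fin 2)) one_pos
    rw [measure_singleton])⟩
  have hq0 : (0 : ℝ) < q := by exact_mod_cast hq
  have hmass : ∀ (ν : Measure (EuclideanSpace ℝ (Fin 2))) [IsProbabilityMeasure ν],
      ν Cᶜ = 0 → ν.real C = q * (1 / q) := by
    intro ν _ h
    rw [mul_one_div_cancel hq0.ne', measureReal_def,
      (prob_compl_eq_zero_iff hC.isClosed.measurableSet).1 h, ENNReal.toReal_one]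
  have hG : PerfectPartition.Good μ σ (1 / q) (1 / q) C q :=
    { compact := hC
      convex := hCconv
      interior_null := measure_mono_null (t := (frontier C)ᶜ) (fun w hw h => h.2 hw) hσC
      mass := hmass μ hμC
      boundary_mass := hmass σ (measure_mono_null
        (Set.compl_subset_compl.2 hC.isClosed.frontier_subset) hσC) }
  obtain ⟨V, h1, h2, h3, h4, h5, h6⟩ := hG.divisible hμac (by positivity) (by positivity) q C hq
  have hreal : ∀ (ν : Measure (EuclideanSpace ℝ (Fin 2))) [IsProbabilityMeasure ν] (s),
      ν.real s = 1 / q → ν s = 1 / q := by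
    intro ν _ s h
    rw [← ENNReal.ofReal_toReal (measure_ne_top ν s), ← measureReal_def, h,
      ENNReal.ofReal_div_of_pos hq0, ENNReal.ofReal_one, ENNReal.ofReal_natCast]
  refine ⟨V, h1, h2, h3, h4, fun j => hreal μ _ (h5 j), fun j => ?_⟩
  rw [Set.inter_comm, Measure.measure_inter_eq_of_ae]
  · exact hreal σ _ (h6 j)
  · exact hσC
end

section
/- Let X be a compact topological space with a Borel probability measure μ, let L ⊆ C(X) be a measure-separating subspace of dimension n+1, let k < n, let μ₁, …, μ_{n−k} be probability measures on X absolutely continuous with respect to μ, let q be a prime power, let c be a q-admissible center function for L, and let h : X → ℝᵏ be a continuous map. Then there exist q pairwise distinct functions u₁, …, u_q ∈ L such that, setting Vⱼ = {x ∈ X : uⱼ(x) ≥ u_l(x) for all l}, one has μᵢ(Vⱼ) = 1/q for every i = 1, …, n−k and every j = 1, …, q, and moreover h(c(V₁)) = h(c(V₂)) = ⋯ = h(c(V_q)). -/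
/-!
# Equipartition by a measure-separating space of functions

Fix a linear isomorphism between `(Fin n → ℝ) × ℝ` and `L`, so that `q`-tuples of distinct functions
of `L` become injective maps `x : Fin q → (Fin n → ℝ) × ℝ`. For such a tuple and a part `j` form a
vector of length `n`: its first `n - k` entries are `μᵢ(Vⱼ) - 1/q`, and its last `k` entries are
`ψ · (h (c Vⱼ) - average of h (c Vₗ) over l)`, where `ψ` is the product of the numbers `μ₁(Vₗ)`.
The factor `ψ` makes the last entries continuous also where some part has empty interior and `c`
is not controlled. These vectors sum to zero over `j`, depend continuously on the tuple, are
bounded, and permute with the tuple; a common zero is the required partition, since there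
`ψ = q⁻ᵠ ≠ 0`. Hence it suffices to prove `exists_zero`: for `q = pᵃ` a bounded continuous equivariant
map from injective tuples to `Fin q → Fin n → ℝ` with zero column sums has a zero.

This is proved by a signed Sperner count rather than by homology. Pull the map back to all
`y : Fin q → Fin n → ℝ` by the embedding `lift`, which separates coinciding points by an extra real
coordinate and commutes with those permutations that only reorder distant points, and add the mean
of `y` to obtain a map that is zero-free if the original one is. Label a fine lattice by the
coordinates where this map is positive (`none` if there are none), using `y` itself outside a large
ball, and choose the labels equivariantly (`exists_label`). A signed Sperner lemma for the Kuhn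
triangulation (`sum_wt_eq_one`) shows that the weighted number of fully labelled simplices is `1`.
Inside the ball there are none, by uniform continuity (`exists_mesh`). Outside it, a fully labelled
simplex must have a coordinate in which the `q` points split into two distant clusters: otherwise all
the points are large of one sign in some coordinate, and a label is missing. Reading the clusters as a
nonconstant word in two letters and rotating the word cyclically gives an action of order `pᵃ` without
fixed points on the fully labelled simplices which preserves the weight, so that the weighted number
is divisible by `p` (`no_labelling`), a contradiction.
-/

open MeasureTheory

namespace Equipartition

/-! ### Signed Sperner lemma on the Kuhn triangulation -/

/-- The `k`-th vertex of the Kuhn simplex with base vertex `x` and ordering `π` of the coordinates: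
the coordinates `π 0, …, π (k - 1)` of `x` have been raised by one. -/
def vert {ι : Type*} {m : ℕ} (x : ι → ℤ) (π : Fin (m + 1) ≃ ι) (k : ℕ) : ι → ℤ :=
  fun i => x i + if (π.symm i : ℕ) < k then 1 else 0

/-- The signed count of a labelled facet. The columns are ordered by `e`; the determinant vanishes
unless the labels of the facet are exactly all the `some i`. -/
def facet {ι : Type*} [DecidableEq ι] {m : ℕ} (e : Fin (m + 1) ≃ ι)
    (a : Fin (m + 1) → Option ι) : ℤ :=
  Matrix.det (Matrix.of fun k o => if a k = some (e o) then (1 : ℤ) else 0)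

/-- The label matrix of a simplex bordered by a column of ones. Its determinant vanishes unless every
element of `Option ι` occurs among the labels. -/
def fullMatrix {ι : Type*} [DecidableEq ι] {m : ℕ} (e : Fin (m + 1) ≃ ι)
    (a : Fin (m + 2) → Option ι) : Matrix (Fin (m + 2)) (Fin (m + 2)) ℤ :=
  Matrix.of fun k => Fin.cons 1 fun o : Fin (m + 1) => if a k = some (e o) then (1 : ℤ) else 0

/-- The signed weight of the simplex `(x, π)`: the orientation of the simplex times the orientation of
its labelling. It is nonzero only for fully labelled simplices. -/
def wt {ι : Type*} [DecidableEq ι] {m : ℕ} (e : Fin (m + 1) ≃ ι)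
    (lab : (ι → ℤ) → Option ι) (x : ι → ℤ) (π : Fin (m + 1) ≃ ι) : ℤ :=
  (Equiv.Perm.sign (π.trans e.symm) : ℤ) *
    (fullMatrix e fun k => lab (vert x π k)).det

/-- Expansion along the column of ones: the weight of a simplex is the alternating sum over its
facets. -/
theorem wt_eq {ι : Type*} [DecidableEq ι] {m : ℕ} (e : Fin (m + 1) ≃ ι)
    (lab : (ι → ℤ) → Option ι) (x : ι → ℤ) (π : Fin (m + 1) ≃ ι) :
    wt e lab x π = ∑ k : Fin (m + 2), (-1) ^ (k : ℕ) *
      ((Equiv.Perm.sign (π.trans e.symm) : ℤ) *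
        facet e fun j => lab (vert x π (k.succAbove j))) := by
  unfold wt
  rw [Matrix.det_succ_column_zero, Finset.mul_sum]
  refine Finset.sum_congr rfl fun k _ => ?_
  have : (fullMatrix e fun k => lab (vert x π k)).submatrix k.succAbove Fin.succ
      = Matrix.of fun (j o : Fin (m + 1)) =>
        if lab (vert x π (k.succAbove j)) = some (e o) then (1 : ℤ) else 0 := by
    ext j o
    simp [fullMatrix]
  rw [this]
  simp only [fullMatrix, Matrix.of_apply, Fin.cons_zero, facet]
  ring

/-- Facets opposite to an inner vertex are shared by two simplices with the same base vertex, whose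
orderings differ by a transposition, so they cancel. -/
theorem sum_inner {ι : Type*} [Fintype ι] [DecidableEq ι] {m : ℕ} (e : Fin (m + 1) ≃ ι)
    (lab : (ι → ℤ) → Option ι) (x : ι → ℤ) (k : Fin m) :
    ∑ π : Fin (m + 1) ≃ ι, (Equiv.Perm.sign (π.trans e.symm) : ℤ) *
        facet e (fun j => lab (vert x π (k.succ.castSucc.succAbove j))) = 0 := by
  set s : Equiv.Perm (Fin (m + 1)) := Equiv.swap k.castSucc k.succ with hs
  have hne : k.castSucc ≠ k.succ := (Fin.castSucc_lt_succ).ne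
  let E : (Fin (m + 1) ≃ ι) ≃ (Fin (m + 1) ≃ ι) := Equiv.equivCongr s (Equiv.refl ι)
  have key : ∀ π : Fin (m + 1) ≃ ι,
      (Equiv.Perm.sign ((E π).trans e.symm) : ℤ) *
        facet e (fun j => lab (vert x (E π) (k.succ.castSucc.succAbove j)))
      = -((Equiv.Perm.sign (π.trans e.symm) : ℤ) *
        facet e (fun j => lab (vert x π (k.succ.castSucc.succAbove j)))) := by
    intro π
    have h1 : (E π).trans e.symm = (π.trans e.symm) * s := by
      ext j; simp [E, s]
    have h2 : ∀ j : Fin (m + 1), vert x (E π) (k.succ.castSucc.succAbove j)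
        = vert x π (k.succ.castSucc.succAbove j) := by
      intro j
      funext i
      have h3 : (E π).symm i = s (π.symm i) := rfl
      have h4 : ((k.succ.castSucc.succAbove j : Fin (m + 2)) : ℕ) ≠ k + 1 := by
        intro h
        exact Fin.succAbove_ne k.succ.castSucc j (Fin.ext (by simpa using h))
      simp only [vert, h3, hs, Equiv.swap_apply_def]
      congr 1
      generalize π.symm i = t at *
      generalize ((k.succ.castSucc.succAbove j : Fin (m + 2)) : ℕ) = l at *
      by_cases ha : t = k.castSucc
      · subst ha
        simp only [if_true, Fin.val_succ, Fin.val_castSucc]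
        split_ifs <;> omega
      · by_cases hb : t = k.succ
        · subst hb
          simp only [if_neg ha, if_true, Fin.val_succ, Fin.val_castSucc]
          split_ifs <;> omega
        · simp [ha, hb]
    simp only [h2]
    rw [h1, Equiv.Perm.sign_mul, hs, Equiv.Perm.sign_swap hne]
    simp
  have := Equiv.sum_comp E fun π : Fin (m + 1) ≃ ι =>
    (Equiv.Perm.sign (π.trans e.symm) : ℤ) *
        facet e (fun j => lab (vert x π (k.succ.castSucc.succAbove j)))
  simp only [key, Finset.sum_neg_distrib] at this
  omega

/-- The count of the facet opposite to the last vertex, for the simplex with base `x` and ordering `π`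
rotated so that the coordinate `π 0` is raised last; this facet lies in a translate of the hyperplane
on which that coordinate is constant. -/
def low {ι : Type*} [DecidableEq ι] {m : ℕ} (e : Fin (m + 1) ≃ ι)
    (lab : (ι → ℤ) → Option ι) (π : Fin (m + 1) ≃ ι) (x : ι → ℤ) : ℤ :=
  facet e fun j : Fin (m + 1) => lab (vert x ((finRotate (m + 1)).trans π) j)

/-- Summed over the simplices with base `x`, only the facets opposite to the first and the last vertex
survive. The former are translates by a unit vector of the latter, so a discrete divergence remains. -/
theorem sum_wt {ι : Type*} [Fintype ι] [DecidableEq ι] {m : ℕ} (e : Fin (m + 1) ≃ ι)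
    (lab : (ι → ℤ) → Option ι) (x : ι → ℤ) :
    ∑ π : Fin (m + 1) ≃ ι, wt e lab x π =
      ∑ π : Fin (m + 1) ≃ ι, (Equiv.Perm.sign (π.trans e.symm) : ℤ) *
        (low e lab π (x + Pi.single (π 0) (1 : ℤ)) - low e lab π x) := by
  simp only [wt_eq]
  rw [Finset.sum_comm, Fin.sum_univ_succ, Fin.sum_univ_castSucc]
  simp only [← Finset.mul_sum]
  have hin : ∑ k : Fin m, (-1 : ℤ) ^ ((k.castSucc.succ : Fin (m + 2)) : ℕ) *
      ∑ π : Fin (m + 1) ≃ ι, (Equiv.Perm.sign (π.trans e.symm) : ℤ) *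
        facet e (fun j => lab (vert x π (k.castSucc.succ.succAbove j))) = 0 := by
    refine Finset.sum_eq_zero fun k _ => ?_
    have := sum_inner e lab x k
    rw [← Fin.succ_castSucc] at this
    rw [this, mul_zero]
  rw [hin, zero_add]
  have hR : ∑ π : Fin (m + 1) ≃ ι, (Equiv.Perm.sign (π.trans e.symm) : ℤ) *
        (low e lab π (x + Pi.single (π 0) (1 : ℤ)) - low e lab π x) =
      ∑ π : Fin (m + 1) ≃ ι, (Equiv.Perm.sign (π.trans e.symm) : ℤ) *
        low e lab π (x + Pi.single (π 0) (1 : ℤ)) +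
      -∑ π : Fin (m + 1) ≃ ι, (Equiv.Perm.sign (π.trans e.symm) : ℤ) * low e lab π x := by
    rw [← sub_eq_add_neg, ← Finset.sum_sub_distrib]
    exact Finset.sum_congr rfl fun π _ => mul_sub _ _ _
  rw [hR]
  congr 1
  · simp only [Fin.val_zero, pow_zero, one_mul]
    refine Finset.sum_congr rfl fun π _ => ?_
    congr 1
    unfold low
    congr 1
    funext j
    congr 1
    funext i
    simp only [vert, Fin.zero_succAbove, Fin.val_succ, Pi.add_apply, Pi.single_apply,
      Equiv.symm_trans_apply]
    obtain ⟨t, rfl⟩ := π.surjective i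
    simp only [Equiv.symm_apply_apply, EmbeddingLike.apply_eq_iff_eq]
    obtain ⟨u, rfl⟩ := (finRotate (m + 1)).surjective t
    simp only [Equiv.symm_apply_apply]
    rw [add_assoc]
    congr 1
    by_cases hu : u = Fin.last m
    · subst hu
      have : ¬ (m < (j : ℕ)) := by omega
      simp [this]
    · have h0 : (finRotate (m + 1) u : ℕ) = u + 1 := coe_finRotate_of_ne_last hu
      have h1 : finRotate (m + 1) u ≠ 0 := by
        intro h; rw [h] at h0; simp at h0
      rw [h0, if_neg h1, zero_add]
      simp only [Nat.add_lt_add_iff_right]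
  · simp only [Fin.succ_last, Fin.val_last]
    let E : (Fin (m + 1) ≃ ι) ≃ (Fin (m + 1) ≃ ι) :=
      Equiv.equivCongr (finRotate (m + 1)).symm (Equiv.refl ι)
    have hE : ∀ π, E π = (finRotate (m + 1)).trans π := by
      intro π; ext j; simp [E]
    rw [← Equiv.sum_comp E, Finset.mul_sum, ← Finset.sum_neg_distrib]
    refine Finset.sum_congr rfl fun π _ => ?_
    have h1 : (E π).trans e.symm = (π.trans e.symm) * finRotate (m + 1) := by
      rw [hE]; rfl
    rw [h1, Equiv.Perm.sign_mul, sign_finRotate, hE]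
    have h2 : facet e (fun j => lab (vert x ((finRotate (m + 1)).trans π)
        ((Fin.last (m + 1)).succAbove j))) = low e lab π x := by
      simp [low, Fin.succAbove_last]
    rw [h2]
    have h3 : ((-1 : ℤ)) ^ m.succ * (-1) ^ m = -1 := by
      rw [pow_succ]
      have : ((-1 : ℤ) ^ m) * (-1) ^ m = 1 := by rw [← mul_pow]; simp
      linear_combination -this
    push_cast
    linear_combination (Equiv.Perm.sign (π.trans e.symm) : ℤ) * low e lab π x * h3

theorem mem_box {ι : Type*} [Fintype ι] [DecidableEq ι] (K : ℤ) (x : ι → ℤ) :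
    x ∈ Finset.Icc (fun _ : ι => -K) (fun _ => K) ↔ ∀ i, |x i| ≤ K := by
  simp only [Finset.mem_Icc, Pi.le_def, abs_le, forall_and]

theorem vert_bound {ι : Type*} {m : ℕ} (x : ι → ℤ) (π : Fin (m + 1) ≃ ι) (k : ℕ) (i : ι) :
    x i ≤ vert x π k i ∧ vert x π k i ≤ x i + 1 := by
  unfold vert; split_ifs <;> omega

/-- The total weight depends only on the labels far away: by `sum_wt` the difference of two total
weights telescopes when the labellings agree outside a box. -/
theorem sum_wt_congr {ι : Type*} [Fintype ι] [DecidableEq ι] {m : ℕ} (e : Fin (m + 1) ≃ ι)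
    (lab lab' : (ι → ℤ) → Option ι) (K : ℤ)
    (h : ∀ x : ι → ℤ, (∃ i, K < |x i|) → lab x = lab' x) :
    ∑ x ∈ Finset.Icc (fun _ : ι => -(K + 2)) (fun _ => K + 2), ∑ π : Fin (m + 1) ≃ ι,
      wt e lab x π =
    ∑ x ∈ Finset.Icc (fun _ : ι => -(K + 2)) (fun _ => K + 2), ∑ π : Fin (m + 1) ≃ ι,
      wt e lab' x π := by
  rw [← sub_eq_zero, ← Finset.sum_sub_distrib]
  simp only [sum_wt, ← Finset.sum_sub_distrib]
  rw [Finset.sum_comm]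
  refine Finset.sum_eq_zero fun π _ => ?_
  simp only [← mul_sub]
  rw [← Finset.mul_sum]
  convert mul_zero _
  set D : (ι → ℤ) → ℤ := fun x => low e lab π x - low e lab' π x with hD
  have hsupp : ∀ x, D x ≠ 0 → ∀ i, |x i| ≤ K + 1 := by
    intro x hx i
    by_contra! hi
    apply hx
    simp only [hD, low]
    rw [sub_eq_zero]
    congr 1
    funext j
    apply h
    refine ⟨i, ?_⟩
    have := vert_bound x ((finRotate (m + 1)).trans π) j i
    rcases abs_cases (x i) with hc | hc <;>
    rcases abs_cases (vert x ((finRotate (m + 1)).trans π) j i) with hd | hd <;> omega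
  have e1 : ∑ x ∈ Finset.Icc (fun _ : ι => -(K + 2)) (fun _ => K + 2), D x = ∑ᶠ x, D x := by
    symm
    apply finsum_eq_sum_of_support_subset
    intro x hx
    rw [Finset.mem_coe, mem_box]
    intro i
    have := hsupp x hx i
    omega
  have e2 : ∑ x ∈ Finset.Icc (fun _ : ι => -(K + 2)) (fun _ => K + 2),
      D (x + (Pi.single (π 0) 1 : ι → ℤ)) = ∑ᶠ x, D (x + (Pi.single (π 0) 1 : ι → ℤ)) := by
    symm
    apply finsum_eq_sum_of_support_subset (f := fun x => D (x + (Pi.single (π 0) 1 : ι → ℤ)))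
    intro x hx
    rw [Finset.mem_coe, mem_box]
    intro i
    have := hsupp _ hx i
    simp only [Pi.add_apply, Pi.single_apply] at this
    rw [abs_le] at this ⊢
    split_ifs at this <;> constructor <;> omega
  have e3 : ∑ᶠ x, D (x + (Pi.single (π 0) 1 : ι → ℤ)) = ∑ᶠ x, D x :=
    finsum_comp_equiv (Equiv.addRight (Pi.single (π 0) 1 : ι → ℤ)) (f := D)
  calc _ = ∑ x ∈ Finset.Icc (fun _ : ι => -(K + 2)) (fun _ => K + 2),
        (D (x + (Pi.single (π 0) 1 : ι → ℤ)) - D x) := by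
        refine Finset.sum_congr rfl fun x _ => ?_
        simp only [hD]; ring
    _ = 0 := by rw [Finset.sum_sub_distrib, e1, e2, e3, sub_self]

theorem wt_injective {ι : Type*} [DecidableEq ι] {m : ℕ} (e : Fin (m + 1) ≃ ι)
    (lab : (ι → ℤ) → Option ι) (x : ι → ℤ) (π : Fin (m + 1) ≃ ι) (h : wt e lab x π ≠ 0) :
    Function.Injective fun k : Fin (m + 2) => lab (vert x π k) := by
  intro a b hab
  by_contra hne
  apply h
  unfold wt
  rw [Matrix.det_zero_of_row_eq hne, mul_zero]
  funext o
  simp only at hab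
  simp only [fullMatrix, Matrix.of_apply, hab]

theorem wt_surjective {ι : Type*} [Fintype ι] [DecidableEq ι] {m : ℕ} (e : Fin (m + 1) ≃ ι)
    (lab : (ι → ℤ) → Option ι) (x : ι → ℤ) (π : Fin (m + 1) ≃ ι) (h : wt e lab x π ≠ 0) :
    Function.Surjective fun k : Fin (m + 2) => lab (vert x π k) := by
  have hc : Fintype.card (Fin (m + 2)) = Fintype.card (Option ι) := by
    rw [Fintype.card_option, ← Fintype.card_congr e]; simp
  exact ((Fintype.bijective_iff_injective_and_card _).2 ⟨wt_injective e lab x π h, hc⟩).2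

theorem vert_comp {ι : Type*} {m : ℕ} (g : Equiv.Perm ι) (x : ι → ℤ) (π : Fin (m + 1) ≃ ι)
    (k : ℕ) : vert (x ∘ g) (π.trans g.symm) k = vert x π k ∘ g := rfl

/-- The weight is invariant under a permutation of the coordinates that permutes the labels
accordingly. -/
theorem wt_comp {ι : Type*} [DecidableEq ι] {m : ℕ} (e : Fin (m + 1) ≃ ι)
    (lab : (ι → ℤ) → Option ι) (x : ι → ℤ) (π : Fin (m + 1) ≃ ι) (g : Equiv.Perm ι)
    (hg : ∀ k : Fin (m + 2), lab (vert x π k ∘ g) = (lab (vert x π k)).map g.symm) :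
    wt e lab (x ∘ g) (π.trans g.symm) = wt e lab x π := by
  rw [wt_eq, wt_eq]
  refine Finset.sum_congr rfl fun k _ => ?_
  congr 1
  set h : Equiv.Perm (Fin (m + 1)) := e.trans (g.symm.trans e.symm) with hh
  have h1 : (π.trans g.symm).trans e.symm = h * (π.trans e.symm) := by
    ext j; simp [hh]
  have h2 : facet e (fun j => lab (vert (x ∘ g) (π.trans g.symm) (k.succAbove j))) =
      Equiv.Perm.sign h.symm * facet e (fun j => lab (vert x π (k.succAbove j))) := by
    unfold facet
    have hd := Matrix.det_permute' h.symm (Matrix.of fun (j o : Fin (m + 1)) =>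
      if lab (vert x π (k.succAbove j)) = some (e o) then (1 : ℤ) else 0)
    rw [Int.cast_id] at hd
    rw [← hd]
    congr 1
    ext j o
    simp only [Matrix.of_apply, vert_comp, Matrix.submatrix_apply, id]
    have : e (h.symm o) = g (e o) := by simp [hh]
    refine if_congr ?_ rfl rfl
    rw [hg, Option.map_eq_some_iff, this]
    constructor
    · rintro ⟨a, ha, hb⟩
      rw [ha, ← hb]; simp
    · intro ha
      exact ⟨_, ha, by simp⟩
  rw [h1, h2, Equiv.Perm.sign_mul, Equiv.Perm.sign_symm]
  have h3 : ((Equiv.Perm.sign h : ℤ)) * (Equiv.Perm.sign h : ℤ) = 1 := by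
    rw [← Units.val_mul, Int.units_mul_self, Units.val_one]
  push_cast
  linear_combination ((Equiv.Perm.sign (π.trans e.symm) : ℤ) *
    facet e (fun j => lab (vert x π (k.succAbove j)))) * h3

/-- For a labelling by the largest positive coordinate exactly one simplex has nonzero weight, namely
the one with base `0` and ordering `e`, and its weight is one. -/
theorem wt_model {ι : Type*} [Fintype ι] [DecidableEq ι] {m : ℕ} (e : Fin (m + 1) ≃ ι)
    (lab : (ι → ℤ) → Option ι) (K : ℤ) (hK : 0 ≤ K)
    (hnone : ∀ x, lab x = none → ∀ i, x i ≤ 0)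
    (hsome : ∀ x i, lab x = some i → 0 < x i)
    (hmax : ∀ x : ι → ℤ, (∀ i, |x i| ≤ 1) → ∀ o, lab x = some (e o) →
      ∀ o', 0 < x (e o') → o' ≤ o) :
    ∑ x ∈ Finset.Icc (fun _ : ι => -K) (fun _ => K), ∑ π : Fin (m + 1) ≃ ι,
      wt e lab x π = 1 := by
  have hv : ∀ (π : Fin (m + 1) ≃ ι) (k : ℕ) (i : ι),
      0 < vert 0 π k i ↔ (π.symm i : ℕ) < k := by
    intro π k i
    simp only [vert, Pi.zero_apply]
    split_ifs with h <;> simp [h]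
  have hv1 : ∀ (π : Fin (m + 1) ≃ ι) (k : ℕ) (i : ι), |vert 0 π k i| ≤ 1 := by
    intro π k i
    simp only [vert, Pi.zero_apply]
    split_ifs with h <;> simp
  have hx : ∀ x π, wt e lab x π ≠ 0 → x = 0 := by
    intro x π hw
    have hs := wt_surjective e lab x π hw
    funext i
    obtain ⟨k, hk⟩ := hs none
    obtain ⟨l, hl⟩ := hs (some i)
    have h1 := hnone _ hk i
    have h2 := hsome _ _ hl
    have h3 := vert_bound x π k i
    have h4 := vert_bound x π l i
    simp only [Pi.zero_apply]
    omega
  have hπ : ∀ π, wt e lab 0 π ≠ 0 → π = e := by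
    intro π hw
    have hi := wt_injective e lab 0 π hw
    have ho : ∀ k : Fin (m + 1), ∃ o, lab (vert 0 π (k + 1 : ℕ)) = some (e o) := by
      intro k
      rcases hlab : lab (vert 0 π (k + 1 : ℕ)) with _ | i
      · have h1 := hnone _ hlab (π 0)
        have h2 := (hv π (k + 1) (π 0)).2 (by simp)
        omega
      · exact ⟨e.symm i, by simp⟩
    choose o ho using ho
    have hle : ∀ j k : Fin (m + 1), j ≤ k → e.symm (π j) ≤ o k := by
      intro j k hjk
      refine hmax _ (hv1 π _) _ (ho k) _ ?_
      rw [hv]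
      simp only [Equiv.apply_symm_apply, Equiv.symm_apply_apply]
      omega
    have hex : ∀ k, ∃ j ≤ k, o k = e.symm (π j) := by
      intro k
      have := (hv π _ _).1 (hsome _ _ (ho k))
      refine ⟨π.symm (e (o k)), ?_, by simp⟩
      rw [Fin.le_def]; omega
    have hinj : Function.Injective o := by
      intro a b hab
      have h1 : lab (vert 0 π (a.succ : Fin (m + 2))) = lab (vert 0 π (b.succ : Fin (m + 2))) := by
        simp only [Fin.val_succ]
        rw [ho, ho, hab]
      exact Fin.succ_injective _ (hi h1)
    have hmono : StrictMono o := by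
      refine Monotone.strictMono_of_injective (fun a b hab => ?_) hinj
      obtain ⟨j, hj, hj'⟩ := hex a
      rw [hj']
      exact hle _ _ (hj.trans hab)
    have hid : ∀ k, o k = k := fun k => le_antisymm hmono.apply_le hmono.le_apply
    ext k
    obtain ⟨j, hj, hj'⟩ := hex k
    have hjk : j = k := by
      refine le_antisymm hj ?_
      have := hle j j le_rfl
      rw [← hj', hid, hid] at this
      exact this
    rw [hjk, hid] at hj'
    rw [(Equiv.symm_apply_eq _).1 hj'.symm]
  have h1 : wt e lab 0 e = 1 := by
    have hl0 : lab (vert 0 e 0) = none := by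
      rcases hlab : lab (vert 0 e 0) with _ | i
      · rfl
      · have := (hv _ _ _).1 (hsome _ _ hlab)
        omega
    have hls : ∀ k : Fin (m + 1), lab (vert 0 e (k + 1 : ℕ)) = some (e k) := by
      intro k
      rcases hlab : lab (vert 0 e (k + 1 : ℕ)) with _ | i
      · have h1 := hnone _ hlab (e 0)
        have h2 := (hv e (k + 1) (e 0)).2 (by simp)
        omega
      · obtain ⟨o, rfl⟩ := e.surjective i
        have h1 := (hv _ _ _).1 (hsome _ _ hlab)
        have h2 := hmax _ (hv1 e _) _ hlab k (by rw [hv]; simp)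
        simp only [Equiv.symm_apply_apply] at h1
        congr 2
        rw [Fin.le_def] at h2
        ext; omega
    have hf : fullMatrix e (fun k => lab (vert 0 e k)) =
        Matrix.of fun k => Fin.cons 1 fun o : Fin (m + 1) => if k = o.succ then (1 : ℤ) else 0 := by
      ext k o
      refine Fin.cases ?_ (fun k => ?_) k <;> refine Fin.cases ?_ (fun o => ?_) o
      · simp [fullMatrix]
      · simp [fullMatrix, hl0, (Fin.succ_ne_zero o).symm]
      · simp [fullMatrix]
      · simp [fullMatrix, hls]
    unfold wt
    rw [hf, Matrix.det_succ_row_zero, Fin.sum_univ_succ]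
    have hz : ∀ o : Fin (m + 1), ¬ (0 = o.succ) := fun o => (Fin.succ_ne_zero o).symm
    have hI : (Matrix.submatrix (Matrix.of fun k => (Fin.cons 1 fun o : Fin (m + 1) =>
        if k = o.succ then (1 : ℤ) else 0 : Fin (m + 2) → ℤ)) Fin.succ (Fin.succAbove 0)) = 1 := by
      ext k o
      simp [Matrix.one_apply]
    rw [hI]
    simp [hz]
  rw [Finset.sum_eq_single 0, Finset.sum_eq_single e, h1]
  · intro π _ hne
    by_contra h
    exact hne (hπ π h)
  · simp
  · intro x _ hne
    refine Finset.sum_eq_zero fun π _ => ?_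
    by_contra h
    exact hne (hx x π h)
  · intro h
    exact absurd ((mem_box K 0).2 (fun _ => by simpa using hK)) h

/-- Signed Sperner lemma: under the boundary condition outside a box, the total weight is one. -/
theorem sum_wt_eq_one {ι : Type*} [Fintype ι] [DecidableEq ι] {m : ℕ} (e : Fin (m + 1) ≃ ι)
    (lab : (ι → ℤ) → Option ι) (K : ℤ) (hK : 1 ≤ K)
    (hnone : ∀ x : ι → ℤ, (∃ i, K < |x i|) → lab x = none → ∀ i, x i ≤ 0)
    (hsome : ∀ x : ι → ℤ, (∃ i, K < |x i|) → ∀ i, lab x = some i → 0 < x i) :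
    ∑ x ∈ Finset.Icc (fun _ : ι => -(K + 2)) (fun _ => K + 2), ∑ π : Fin (m + 1) ≃ ι,
      wt e lab x π = 1 := by
  classical
  have hex : ∀ x : ι → ℤ, ∃ l : Option ι, (l = none → ∀ i, x i ≤ 0) ∧
      (∀ i, l = some i → 0 < x i) ∧
      ∀ o, l = some (e o) → ∀ o', 0 < x (e o') → o' ≤ o := by
    intro x
    by_cases h : (Finset.univ.filter fun o => 0 < x (e o)).Nonempty
    · refine ⟨some (e (Finset.max' _ h)), by simp, ?_, ?_⟩
      · rintro i hi
        have := Finset.max'_mem _ h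
        rw [Finset.mem_filter] at this
        rw [← Option.some_injective _ hi]
        exact this.2
      · intro o ho o' ho'
        rw [← e.injective (Option.some_injective _ ho)]
        exact Finset.le_max' _ _ (by simpa using ho')
    · refine ⟨none, fun _ i => ?_, by simp, by simp⟩
      by_contra! hi
      exact h ⟨e.symm i, by simpa using hi⟩
  choose l hl1 hl2 hl3 using hex
  let lab' : (ι → ℤ) → Option ι := fun x => if ∃ i, K < |x i| then lab x else l x
  rw [sum_wt_congr e lab lab' K (fun x hx => by simp only [lab', if_pos hx])]
  refine wt_model e lab' (K + 2) (by omega) ?_ ?_ ?_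
  · intro x hx
    by_cases h : ∃ i, K < |x i|
    · exact hnone x h (by simpa only [lab', if_pos h] using hx)
    · exact hl1 x (by simpa only [lab', if_neg h] using hx)
  · intro x i hx
    by_cases h : ∃ i, K < |x i|
    · exact hsome x h i (by simpa only [lab', if_pos h] using hx)
    · exact hl2 x i (by simpa only [lab', if_neg h] using hx)
  · intro x hx1 o hx
    have h : ¬ ∃ i, K < |x i| := by
      rintro ⟨i, hi⟩
      have := hx1 i
      omega
    exact hl3 x o (by simpa only [lab', if_neg h] using hx)

/-! ### Divisibility of the weighted count by the prime -/

/-- An action of a cyclic `p`-group without fixed points forces a sum of an invariant weight to be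
divisible by `p`: each level set of the weight is acted on without fixed points. -/
theorem dvd_sum_of_iterate {α : Type*} [Fintype α] {p a : ℕ} (hp : p.Prime) (T : α → α)
    (hT : ∀ x, T^[p ^ a] x = x) (hfix : ∀ x, T x ≠ x) (w : α → ℤ) (hw : ∀ x, w (T x) = w x) :
    (p : ℤ) ∣ ∑ x, w x := by
  classical
  have : Fact p.Prime := ⟨hp⟩
  have hsc := Finset.sum_comp (s := (Finset.univ : Finset α)) (fun v : ℤ => v) w
  rw [hsc]
  refine Finset.dvd_sum fun v _ => ?_
  rw [nsmul_eq_mul]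
  refine Dvd.dvd.mul_right ?_ _
  rw [Int.natCast_dvd_natCast]
  let Q : Function.End {x // w x = v} := fun x => ⟨T x.1, (hw x.1).trans x.2⟩
  have hit : ∀ k x, ((Q ^ k) x).1 = T^[k] x.1 := by
    intro k
    induction k with
    | zero => intro x; rfl
    | succ k ih =>
      intro x
      rw [pow_succ, Function.iterate_succ_apply]
      exact ih (Q x)
  have hQ : Q ^ (p ^ a) = 1 := by
    funext x
    exact Subtype.ext ((hit _ x).trans (hT x.1))
  have h2 := Equiv.Perm.card_fixedPoints_modEq (p := p) (n := a) (f := Q) hQ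
  have h3 : Fintype.card (Function.fixedPoints Q) = 0 := by
    rw [Fintype.card_eq_zero_iff]
    refine ⟨fun ⟨x, hx⟩ => hfix x.1 ?_⟩
    exact congrArg Subtype.val hx
  rw [h3, Fintype.card_subtype] at h2
  exact (Nat.modEq_zero_iff_dvd).1 h2

/-- The permutation of coordinates induced by a permutation `τ` of the `q` points. -/
def blockPerm {q : ℕ} (n : ℕ) (τ : Equiv.Perm (Fin q)) : Equiv.Perm (Fin q × Fin n) :=
  Equiv.prodCongr τ (Equiv.refl _)

theorem blockPerm_mul {q n : ℕ} (σ τ : Equiv.Perm (Fin q)) :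
    blockPerm n (σ * τ) = blockPerm n σ * blockPerm n τ := rfl

theorem blockPerm_one {q n : ℕ} : blockPerm n (1 : Equiv.Perm (Fin q)) = 1 := rfl

/-- The permutation that carries the word `w` to its rearrangement, without changing the order
of positions that carry the same letter (`comp_reorder`, `reorder_lt`); it is defined by two stable sorts. -/
def reorder {q : ℕ} (w w' : Fin q → ℕ) : Equiv.Perm (Fin q) :=
  Tuple.sort w * (Tuple.sort w').symm

theorem reorder_self {q : ℕ} (w : Fin q → ℕ) : reorder w w = 1 := by
  ext i; simp [reorder]

theorem reorder_mul {q : ℕ} (w w' w'' : Fin q → ℕ) : reorder w w' * reorder w' w'' = reorder w w'' := by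
  ext i; simp [reorder]

theorem comp_reorder {q : ℕ} (w : Fin q → ℕ) (σ : Equiv.Perm (Fin q)) :
    w ∘ reorder w (w ∘ σ) = w ∘ σ := by
  have h := Tuple.comp_perm_comp_sort_eq_comp_sort (f := w) (σ := σ)
  funext i
  have := congrFun h ((Tuple.sort (w ∘ σ)).symm i)
  simp only [Function.comp_apply, Equiv.apply_symm_apply] at this
  simp only [reorder, Function.comp_apply, Equiv.Perm.mul_apply]
  exact this.symm

/-- Equal letters are not reordered, because the sorts are stable. -/
theorem reorder_lt {q : ℕ} (w : Fin q → ℕ) (σ : Equiv.Perm (Fin q)) {i j : Fin q} (hij : i < j)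
    (h : (w ∘ σ) i = (w ∘ σ) j) : reorder w (w ∘ σ) i < reorder w (w ∘ σ) j := by
  obtain ⟨hm, hs⟩ := (Tuple.eq_sort_iff (f := w) (σ := Tuple.sort w)).1 rfl
  obtain ⟨hm', hs'⟩ := (Tuple.eq_sort_iff (f := w ∘ σ) (σ := Tuple.sort (w ∘ σ))).1 rfl
  obtain ⟨i, rfl⟩ := (Tuple.sort (w ∘ σ)).surjective i
  obtain ⟨j, rfl⟩ := (Tuple.sort (w ∘ σ)).surjective j
  have hij' : i < j := by
    rcases lt_trichotomy i j with h1 | h1 | h1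
    · exact h1
    · subst h1; exact absurd hij (lt_irrefl _)
    · exact absurd (hs' j i h1 h.symm) hij.asymm
  simp only [reorder, Equiv.Perm.mul_apply, Equiv.symm_apply_apply]
  refine hs i j hij' ?_
  have hc := Tuple.comp_perm_comp_sort_eq_comp_sort (f := w) (σ := σ)
  have h1 := congrFun hc i
  have h2 := congrFun hc j
  simp only [Function.comp_apply] at h1 h2 h
  rw [← h1, ← h2]
  exact h

/-- The coordinate `cθ.1` splits the points of `S` into two nonempty clusters, one below the threshold
`cθ.2` and one at or above `cθ.2 + g`. -/
def Gap {n : ℕ} (g : ℤ) (S : Set (Fin n → ℤ)) (cθ : Fin n × ℤ) : Prop :=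
  (∃ a ∈ S, a cθ.1 < cθ.2) ∧ (∃ a ∈ S, cθ.2 + g ≤ a cθ.1) ∧
    ∀ a ∈ S, a cθ.1 < cθ.2 ∨ cθ.2 + g ≤ a cθ.1

/-- The unordered set of the `q` points encoded by `x`. -/
def pts {q n : ℕ} (x : Fin q × Fin n → ℤ) : Set (Fin n → ℤ) :=
  Set.range fun i c => x (i, c)

theorem pts_comp {q n : ℕ} (x : Fin q × Fin n → ℤ) (τ : Equiv.Perm (Fin q)) :
    pts (x ∘ blockPerm n τ) = pts x := by
  unfold pts
  exact τ.surjective.range_comp (fun i c => x (i, c))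

/-- A choice of gap that depends only on the set of points, hence not on their order. It is a genuine
gap whenever one exists (`cut_spec`). -/
noncomputable def cut {q n : ℕ} [NeZero n] (g : ℤ) (x : Fin q × Fin n → ℤ) : Fin n × ℤ :=
  Classical.epsilon (Gap g (pts x))

/-- The two-letter word recording which points lie below the chosen gap. -/
noncomputable def word {q n : ℕ} [NeZero n] (g : ℤ) (x : Fin q × Fin n → ℤ) : Fin q → ℕ :=
  fun i => if x (i, (cut g x).1) < (cut g x).2 then 0 else 1

theorem word_comp {q n : ℕ} [NeZero n] (g : ℤ) (x : Fin q × Fin n → ℤ)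
    (τ : Equiv.Perm (Fin q)) : word g (x ∘ blockPerm n τ) = word g x ∘ τ := by
  have h : cut g (x ∘ blockPerm n τ) = cut g x := by unfold cut; rw [pts_comp]
  funext i
  simp only [word, h]
  rfl

theorem cut_spec {q n : ℕ} [NeZero n] {g : ℤ} {x : Fin q × Fin n → ℤ}
    (h : ∃ cθ, Gap g (pts x) cθ) : Gap g (pts x) (cut g x) :=
  Classical.epsilon_spec h

theorem word_nonconst {q n : ℕ} [NeZero n] {g : ℤ} (hg : 0 ≤ g) {x : Fin q × Fin n → ℤ}
    (h : ∃ cθ, Gap g (pts x) cθ) : ∃ i j, word g x i ≠ word g x j := by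
  obtain ⟨⟨_, ⟨i, rfl⟩, hi⟩, ⟨_, ⟨j, rfl⟩, hj⟩, -⟩ := cut_spec h
  refine ⟨i, j, ?_⟩
  have hjn : ¬ x (j, (cut g x).1) < (cut g x).2 := by simp only at hj; omega
  simp only at hi
  simp [word, hi, hjn]

/-- Points with different letters are far apart. -/
theorem word_far {q n : ℕ} [NeZero n] {g : ℤ} {x : Fin q × Fin n → ℤ}
    (h : ∃ cθ, Gap g (pts x) cθ) {i j : Fin q} (hij : word g x i ≠ word g x j) :
    ∃ c, g + 1 ≤ |x (i, c) - x (j, c)| := by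
  obtain ⟨-, -, h3⟩ := cut_spec h
  refine ⟨(cut g x).1, ?_⟩
  have hi := h3 _ ⟨i, rfl⟩
  have hj := h3 _ ⟨j, rfl⟩
  simp only at hi hj
  rw [le_abs]
  simp only [word] at hij
  split_ifs at hij <;> omega

/-- The cyclic rotation of the positions. -/
def rot (q : ℕ) [NeZero q] : Equiv.Perm (Fin q) := Equiv.addRight 1

/-- The permutation of the points that rotates the word of `x` by one position and keeps the order
inside each cluster. -/
noncomputable def turn {q n : ℕ} [NeZero q] [NeZero n] (g : ℤ) (x : Fin q × Fin n → ℤ) :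
    Equiv.Perm (Fin q) :=
  reorder (word g x) (word g x ∘ (rot q))

/-- The action of the rotation on simplices, by permuting the points with `turn`. -/
noncomputable def step {q n m : ℕ} [NeZero q] [NeZero n] (g : ℤ)
    (s : (Fin q × Fin n → ℤ) × (Fin (m + 1) ≃ Fin q × Fin n)) :
    (Fin q × Fin n → ℤ) × (Fin (m + 1) ≃ Fin q × Fin n) :=
  (s.1 ∘ blockPerm n (turn g s.1), s.2.trans (blockPerm n (turn g s.1)).symm)

theorem step_iterate {q n m : ℕ} [NeZero q] [NeZero n] (g : ℤ)
    (s : (Fin q × Fin n → ℤ) × (Fin (m + 1) ≃ Fin q × Fin n)) (k : ℕ) :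
    (step g)^[k] s =
      (s.1 ∘ blockPerm n (reorder (word g s.1) (word g s.1 ∘ ⇑(rot q ^ k))),
       s.2.trans
        (blockPerm n (reorder (word g s.1) (word g s.1 ∘ ⇑(rot q ^ k)))).symm) := by
  induction k with
  | zero =>
    rw [pow_zero, Equiv.Perm.coe_one, Function.comp_id, reorder_self, blockPerm_one,
      Function.iterate_zero]
    exact Prod.ext rfl (Equiv.ext fun _ => rfl)
  | succ k ih =>
    rw [Function.iterate_succ_apply', ih]
    set w := word g s.1 with hw
    generalize hρ : rot q ^ k = ρ
    have hρ' : rot q ^ (k + 1) = ρ * rot q := by rw [pow_succ, hρ]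
    rw [hρ', Equiv.Perm.coe_mul]
    set σ := reorder w (w ∘ ρ) with hσ
    have h1 : word g (s.1 ∘ blockPerm n σ) = w ∘ ρ := by
      rw [word_comp, ← hw, hσ, comp_reorder]
    have h2 : turn g (s.1 ∘ blockPerm n σ) = reorder (w ∘ ρ) (w ∘ ρ ∘ rot q) := by
      unfold turn
      rw [h1, Function.comp_assoc]
    have h3 : reorder w (w ∘ ρ ∘ rot q) = σ * turn g (s.1 ∘ blockPerm n σ) := by
      rw [h2, hσ, reorder_mul]
    rw [h3, blockPerm_mul]
    exact Prod.ext rfl (Equiv.ext fun _ => rfl)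

theorem addRight_pow_card {q : ℕ} [NeZero q] : (rot q) ^ q = 1 := by
  have : ∀ k : ℕ, ∀ i : Fin q, (rot q ^ k) i = i + k • (1 : Fin q) := by
    intro k
    induction k with
    | zero => simp
    | succ k ih =>
      intro i
      rw [pow_succ', Equiv.Perm.mul_apply, ih, succ_nsmul, ← add_assoc]
      rfl
  ext i
  rw [this]
  have h : q • (1 : Fin q) = 0 := by
    have := card_nsmul_eq_zero (x := (1 : Fin q))
    simpa using this
  rw [h]
  simp

theorem const_of_shift {q : ℕ} [NeZero q] (w : Fin q → ℕ)
    (h : w ∘ (rot q) = w) (i : Fin q) : w i = w 0 := by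
  have h1 : ∀ j : Fin q, w (j + 1) = w j := fun j => congrFun h j
  have h2 : ∀ k : ℕ, ∀ hk : k < q, w ⟨k, hk⟩ = w 0 := by
    intro k
    induction k with
    | zero => intro hk; rfl
    | succ k ih =>
      intro hk
      rw [← ih (by omega)]
      refine Eq.trans (congrArg w ?_) (h1 ⟨k, by omega⟩)
      apply Fin.ext
      rw [Fin.val_add, Fin.val_one', Nat.mod_eq_of_lt (a := 1) (by omega),
        Nat.mod_eq_of_lt hk]
  exact h2 i i.2

/-- There is no labelling satisfying the boundary condition for which every simplex of nonzero weight
has a gap and which is equivariant under all permutations of points that only reorder points at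
distance at least `g`. Indeed the action `step` has order `pᵃ`, preserves the weight and has no fixed
points among such simplices, so the total weight is divisible by `p`, while it equals one. -/
theorem no_labelling {q n m p a : ℕ} [NeZero q] [NeZero n] (hp : p.Prime) (hq : q = p ^ a)
    (e : Fin (m + 1) ≃ Fin q × Fin n) (lab : (Fin q × Fin n → ℤ) → Option (Fin q × Fin n))
    (g : ℤ) (hg : 0 ≤ g) (K : ℤ) (hK : 1 ≤ K)
    (hnone : ∀ x : Fin q × Fin n → ℤ, (∃ i, K < |x i|) → lab x = none → ∀ i, x i ≤ 0)
    (hsome : ∀ x : Fin q × Fin n → ℤ, (∃ i, K < |x i|) → ∀ i, lab x = some i → 0 < x i)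
    (hgap : ∀ x π, wt e lab x π ≠ 0 → ∃ cθ, Gap g (pts x) cθ)
    (hlab : ∀ (v : Fin q × Fin n → ℤ) (τ : Equiv.Perm (Fin q)),
      (∀ i j, (i < j ↔ τ i < τ j) ∨ ∃ c, g ≤ |v (τ i, c) - v (τ j, c)|) →
      lab (v ∘ blockPerm n τ) = (lab v).map (blockPerm n τ).symm) : False := by
  classical
  have hsum := sum_wt_eq_one e lab K hK hnone hsome
  rw [← Finset.sum_product'] at hsum
  set A := (Finset.Icc (fun _ : Fin q × Fin n => -(K + 2)) (fun _ => K + 2)) ×ˢ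
    (Finset.univ : Finset (Fin (m + 1) ≃ Fin q × Fin n)) with hA
  rw [← Finset.sum_filter_ne_zero] at hsum
  set B := A.filter fun s => wt e lab s.1 s.2 ≠ 0 with hB
  have hwt : ∀ s : (Fin q × Fin n → ℤ) × (Fin (m + 1) ≃ Fin q × Fin n),
      wt e lab s.1 s.2 ≠ 0 → wt e lab (step g s).1 (step g s).2 = wt e lab s.1 s.2 := by
    intro s hs
    have hgp := hgap _ _ hs
    refine wt_comp e lab s.1 s.2 _ fun k => hlab _ _ fun i j => ?_
    have hwu := comp_reorder (word g s.1) (rot q)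
    by_cases hij : word g s.1 (turn g s.1 i) = word g s.1 (turn g s.1 j)
    · left
      have hij' : (word g s.1 ∘ (rot q)) i =
          (word g s.1 ∘ (rot q)) j := by
        rw [← hwu]; exact hij
      constructor
      · intro h
        exact reorder_lt _ _ h hij'
      · intro h
        by_contra hn
        rcases (not_lt.1 hn).lt_or_eq with h1 | h1
        · exact absurd (reorder_lt _ _ h1 hij'.symm) h.asymm
        · rw [h1] at h; exact lt_irrefl _ h
    · right
      obtain ⟨c, hc⟩ := word_far hgp hij
      refine ⟨c, ?_⟩
      have h1 := vert_bound s.1 s.2 k (turn g s.1 i, c)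
      have h2 := vert_bound s.1 s.2 k (turn g s.1 j, c)
      rw [le_abs] at hc ⊢
      omega
  have hmem : ∀ s ∈ B, step g s ∈ B := by
    intro s hs
    simp only [hB, hA, Finset.mem_filter, Finset.mem_product, Finset.mem_univ, and_true,
      mem_box] at hs ⊢
    refine ⟨fun i => hs.1 _, ?_⟩
    rw [hwt s hs.2]
    exact hs.2
  have hdvd := dvd_sum_of_iterate (a := a) hp (α := B) (fun s => ⟨step g s.1, hmem s.1 s.2⟩)
    (by
      intro s
      apply Subtype.ext
      have : ∀ k : ℕ, (((fun s : B => (⟨step g s.1, hmem s.1 s.2⟩ : B))^[k] s : B) :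
          (Fin q × Fin n → ℤ) × (Fin (m + 1) ≃ Fin q × Fin n)) = (step g)^[k] s.1 := by
        intro k
        induction k with
        | zero => rfl
        | succ k ih => rw [Function.iterate_succ_apply', Function.iterate_succ_apply']; exact congrArg (step g) ih
      rw [this, step_iterate, ← hq, addRight_pow_card]
      simp [reorder_self]
      rfl)
    (by
      intro s hs
      have hs1 : s.1.1 ∘ blockPerm n (turn g s.1.1) = s.1.1 :=
        congrArg (fun t : B => t.1.1) hs
      have hw : wt e lab s.1.1 s.1.2 ≠ 0 := (Finset.mem_filter.1 s.2).2
      obtain ⟨i, j, hij⟩ := word_nonconst hg (hgap _ _ hw)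
      have h1 := word_comp g s.1.1 (turn g s.1.1)
      rw [hs1, turn, comp_reorder] at h1
      exact hij ((const_of_shift _ h1.symm i).trans (const_of_shift _ h1.symm j).symm))
    (fun s => wt e lab s.1.1 s.1.2)
    (fun s => hwt _ (Finset.mem_filter.1 s.2).2)
  have hs2 := Finset.sum_coe_sort B fun s => wt e lab s.1 s.2
  rw [hs2, hsum] at hdvd
  have := Int.natCast_dvd_natCast.1 (by simpa using hdvd : (p : ℤ) ∣ ((1 : ℕ) : ℤ))
  exact hp.one_lt.ne' (Nat.dvd_one.1 this)

/-! ### Zeros of equivariant maps -/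

/-- An equivariant choice of a positive coordinate. The chosen pair consists of a point of the tuple and
a coordinate, and is chosen as a function of the unordered tuple; injectivity then recovers the index. -/
theorem exists_label {q n : ℕ} [NeZero q] [NeZero n] {E : Type*} [Nonempty E]
    (H : (Fin q → E) → Fin q → Fin n → ℝ)
    (hH : ∀ z, Function.Injective z → ∀ σ : Equiv.Perm (Fin q), H (z ∘ σ) = H z ∘ σ) :
    ∃ l : (Fin q → E) → Option (Fin q × Fin n), ∀ z, Function.Injective z →
      (l z = none → ∀ i c, H z i c ≤ 0) ∧ (∀ i c, l z = some (i, c) → 0 < H z i c) ∧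
      ∀ σ : Equiv.Perm (Fin q), l (z ∘ σ) = (l z).map (blockPerm n σ).symm := by
  classical
  let Q : (Fin q → E) → E × Fin n → Prop := fun z s => ∃ i, z i = s.1 ∧ 0 < H z i s.2
  have hQ : ∀ z, Function.Injective z → ∀ σ : Equiv.Perm (Fin q), Q (z ∘ σ) = Q z := by
    intro z hz σ
    funext s
    apply propext
    simp only [Q, hH z hz σ, Function.comp_apply]
    exact σ.exists_congr_left.trans (by simp)
  refine ⟨fun z => if ∃ s, Q z s then
    some (Function.invFun z (Classical.epsilon (Q z)).1, (Classical.epsilon (Q z)).2) else none,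
    fun z hz => ⟨?_, ?_, ?_⟩⟩
  · intro h i c
    by_contra hc
    have hex : ∃ s, Q z s := ⟨(z i, c), i, rfl, not_le.1 hc⟩
    simp only [hex, if_true] at h
    exact Option.some_ne_none _ h
  · intro i c h
    by_cases hex : ∃ s, Q z s
    · simp only [hex, if_true, Option.some.injEq, Prod.mk.injEq] at h
      obtain ⟨i0, h1, h2⟩ := Classical.epsilon_spec hex
      obtain ⟨h3, h4⟩ := h
      rw [← h1, Function.leftInverse_invFun hz] at h3
      rw [h4, h3] at h2
      exact h2
    · simp only [hex, if_false] at h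
      exact absurd h.symm (Option.some_ne_none _)
  · intro σ
    simp only [hQ z hz σ]
    by_cases hex : ∃ s, Q z s
    · simp only [hex, if_true, Option.map_some]
      obtain ⟨i0, h1, h2⟩ := Classical.epsilon_spec hex
      have h3 : Function.invFun z (Classical.epsilon (Q z)).1 = i0 := by
        rw [← h1, Function.leftInverse_invFun hz]
      have h4 : Function.invFun (z ∘ σ) (Classical.epsilon (Q z)).1 = σ.symm i0 := by
        have : (Classical.epsilon (Q z)).1 = (z ∘ σ) (σ.symm i0) := by simp [h1]
        rw [this, Function.leftInverse_invFun (hz.comp σ.injective)]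
      rw [h3, h4]
      rfl
    · simp only [hex, if_false, Option.map_none]

/-- Without a gap the points have spread at most `q * g` in each coordinate: otherwise each of `q`
disjoint intervals of length `g` above the lower of two distant points would contain a coordinate of
some point, and by counting one of them would contain that lower point itself. -/
theorem spread_le_of_no_gap {q n : ℕ} {g : ℤ} (hg : 0 < g) (x : Fin q × Fin n → ℤ)
    (hno : ¬ ∃ cθ, Gap g (pts x) cθ) (c : Fin n) (i j : Fin q) :
    x (j, c) - x (i, c) ≤ q * g := by
  by_contra hlt
  push Not at hlt
  have hex : ∀ t : Fin q, ∃ l, x (i, c) + 1 + t * g ≤ x (l, c) ∧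
      x (l, c) < x (i, c) + 1 + t * g + g := by
    intro t
    by_contra hne
    push Not at hne
    refine hno ⟨(c, x (i, c) + 1 + t * g), ⟨_, ⟨i, rfl⟩, ?_⟩, ⟨_, ⟨j, rfl⟩, ?_⟩, ?_⟩
    · have : (0 : ℤ) ≤ t * g := by positivity
      simp only
      omega
    · have : ((t : ℤ) + 1) * g ≤ q * g := by
        have ht : ((t : ℤ) + 1) ≤ q := by have := t.2; omega
        exact mul_le_mul_of_nonneg_right ht hg.le
      simp only
      linarith
    · rintro _ ⟨l, rfl⟩
      by_cases h : x (l, c) < x (i, c) + 1 + t * g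
      · exact Or.inl h
      · exact Or.inr (hne l (not_lt.1 h))
  choose l hl1 hl2 using hex
  have hinj : Function.Injective l := by
    have key : ∀ s t : Fin q, l s = l t → s ≤ t := by
      intro s t hst
      have h1 := hl1 s
      have h2 := hl2 t
      rw [hst] at h1
      have h3 : ((s : ℤ)) * g < (t + 1) * g := by linarith
      have h4 := lt_of_mul_lt_mul_right h3 hg.le
      rw [Fin.le_def]
      omega
    intro s t hst
    exact le_antisymm (key s t hst) (key t s hst.symm)
  obtain ⟨t, ht⟩ := Finite.surjective_of_injective hinj i
  have h1 := hl1 t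
  rw [ht] at h1
  have : (0 : ℤ) ≤ t * g := by positivity
  omega

/-- An embedding of arbitrary tuples in `Fin n → ℝ` into injective tuples in `(Fin n → ℝ) × ℝ`: the
added coordinate of a point increases by up to one for each point nearer than one with a smaller
index. Norms are sup norms. -/
noncomputable def lift {q n : ℕ} (y : Fin q → Fin n → ℝ) (i : Fin q) : (Fin n → ℝ) × ℝ :=
  (y i, ∑ j, if j < i then max 0 (1 - ‖y i - y j‖) else 0)

theorem lift_injective {q n : ℕ} (y : Fin q → Fin n → ℝ) : Function.Injective (lift y) := by
  have key : ∀ i j : Fin q, j < i → lift y i ≠ lift y j := by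
    intro i j hji h
    have h1 : y i = y j := congrArg Prod.fst h
    have h2 : (∑ l, if l < i then max 0 (1 - ‖y i - y l‖) else 0) =
      ∑ l, if l < j then max 0 (1 - ‖y j - y l‖) else 0 := congrArg Prod.snd h
    refine absurd h2 (ne_of_gt (Finset.sum_lt_sum ?_ ⟨j, Finset.mem_univ _, ?_⟩))
    · intro l _
      split_ifs with h3 h4 h4
      · rw [h1]
      · exact absurd (h3.trans hji) h4
      · exact le_max_left _ _
      · exact le_rfl
    · simp [hji, h1]
  intro i j h
  rcases lt_trichotomy i j with h1 | h1 | h1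
  · exact absurd h.symm (key _ _ h1)
  · exact h1
  · exact absurd h (key _ _ h1)

theorem continuous_lift {q n : ℕ} :
    Continuous (lift : (Fin q → Fin n → ℝ) → Fin q → (Fin n → ℝ) × ℝ) := by
  refine continuous_pi fun i => (continuous_apply i).prodMk ?_
  refine continuous_finsetSum _ fun j _ => ?_
  split_ifs
  · fun_prop
  · exact continuous_const

/-- The embedding commutes with permutations that preserve the order of the indices of points at
distance less than one. -/
theorem lift_comp {q n : ℕ} (y : Fin q → Fin n → ℝ) (τ : Equiv.Perm (Fin q))
    (h : ∀ i j, (i < j ↔ τ i < τ j) ∨ 1 ≤ ‖y (τ i) - y (τ j)‖) :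
    lift (y ∘ τ) = lift y ∘ τ := by
  funext i
  refine Prod.ext rfl ?_
  simp only [lift, Function.comp_apply]
  rw [← Equiv.sum_comp τ fun j => if j < τ i then max 0 (1 - ‖y (τ i) - y j‖) else 0]
  refine Finset.sum_congr rfl fun j _ => ?_
  rcases h j i with h1 | h1
  · simp only [h1]
  · rw [norm_sub_rev] at h1
    rw [max_eq_left (by linarith)]
    simp

/-- The average of the points of a tuple. -/
noncomputable def mean {q n : ℕ} (y : Fin q → Fin n → ℝ) (c : Fin n) : ℝ :=
  (∑ i, y i c) / q

theorem mean_comp {q n : ℕ} (y : Fin q → Fin n → ℝ) (τ : Equiv.Perm (Fin q)) :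
    mean (y ∘ τ) = mean y := by
  funext c
  unfold mean
  congr 1
  exact Equiv.sum_comp τ fun i => y i c

theorem le_mean {q n : ℕ} [NeZero q] (y : Fin q → Fin n → ℝ) (c : Fin n) (b : ℝ)
    (h : ∀ i, b ≤ y i c) : b ≤ mean y c := by
  have hq : (0 : ℝ) < q := Nat.cast_pos.2 (NeZero.pos q)
  rw [mean, le_div_iff₀ hq]
  calc b * q = ∑ _i : Fin q, b := by simp [mul_comm]
    _ ≤ _ := Finset.sum_le_sum fun i _ => h i

theorem mean_le {q n : ℕ} [NeZero q] (y : Fin q → Fin n → ℝ) (c : Fin n) (b : ℝ)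
    (h : ∀ i, y i c ≤ b) : mean y c ≤ b := by
  have hq : (0 : ℝ) < q := Nat.cast_pos.2 (NeZero.pos q)
  rw [mean, div_le_iff₀ hq]
  calc _ ≤ ∑ _i : Fin q, b := Finset.sum_le_sum fun i _ => h i
    _ = b * q := by simp [mul_comm]

/-- A continuous zero-free map `g` admits a mesh so fine that on a set of diameter `1 / N` inside the
ball it cannot happen that all coordinates of `g` are nonpositive at one point while each coordinate
is positive at some point. -/
theorem exists_mesh {q n : ℕ} (g : (Fin q → Fin n → ℝ) → Fin q → Fin n → ℝ)
    (hg : Continuous g) (h0 : ∀ y, g y ≠ 0) (R : ℝ) :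
    ∃ N : ℕ, 0 < N ∧ ∀ y : Fin q → Fin n → ℝ, ‖y‖ ≤ R →
      (∃ y', ‖y'‖ ≤ R ∧ dist y y' ≤ 1 / N ∧ ∀ i c, g y' i c ≤ 0) →
      ¬ ∀ i c, ∃ y', ‖y'‖ ≤ R ∧ dist y y' ≤ 1 / N ∧ 0 < g y' i c := by
  by_cases hR : (Metric.closedBall (0 : Fin q → Fin n → ℝ) R).Nonempty
  swap
  · refine ⟨1, one_pos, fun y hy => absurd ⟨y, ?_⟩ hR⟩
    simpa using hy
  have hB : IsCompact (Metric.closedBall (0 : Fin q → Fin n → ℝ) R) := isCompact_closedBall _ _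
  obtain ⟨y0, hy0, hmin⟩ := hB.exists_isMinOn hR hg.norm.continuousOn
  have hδ : 0 < ‖g y0‖ := norm_pos_iff.2 (h0 y0)
  have hu := hB.uniformContinuousOn_of_continuous hg.continuousOn
  obtain ⟨η, hη, hη'⟩ := Metric.uniformContinuousOn_iff.1 hu _ hδ
  obtain ⟨N, hN⟩ := exists_nat_one_div_lt hη
  refine ⟨N + 1, N.succ_pos, fun y hy hn hs => ?_⟩
  have hyB : y ∈ Metric.closedBall (0 : Fin q → Fin n → ℝ) R := by simpa using hy
  have hclose : ∀ y', ‖y'‖ ≤ R → dist y y' ≤ 1 / (N + 1 : ℕ) → ∀ i c,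
      |g y i c - g y' i c| < ‖g y0‖ := by
    intro y' hy' hd i c
    have h1 := hη' y hyB y' (by simpa using hy') (hd.trans_lt (by push_cast; exact hN))
    have h2 := (dist_le_pi_dist (g y i) (g y' i) c).trans (dist_le_pi_dist (g y) (g y') i)
    rw [Real.dist_eq] at h2
    exact h2.trans_lt h1
  have hlt : ‖g y‖ < ‖g y0‖ := by
    rw [pi_norm_lt_iff hδ]
    intro i
    rw [pi_norm_lt_iff hδ]
    intro c
    obtain ⟨y1, hy1, hd1, h1⟩ := hn
    obtain ⟨y2, hy2, hd2, h2⟩ := hs i c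
    have h3 := abs_lt.1 (hclose y1 hy1 hd1 i c)
    have h4 := abs_lt.1 (hclose y2 hy2 hd2 i c)
    have h5 := h1 i c
    rw [Real.norm_eq_abs, abs_lt]
    constructor <;> linarith
  exact absurd (hmin hyB) (not_le.2 hlt)

/-- The tuple of points in the lattice of mesh `1 / N` encoded by `v`. -/
noncomputable def scaled {q n : ℕ} (N : ℕ) (v : Fin q × Fin n → ℤ) (i : Fin q) (c : Fin n) : ℝ :=
  v (i, c) / N

/-- A bounded continuous equivariant map with zero column sums, defined on injective tuples of prime
power length, has a zero. -/
theorem exists_zero {q n p a : ℕ} [NeZero n] (hp : p.Prime) (hq : q = p ^ a)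
    (f : (Fin q → (Fin n → ℝ) × ℝ) → Fin q → Fin n → ℝ)
    (hcont : ContinuousOn f {x | Function.Injective x})
    (hequi : ∀ x, Function.Injective x → ∀ σ : Equiv.Perm (Fin q), f (x ∘ σ) = f x ∘ σ)
    (hsum : ∀ x, Function.Injective x → ∀ c, ∑ i, f x i c = 0)
    (C : ℕ) (hb : ∀ x, Function.Injective x → ∀ i c, |f x i c| ≤ C) :
    ∃ x, Function.Injective x ∧ f x = 0 := by
  classical
  by_contra hne
  push Not at hne
  have hq0 : 0 < q := hq ▸ pow_pos hp.pos a
  have : NeZero q := ⟨hq0.ne'⟩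
  have hqR : (0 : ℝ) < q := Nat.cast_pos.2 hq0
  let g : (Fin q → Fin n → ℝ) → Fin q → Fin n → ℝ := fun y i c => f (lift y) i c + mean y c
  have hg : Continuous g := by
    have h1 : Continuous fun y : Fin q → Fin n → ℝ => f (lift y) :=
      hcont.comp_continuous continuous_lift lift_injective
    refine continuous_pi fun i => continuous_pi fun c => Continuous.add ?_ ?_
    · exact (continuous_apply c).comp ((continuous_apply i).comp h1)
    · unfold mean; fun_prop
  have hg0 : ∀ y, g y ≠ 0 := by
    intro y hy
    have h1 : ∀ i c, f (lift y) i c + mean y c = 0 := fun i c => congrFun (congrFun hy i) c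
    have h2 : ∀ c, mean y c = 0 := by
      intro c
      have h3 : ∑ i, (f (lift y) i c + mean y c) = 0 := Finset.sum_eq_zero fun i _ => h1 i c
      rw [Finset.sum_add_distrib, hsum _ (lift_injective y), zero_add] at h3
      simpa [hq0.ne'] using h3
    apply hne _ (lift_injective y)
    funext i c
    have := h1 i c
    rw [h2, add_zero] at this
    exact this
  -- Radius large enough that a point beyond it, in a tuple of spread at most `q`, forces every
  -- point of the tuple, and of the neighbouring vertices, to be beyond `C + 1` with the same sign.
  set R : ℕ := C + 2 * q + 4 with hR
  obtain ⟨N, hN, hmesh⟩ := exists_mesh g hg hg0 R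
  have hNR : (0 : ℝ) < N := Nat.cast_pos.2 hN
  -- Inside the ball `H` is the perturbed map; outside it is the identity, which has the required
  -- sign pattern. It need not be continuous.
  let H : (Fin q → (Fin n → ℝ) × ℝ) → Fin q → Fin n → ℝ := fun z i c =>
    if ∀ i c, |(z i).1 c| ≤ R then f z i c + mean (fun i => (z i).1) c else (z i).1 c
  have hH : ∀ z, Function.Injective z → ∀ σ : Equiv.Perm (Fin q), H (z ∘ σ) = H z ∘ σ := by
    intro z hz σ
    funext i c
    have h1 : (∀ i c, |((z ∘ σ) i).1 c| ≤ R) ↔ ∀ i c, |(z i).1 c| ≤ R :=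
      σ.forall_congr_left.trans (by simp)
    have h2 : mean (fun i => ((z ∘ σ) i).1) = mean fun i => (z i).1 :=
      mean_comp (fun i => (z i).1) σ
    simp only [H, h1, h2, hequi z hz σ]
    rfl
  obtain ⟨l, hl⟩ := exists_label H hH
  have hHin : ∀ y : Fin q → Fin n → ℝ, ‖y‖ ≤ R → ∀ i c, H (lift y) i c = g y i c := by
    intro y hy i c
    have : ∀ i c, |((lift y) i).1 c| ≤ R := fun i c =>
      ((norm_le_pi_norm (y i) c).trans (norm_le_pi_norm y i)).trans hy
    simp only [H]
    rw [if_pos this]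
    rfl
  have hHout : ∀ (y : Fin q → Fin n → ℝ) i c, R < |y i c| → H (lift y) = y := by
    intro y i c hy
    have : ¬ ∀ i c, |((lift y) i).1 c| ≤ R := fun h => absurd (h i c) (not_le.2 hy)
    funext i c
    simp only [H]
    rw [if_neg this]
    rfl
  have hHpos : ∀ (y : Fin q → Fin n → ℝ) c, (∀ i, (C : ℝ) + 1 ≤ y i c) →
      ∀ i, 0 < H (lift y) i c := by
    intro y c hy i
    have hC : (0 : ℝ) ≤ C := Nat.cast_nonneg C
    by_cases h : ∀ i c, |((lift y) i).1 c| ≤ R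
    · have h1 := le_mean y c _ hy
      have h2 := (abs_le.1 (hb _ (lift_injective y) i c)).1
      simp only [H]
      rw [if_pos h]
      change 0 < f (lift y) i c + mean y c
      linarith
    · simp only [H]
      rw [if_neg h]
      change 0 < y i c
      linarith [hy i]
  have hHneg : ∀ (y : Fin q → Fin n → ℝ) c, (∀ i, y i c ≤ -((C : ℝ) + 1)) →
      ∀ i, H (lift y) i c < 0 := by
    intro y c hy i
    have hC : (0 : ℝ) ≤ C := Nat.cast_nonneg C
    by_cases h : ∀ i c, |((lift y) i).1 c| ≤ R
    · have h1 := mean_le y c _ hy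
      have h2 := (abs_le.1 (hb _ (lift_injective y) i c)).2
      simp only [H]
      rw [if_pos h]
      change f (lift y) i c + mean y c < 0
      linarith
    · simp only [H]
      rw [if_neg h]
      change y i c < 0
      linarith [hy i]
  let lab : (Fin q × Fin n → ℤ) → Option (Fin q × Fin n) := fun v => l (lift (scaled N v))
  have hlabn : ∀ v, lab v = none → ∀ i c, H (lift (scaled N v)) i c ≤ 0 := fun v =>
    (hl _ (lift_injective _)).1
  have hlabs : ∀ v i c, lab v = some (i, c) → 0 < H (lift (scaled N v)) i c := fun v =>
    (hl _ (lift_injective _)).2.1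
  have hbig : ∀ (v : Fin q × Fin n → ℤ) i c, ((R * N : ℕ) : ℤ) < |v (i, c)| →
      (R : ℝ) < |scaled N v i c| := by
    intro v i c h
    rw [scaled, abs_div, Nat.abs_cast, lt_div_iff₀ hNR]
    exact_mod_cast h
  obtain ⟨m, hm⟩ : ∃ m, q * n = m + 1 :=
    Nat.exists_eq_succ_of_ne_zero (mul_pos hq0 (NeZero.pos n)).ne'
  let e : Fin (m + 1) ≃ Fin q × Fin n := (finCongr hm.symm).trans finProdFinEquiv.symm
  refine no_labelling hp hq e lab (N : ℤ) (by positivity) ((R * N : ℕ) : ℤ) ?_ ?_ ?_ ?_ ?_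
  · have : 0 < R * N := by positivity
    omega
  · rintro x ⟨⟨i, c⟩, hi⟩ hx ⟨i', c'⟩
    have h1 := hlabn x hx i' c'
    rw [hHout _ _ _ (hbig x i c hi), scaled, div_le_iff₀ hNR, zero_mul] at h1
    exact_mod_cast h1
  · rintro x ⟨⟨i, c⟩, hi⟩ ⟨i', c'⟩ hx
    have h1 := hlabs x i' c' hx
    rw [hHout _ _ _ (hbig x i c hi), scaled, lt_div_iff₀ hNR, zero_mul] at h1
    exact_mod_cast h1
  · intro x π hwt
    have hsur := wt_surjective e lab x π hwt
    obtain ⟨kn, hkn⟩ := hsur none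
    -- A simplex inside the ball contradicts `hmesh`; one reaching outside without a gap lacks a label.
    by_cases hall : ∀ k : Fin (m + 2), ∀ i c, |vert x π k (i, c)| ≤ ((R * N : ℕ) : ℤ)
    · exfalso
      have hin : ∀ k : Fin (m + 2), ‖scaled N (vert x π k)‖ ≤ R := by
        intro k
        rw [pi_norm_le_iff_of_nonneg (by positivity)]
        intro i
        rw [pi_norm_le_iff_of_nonneg (by positivity)]
        intro c
        rw [Real.norm_eq_abs, scaled, abs_div, Nat.abs_cast, div_le_iff₀ hNR]
        exact_mod_cast hall k i c
      have hdist : ∀ k : Fin (m + 2),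
          dist (scaled N (vert x π (0 : Fin (m + 2)))) (scaled N (vert x π k)) ≤ 1 / N := by
        intro k
        rw [dist_pi_le_iff (by positivity)]
        intro i
        rw [dist_pi_le_iff (by positivity)]
        intro c
        have h1 := vert_bound x π k (i, c)
        have h2 : vert x π (0 : Fin (m + 2)) (i, c) = x (i, c) := by simp [vert]
        rw [Real.dist_eq, scaled, scaled, ← sub_div, abs_div, Nat.abs_cast]
        refine div_le_div_of_nonneg_right ?_ hNR.le
        rw [h2]
        have h3 : |x (i, c) - vert x π k (i, c)| ≤ 1 := by
          rw [abs_le]; omega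
        exact_mod_cast h3
      refine hmesh _ (hin 0) ⟨_, hin kn, hdist kn, fun i c => ?_⟩ fun i c => ?_
      · rw [← hHin _ (hin kn)]
        exact hlabn _ hkn i c
      · obtain ⟨k, hk⟩ := hsur (some (i, c))
        refine ⟨_, hin k, hdist k, ?_⟩
        rw [← hHin _ (hin k)]
        exact hlabs _ i c hk
    · push Not at hall
      obtain ⟨k0, i0, c0, h0⟩ := hall
      by_contra hno
      have hgap := spread_le_of_no_gap (by positivity) x hno c0
      have hv0 := vert_bound x π k0 (i0, c0)
      have hRN : ((R * N : ℕ) : ℤ) = (C + 1) * N + q * N + (q + 3) * N := by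
        rw [hR]; push_cast; ring
      have hN1 : (1 : ℤ) ≤ N := by exact_mod_cast hN
      have h3N : (3 : ℤ) ≤ (q + 3) * N := by nlinarith [(Nat.cast_nonneg q : (0 : ℤ) ≤ q)]
      rw [hRN] at h0
      rcases lt_abs.1 h0 with h1 | h1
      · have hpos : ∀ i, (C : ℝ) + 1 ≤ scaled N (vert x π kn) i c0 := by
          intro i
          have h2 := hgap i i0
          have h3 := vert_bound x π kn (i, c0)
          rw [scaled, le_div_iff₀ hNR]
          have : ((C : ℤ) + 1) * N ≤ vert x π kn (i, c0) := by omega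
          exact_mod_cast this
        exact absurd (hlabn _ hkn i0 c0) (not_le.2 (hHpos _ c0 hpos i0))
      · obtain ⟨k, hk⟩ := hsur (some (i0, c0))
        have hneg : ∀ i, scaled N (vert x π k) i c0 ≤ -((C : ℝ) + 1) := by
          intro i
          have h2 := hgap i0 i
          have h3 := vert_bound x π k (i, c0)
          rw [scaled, div_le_iff₀ hNR]
          have : vert x π k (i, c0) ≤ -((C : ℤ) + 1) * N := by
            rw [neg_mul]
            omega
          exact_mod_cast this
        exact absurd (hlabs _ i0 c0 hk) (not_lt.2 (hHneg _ c0 hneg i0).le)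
  · intro v τ hτ
    have h1 : scaled N (v ∘ blockPerm n τ) = scaled N v ∘ τ := rfl
    have h2 : lift (scaled N v ∘ τ) = lift (scaled N v) ∘ τ := by
      refine lift_comp _ _ fun i j => (hτ i j).imp_right ?_
      rintro ⟨c, hc⟩
      refine le_trans ?_ (norm_le_pi_norm (scaled N v (τ i) - scaled N v (τ j)) c)
      rw [Real.norm_eq_abs, Pi.sub_apply, scaled, scaled, ← sub_div, abs_div, Nat.abs_cast,
        le_div_iff₀ hNR, one_mul]
      exact_mod_cast hc
    change l (lift (scaled N (v ∘ blockPerm n τ))) = _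
    rw [h1, h2]
    exact (hl _ (lift_injective _)).2.2 τ

/-! ### Parts of the partition -/

/-- The part of the partition on which `u j` is maximal. -/
def cell {X : Type*} [TopologicalSpace X] {q : ℕ} (u : Fin q → C(X, ℝ)) (j : Fin q) : Set X :=
  {x | ∀ l, u l x ≤ u j x}

section Cells

variable {X : Type*} [TopologicalSpace X] {q : ℕ}

theorem cell_comp (u : Fin q → C(X, ℝ)) (σ : Equiv.Perm (Fin q)) (j : Fin q) :
    cell (u ∘ σ) j = cell u (σ j) := by
  ext x
  exact σ.forall_congr_left.trans (by simp [cell])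

theorem isClosed_cell (u : Fin q → C(X, ℝ)) (j : Fin q) : IsClosed (cell u j) := by
  simp only [cell, Set.ofPred_forall]
  exact isClosed_iInter fun l => isClosed_le (u l).continuous (u j).continuous

variable [MeasurableSpace X] {ν : Measure X}

theorem ae_no_tie {u : Fin q → C(X, ℝ)} (hu : ∀ i j, i ≠ j → ν {x | u i x = u j x} = 0) :
    ∀ᵐ x ∂ν, ∀ i j, i ≠ j → u i x ≠ u j x := by
  rw [ae_all_iff]
  intro i
  rw [ae_all_iff]
  intro j
  by_cases hij : i = j
  · simp [hij]
  · filter_upwards [measure_eq_zero_iff_ae_notMem.1 (hu i j hij)] with x hx _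
    exact hx

/-- A part of positive measure contains a point where `u j` is strictly larger than the other
functions, and such points are interior. -/
theorem interior_cell_nonempty {u : Fin q → C(X, ℝ)}
    (hu : ∀ i j, i ≠ j → ν {x | u i x = u j x} = 0) {j : Fin q} (hj : ν (cell u j) ≠ 0) :
    (interior (cell u j)).Nonempty := by
  have hopen : IsOpen {x | ∀ l, l ≠ j → u l x < u j x} := by
    simp only [Set.ofPred_forall]
    refine isOpen_iInter_of_finite fun l => isOpen_iInter_of_finite fun _ => ?_
    exact isOpen_lt (u l).continuous (u j).continuous
  have hsub : {x | ∀ l, l ≠ j → u l x < u j x} ⊆ cell u j := by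
    intro x hx l
    by_cases hl : l = j
    · rw [hl]
    · exact (hx l hl).le
  have hex : ∃ x, x ∈ cell u j ∧ ∀ i l, i ≠ l → u i x ≠ u l x := by
    by_contra hne
    push Not at hne
    apply hj
    rw [measure_eq_zero_iff_ae_notMem]
    filter_upwards [ae_no_tie hu] with x hx hxj
    obtain ⟨i, l, h1, h2⟩ := hne x hxj
    exact hx i l h1 h2
  obtain ⟨x, hxj, hx⟩ := hex
  exact ⟨x, interior_maximal hsub hopen fun l hl => (hxj l).lt_of_ne (hx l j hl)⟩

variable [BorelSpace X]

theorem sum_cell [IsProbabilityMeasure ν] [NeZero q] {u : Fin q → C(X, ℝ)}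
    (hu : ∀ i j, i ≠ j → ν {x | u i x = u j x} = 0) : ∑ j, (ν (cell u j)).toReal = 1 := by
  have hcov : ⋃ j, cell u j = Set.univ := by
    refine Set.eq_univ_of_forall fun x => Set.mem_iUnion.2 ?_
    obtain ⟨j, hj⟩ := Finite.exists_max fun l => u l x
    exact ⟨j, hj⟩
  have h1 : ν (⋃ j, cell u j) = ∑' j, ν (cell u j) := by
    refine measure_iUnion₀ ?_ fun j => (isClosed_cell u j).measurableSet.nullMeasurableSet
    intro i j hij
    refine measure_mono_null ?_ (hu i j hij)
    rintro x ⟨hi, hj⟩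
    exact le_antisymm (hj i) (hi j)
  rw [hcov, measure_univ, tsum_fintype] at h1
  rw [← ENNReal.toReal_sum fun j _ => measure_ne_top ν _, ← h1, ENNReal.toReal_one]

/-- The measures of the parts depend continuously on the functions: away from the null set of ties,
membership in a part is locally constant in the parameter. -/
theorem continuousAt_cell [IsFiniteMeasure ν] {P : Type*} [TopologicalSpace P]
    [FirstCountableTopology P] {u : P → Fin q → C(X, ℝ)}
    (hcont : ∀ l x, Continuous fun p => u p l x) {p₀ : P}
    (hu : ∀ i j, i ≠ j → ν {x | u p₀ i x = u p₀ j x} = 0) (j : Fin q) :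
    ContinuousAt (fun p => (ν (cell (u p) j)).toReal) p₀ := by
  refine (ENNReal.tendsto_toReal (measure_ne_top ν _)).comp ?_
  refine tendsto_measure_of_ae_tendsto_indicator_of_isFiniteMeasure (nhds p₀)
    (isClosed_cell _ j).measurableSet (fun p => (isClosed_cell _ j).measurableSet) ?_
  filter_upwards [ae_no_tie hu] with x hx
  by_cases hxj : x ∈ cell (u p₀) j
  · have h1 : ∀ᶠ p in nhds p₀, ∀ l, u p l x ≤ u p j x := by
      rw [Filter.eventually_all]
      intro l
      by_cases hl : l = j
      · exact Filter.Eventually.of_forall fun p => by rw [hl]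
      · have h2 : u p₀ l x < u p₀ j x := (hxj l).lt_of_ne (hx l j hl)
        exact ((hcont l x).continuousAt.eventually_lt (hcont j x).continuousAt h2).mono
          fun p hp => hp.le
    filter_upwards [h1] with p hp
    exact ⟨fun _ => hxj, fun _ => hp⟩
  · obtain ⟨l, hl⟩ : ∃ l, u p₀ j x < u p₀ l x := by
      simpa [cell] using hxj
    filter_upwards [(hcont j x).continuousAt.eventually_lt (hcont l x).continuousAt hl] with p hp
    exact ⟨fun h => absurd (h l) (not_le.2 hp), fun h => absurd h hxj⟩

end Cells

theorem continuousOn_mul_of_bounded {P : Type*} [TopologicalSpace P] {S : Set P} {ψ b : P → ℝ}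
    (hψ : ContinuousOn ψ S) (B : ℝ) (hB : ∀ p, |b p| ≤ B)
    (hb : ∀ p ∈ S, ψ p ≠ 0 → ContinuousWithinAt b S p) :
    ContinuousOn (fun p => ψ p * b p) S := by
  intro p hp
  by_cases h : ψ p = 0
  · have h1 := hψ p hp
    unfold ContinuousWithinAt at h1 ⊢
    rw [h] at h1
    simp only [h, zero_mul]
    refine h1.zero_mul_isBoundedUnder_le ?_
    exact Filter.isBoundedUnder_of ⟨B, hB⟩
  · exact (hψ p hp).mul (hb p hp h)

end Equipartition

/-- Gromov-type generalization: for a measure-separating subspace `L` of dimension `n + 1`,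
`n - k` absolutely continuous probability measures, a prime power `q`, a `q`-admissible
center function `c`, and a continuous map `h : X → ℝᵏ`, there is a generalized Voronoi
partition into `q` parts equalizing all the measures and with all values `h(c(Vⱼ))` equal. -/
theorem stmt_9 {X : Type*} [TopologicalSpace X] [CompactSpace X]
    [MeasurableSpace X] [BorelSpace X]
    (μ : Measure X) [IsProbabilityMeasure μ]
    (n k : ℕ) (hkn : k < n)
    (L : Submodule ℝ C(X, ℝ)) (hL : Module.finrank ℝ L = n + 1)
    (hsep : ∀ f g : C(X, ℝ), f ∈ L → g ∈ L → f ≠ g → μ {x | f x = g x} = 0)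
    (μs : Fin (n - k) → Measure X) (hprob : ∀ i, IsProbabilityMeasure (μs i))
    (hac : ∀ i, μs i ≪ μ)
    (q : ℕ) (hq : IsPrimePow q)
    (c : (Fin q → C(X, ℝ)) → Fin q → X)
    (hc_cont : ContinuousOn c
      {u : Fin q → C(X, ℝ) | (∀ j, u j ∈ L) ∧ Function.Injective u ∧
        ∀ j : Fin q, (interior {x | ∀ l : Fin q, u l x ≤ u j x}).Nonempty})
    (hc_equiv : ∀ u ∈ {u : Fin q → C(X, ℝ) | (∀ j, u j ∈ L) ∧ Function.Injective u ∧
        ∀ j : Fin q, (interior {x | ∀ l : Fin q, u l x ≤ u j x}).Nonempty},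
      ∀ σ : Equiv.Perm (Fin q), c (u ∘ σ) = c u ∘ σ)
    (h : X → Fin k → ℝ) (hh : Continuous h) :
    ∃ u : Fin q → C(X, ℝ), (∀ j, u j ∈ L) ∧ Function.Injective u ∧
      (∀ (i : Fin (n - k)) (j : Fin q),
        μs i {x | ∀ l : Fin q, u l x ≤ u j x} = 1 / q) ∧
      ∀ j l : Fin q, h (c u j) = h (c u l) := by
  classical
  obtain ⟨p, a, hp, -, hpq⟩ := hq
  have hp' : p.Prime := hp.nat_prime
  have hq0 : 0 < q := hpq ▸ pow_pos hp'.pos a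
  have : NeZero q := ⟨hq0.ne'⟩
  have : NeZero n := ⟨by omega⟩
  have hqR : (0 : ℝ) < q := Nat.cast_pos.2 hq0
  have hfin : Module.Finite ℝ L := Module.finite_of_finrank_pos (by omega)
  let e : ((Fin n → ℝ) × ℝ) ≃ₗ[ℝ] L := LinearEquiv.ofFinrankEq _ _ (by simp [hL])
  let u : (Fin q → (Fin n → ℝ) × ℝ) → Fin q → C(X, ℝ) := fun x j => (e (x j) : C(X, ℝ))
  have hucont : Continuous u := by
    refine continuous_pi fun j => ?_
    have he : Continuous e := e.toLinearMap.continuous_of_finiteDimensional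
    exact continuous_subtype_val.comp (he.comp (continuous_apply j))
  have huL : ∀ x j, u x j ∈ L := fun x j => (e (x j)).2
  have huinj : ∀ x, Function.Injective x → Function.Injective (u x) := fun x hx =>
    Subtype.val_injective.comp (e.injective.comp hx)
  have hucomp : ∀ x (σ : Equiv.Perm (Fin q)), u (x ∘ σ) = u x ∘ σ := fun x σ => rfl
  have htie : ∀ x, Function.Injective x → ∀ t i j, i ≠ j →
      μs t {y | u x i y = u x j y} = 0 := fun x hx t i j hij =>
    hac t (hsep _ _ (huL x i) (huL x j) ((huinj x hx).ne hij))
  let V : Fin (n - k) → (Fin q → (Fin n → ℝ) × ℝ) → Fin q → ℝ := fun t x j =>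
    (μs t (Equipartition.cell (u x) j)).toReal
  have hVcont : ∀ t j, ContinuousOn (fun x => V t x j) {x | Function.Injective x} := by
    intro t j x hx
    refine (Equipartition.continuousAt_cell (fun l y => ?_) (htie x hx t) j).continuousWithinAt
    exact (continuous_eval_const y).comp ((continuous_apply l).comp hucont)
  have hVsum : ∀ t x, Function.Injective x → ∑ j, V t x j = 1 := fun t x hx =>
    Equipartition.sum_cell (htie x hx t)
  have hV0 : ∀ t x j, 0 ≤ V t x j := fun t x j => ENNReal.toReal_nonneg
  have hV1 : ∀ t x j, V t x j ≤ 1 := fun t x j => by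
    have := measureReal_le_one (μ := μs t) (s := Equipartition.cell (u x) j)
    exact this
  have hVcomp : ∀ t x (σ : Equiv.Perm (Fin q)) j, V t (x ∘ σ) j = V t x (σ j) := by
    intro t x σ j
    simp only [V, hucomp, Equipartition.cell_comp]
  let t₀ : Fin (n - k) := ⟨0, by omega⟩
  -- `ψ` vanishes as soon as some part is null, so it kills the values of `c` outside its domain.
  let ψ : (Fin q → (Fin n → ℝ) × ℝ) → ℝ := fun x => ∏ j, V t₀ x j
  have hψcont : ContinuousOn ψ {x | Function.Injective x} :=
    continuousOn_finsetProd _ fun j _ => hVcont t₀ j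
  have hψ0 : ∀ x, 0 ≤ ψ x := fun x => Finset.prod_nonneg fun j _ => hV0 _ _ _
  have hψ1 : ∀ x, ψ x ≤ 1 := fun x =>
    Finset.prod_le_one (fun j _ => hV0 _ _ _) fun j _ => hV1 _ _ _
  have hψcomp : ∀ x (σ : Equiv.Perm (Fin q)), ψ (x ∘ σ) = ψ x := by
    intro x σ
    simp only [ψ, hVcomp]
    exact Equiv.prod_comp σ fun j => V t₀ x j
  set U : Set (Fin q → C(X, ℝ)) := {u : Fin q → C(X, ℝ) | (∀ j, u j ∈ L) ∧
    Function.Injective u ∧ ∀ j : Fin q, (interior {x | ∀ l : Fin q, u l x ≤ u j x}).Nonempty}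
    with hU
  have hψU : ∀ x, Function.Injective x → ψ x ≠ 0 → u x ∈ U := by
    intro x hx hψx
    refine ⟨huL x, huinj x hx, fun j => ?_⟩
    refine Equipartition.interior_cell_nonempty (htie x hx t₀) (j := j) fun h0 => hψx ?_
    exact Finset.prod_eq_zero (Finset.mem_univ j) (by simp only [V, h0, ENNReal.toReal_zero])
  obtain ⟨B, hB⟩ := isCompact_univ.exists_bound_of_continuousOn hh.continuousOn
  have hB' : ∀ y i, |h y i| ≤ B := fun y i =>
    (norm_le_pi_norm (h y) i).trans (hB y (Set.mem_univ y))
  let d : Fin k → (Fin q → (Fin n → ℝ) × ℝ) → Fin q → ℝ := fun i x j =>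
    h (c (u x) j) i - (∑ l, h (c (u x) l) i) / q
  have hd : ∀ i x j, |d i x j| ≤ 2 * B := by
    intro i x j
    have h1 : |(∑ l, h (c (u x) l) i) / q| ≤ B := by
      rw [abs_div, Nat.abs_cast, div_le_iff₀ hqR]
      calc _ ≤ ∑ l, |h (c (u x) l) i| := Finset.abs_sum_le_sum_abs _ _
        _ ≤ ∑ _l : Fin q, B := Finset.sum_le_sum fun l _ => hB' _ _
        _ = B * q := by simp [mul_comm]
    calc |d i x j| ≤ |h (c (u x) j) i| + |(∑ l, h (c (u x) l) i) / q| := abs_sub _ _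
      _ ≤ 2 * B := by linarith [hB' (c (u x) j) i]
  have hdcont : ∀ i j, ∀ x ∈ {x : Fin q → (Fin n → ℝ) × ℝ | Function.Injective x}, ψ x ≠ 0 →
      ContinuousWithinAt (fun x => d i x j) {x | Function.Injective x} x := by
    intro i j x hx hψx
    have h1 : ContinuousWithinAt (fun x => c (u x)) {x | Function.Injective x} x := by
      refine (hc_cont (u x) (hψU x hx hψx)).tendsto.comp (tendsto_nhdsWithin_iff.2 ⟨?_, ?_⟩)
      · exact hucont.continuousAt.continuousWithinAt
      · filter_upwards [(hψcont x hx).eventually_ne hψx, self_mem_nhdsWithin] with z hz hzi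
        exact hψU z hzi hz
    have h2 : ∀ l, ContinuousWithinAt (fun x => h (c (u x) l) i) {x | Function.Injective x} x :=
      fun l => ContinuousAt.comp_continuousWithinAt (g := fun w : Fin q → X => h (w l) i)
        ((continuous_apply i).comp (hh.comp (continuous_apply l))).continuousAt h1
    refine (h2 j).sub (ContinuousWithinAt.div_const ?_ _)
    exact tendsto_finsetSum _ fun l _ => h2 l
  -- The first `n - k` coordinates test the measures, the remaining `k` the values of `h ∘ c`.
  let f : (Fin q → (Fin n → ℝ) × ℝ) → Fin q → Fin n → ℝ := fun x j i =>
    if hi : (i : ℕ) < n - k then V ⟨i, hi⟩ x j - 1 / q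
    else ψ x * d ⟨i - (n - k), by omega⟩ x j
  obtain ⟨C, hC⟩ := exists_nat_ge (max 1 (2 * B))
  have hfcont : ContinuousOn f {x | Function.Injective x} := by
    refine continuousOn_pi.2 fun j => continuousOn_pi.2 fun i => ?_
    by_cases hi : (i : ℕ) < n - k
    · simp only [f, hi, dif_pos]
      exact (hVcont _ j).sub continuousOn_const
    · simp only [f, hi, dif_neg, not_false_eq_true]
      exact Equipartition.continuousOn_mul_of_bounded hψcont (2 * B) (fun z => hd _ z j)
        (hdcont _ j)
  have hfequi : ∀ x, Function.Injective x → ∀ σ : Equiv.Perm (Fin q), f (x ∘ σ) = f x ∘ σ := by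
    intro x hx σ
    funext j i
    by_cases hi : (i : ℕ) < n - k
    · simp only [f, hi, dif_pos, hVcomp, Function.comp_apply]
    · simp only [f, hi, dif_neg, not_false_eq_true, hψcomp, Function.comp_apply]
      by_cases hψx : ψ x = 0
      · rw [hψx, zero_mul, zero_mul]
      · congr 1
        simp only [d, hucomp, hc_equiv _ (hψU x hx hψx), Function.comp_apply]
        congr 2
        exact Equiv.sum_comp σ fun l => h (c (u x) l) _
  have hfsum : ∀ x, Function.Injective x → ∀ i, ∑ j, f x j i = 0 := by
    intro x hx i
    by_cases hi : (i : ℕ) < n - k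
    · simp only [f, hi, dif_pos]
      rw [Finset.sum_sub_distrib, hVsum _ x hx]
      simp [hqR.ne']
    · simp only [f, hi, dif_neg, not_false_eq_true, d]
      rw [← Finset.mul_sum, Finset.sum_sub_distrib]
      simp [mul_div_cancel₀ _ hqR.ne']
  have hfb : ∀ x, Function.Injective x → ∀ j i, |f x j i| ≤ C := by
    intro x hx j i
    by_cases hi : (i : ℕ) < n - k
    · simp only [f, hi, dif_pos]
      have h1 : (1 : ℝ) ≤ C := (le_max_left _ _).trans hC
      have h2 : (1 : ℝ) / q ≤ 1 := by
        rw [div_le_one hqR]; exact_mod_cast hq0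
      have h3 : (0 : ℝ) ≤ 1 / q := by positivity
      rw [abs_le]
      constructor <;> linarith [hV0 ⟨i, hi⟩ x j, hV1 ⟨i, hi⟩ x j]
    · simp only [f, hi, dif_neg, not_false_eq_true]
      rw [abs_mul, abs_of_nonneg (hψ0 x)]
      calc _ ≤ 1 * |d _ x j| := mul_le_mul_of_nonneg_right (hψ1 x) (abs_nonneg _)
        _ ≤ C := by rw [one_mul]; exact (hd _ _ _).trans ((le_max_right _ _).trans hC)
  obtain ⟨x, hx, hfx⟩ := Equipartition.exists_zero (n := n) hp' hpq.symm f hfcont hfequi hfsum C hfb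
  have hVx : ∀ t j, V t x j = 1 / q := by
    intro t j
    have h1 : f x j ⟨t, by omega⟩ = 0 := congrFun (congrFun hfx j) _
    simp only [f] at h1
    rw [dif_pos t.2] at h1
    exact sub_eq_zero.1 h1
  have hψx : ψ x ≠ 0 := by
    simp only [ψ, hVx]
    exact Finset.prod_ne_zero_iff.2 fun j _ => by positivity
  have hdx : ∀ i j, d i x j = 0 := by
    intro i j
    have h1 : f x j ⟨n - k + i, by omega⟩ = 0 := congrFun (congrFun hfx j) _
    simp only [f] at h1
    rw [dif_neg (by simp)] at h1
    have h2 := (mul_eq_zero.1 h1).resolve_left hψx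
    simpa using h2
  refine ⟨u x, huL x, huinj x hx, fun i j => ?_, fun j l => ?_⟩
  · have h1 := hVx i j
    rw [← ENNReal.toReal_eq_toReal_iff' (measure_ne_top _ _)
      (ENNReal.div_ne_top ENNReal.one_ne_top (by exact_mod_cast hq0.ne'))]
    rw [ENNReal.toReal_div, ENNReal.toReal_one, ENNReal.toReal_natCast]
    exact h1
  · funext i
    rw [sub_eq_zero.1 (hdx i j), sub_eq_zero.1 (hdx i l)]
end
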